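/- arXiv:1611.01741 — 7 statements merged into one kernel-verified Lean document; each statement's English description precedes it below -/
import Mathlib

section
/- Let G = G(T), where T = T((d,2); 0) is the tree of diameter 4 with two pivots of degree d+1 and no hairs (d a positive integer). For any integer k > 2 there exists a finite-index subgroup H of G such that H is isomorphic to G(S), where S = T((d,k); 0). -/
/-!
Write `k = m + 2` and let `p₀, p₁` be the two pivots of `T`. The subgroup `H` is the kernel of the
map to `ℤ/(m+1)` that sends `p₀` to `1` and every other canonical generator to `0`. Geometrically,
passing to the corresponding cyclic cover glues `m + 1` copies of `T` along the star of `p₀`, and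
this produces the tree with the pivot `p₀ ^ (m+1)` and the `m + 1` pivots `p₀⁻ⁱ p₁ p₀ⁱ`, `0 ≤ i ≤ m`.

Algebraically, `H` appears as the range of the homomorphism `phi` from `A = G(S)` to `G = G(T)` given
by these formulas. Injectivity and finite index both come from an action `rho` of `G` on
`A × Fin (m+1)` which is the candidate for the left translation action of `G` on itself, with
`(a, i)` standing for the element `p₀ⁱ φ(a)`:

* `rho_phi`: `φ(x)` sends `(a, 0)` to `(x a, 0)`, so `φ` is injective;
* `toG_rho`: the map `(a, i) ↦ p₀ⁱ φ(a)` is `G`-equivariant, so it is onto (its image contains `1`),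
  and the `m + 1` cosets `p₀ⁱ φ(A)` cover `G`.
-/

/-- The defining relators of the right-angled Artin group of a simplicial graph:
one commutator for each edge. -/
def raagRels {V : Type} (G : SimpleGraph V) : Set (FreeGroup V) :=
  {r | ∃ u v : V, G.Adj u v ∧
    r = FreeGroup.of u * FreeGroup.of v * (FreeGroup.of u)⁻¹ * (FreeGroup.of v)⁻¹}

/-- The right-angled Artin group of a simplicial graph. -/
abbrev RAAG {V : Type} (G : SimpleGraph V) : Type := PresentedGroup (raagRels G)

/-- Two groups are (abstractly) commensurable if they have isomorphic
subgroups of finite index. -/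
def GroupsCommensurable (G H : Type*) [Group G] [Group H] : Prop :=
  ∃ (A : Subgroup G) (B : Subgroup H),
    A.FiniteIndex ∧ B.FiniteIndex ∧ Nonempty (↥A ≃* ↥B)

/-- The vertices of the tree `T((d₁,k₁),…,(d_l,k_l); q)` of diameter 4:
a center, `q` hairs, `k i` pivots of degree `d i + 1` for each `i`,
and `d i` leaves attached to each such pivot. -/
inductive T4V (l : ℕ) (d k : Fin l → ℕ) (q : ℕ) : Type where
  | center : T4V l d k q
  | hair : Fin q → T4V l d k q
  | pivot : (i : Fin l) → Fin (k i) → T4V l d k q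
  | leaf : (i : Fin l) → Fin (k i) → Fin (d i) → T4V l d k q

/-- Adjacency in the tree `T((d₁,k₁),…,(d_l,k_l); q)`: the center is joined to every
hair and every pivot, and each pivot is joined to its own leaves. -/
def t4Adj {l : ℕ} {d k : Fin l → ℕ} {q : ℕ} :
    T4V l d k q → T4V l d k q → Prop
  | .center, .hair _ => True
  | .center, .pivot _ _ => True
  | .pivot i j, .leaf i' j' _ => (⟨i, j⟩ : Σ i, Fin (k i)) = ⟨i', j'⟩
  | _, _ => False

/-- The tree `T((d₁,k₁),…,(d_l,k_l); q)` of diameter 4, as a simple graph. -/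
def t4Graph (l : ℕ) (d k : Fin l → ℕ) (q : ℕ) : SimpleGraph (T4V l d k q) :=
  SimpleGraph.fromRel t4Adj

namespace TwoPivots

/-! ### Maps out of the group of a tree with uniform pivots -/

/-- The right-angled Artin group of the tree `T((d,k); 0)`. -/
abbrev Grp (d k : ℕ) : Type := RAAG (t4Graph 1 (fun _ => d) (fun _ => k) 0)

/-- The canonical generator at the center. -/
def gC (d k : ℕ) : Grp d k := PresentedGroup.of .center

/-- The canonical generator at the `j`-th pivot. -/
def gP (d : ℕ) {k : ℕ} (j : Fin k) : Grp d k := PresentedGroup.of (.pivot 0 j)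

/-- The canonical generator at the `e`-th leaf of the `j`-th pivot. -/
def gL {d k : ℕ} (j : Fin k) (e : Fin d) : Grp d k := PresentedGroup.of (.leaf 0 j e)

theorem raag_commute {V : Type} {Γ : SimpleGraph V} {u v : V} (h : Γ.Adj u v) :
    Commute (PresentedGroup.of u : RAAG Γ) (PresentedGroup.of v) := by
  have h1 : (PresentedGroup.mk (raagRels Γ)) (FreeGroup.of u * FreeGroup.of v *
      (FreeGroup.of u)⁻¹ * (FreeGroup.of v)⁻¹) = 1 :=
    PresentedGroup.one_of_mem ⟨u, v, h, rfl⟩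
  simp only [map_mul, map_inv] at h1
  rw [mul_inv_eq_one, mul_inv_eq_iff_eq_mul] at h1
  exact h1

theorem commute_CP {d k : ℕ} (j : Fin k) : Commute (gC d k) (gP d j) :=
  raag_commute (by simp [t4Graph, t4Adj])

theorem commute_PL {d k : ℕ} (j : Fin k) (e : Fin d) : Commute (gP d j) (gL j e) :=
  raag_commute (by simp [t4Graph, t4Adj])

section Hom

variable {d k : ℕ} {M : Type*} [Group M] (c : M) (p : Fin k → M) (l : Fin k → Fin d → M)

/-- The assignment of values in `M` to the vertices of `T((d,k); 0)`: `c` at the center, `p j` at the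
pivots, `l j e` at the leaves. There are no hairs. -/
def vertexMap : T4V 1 (fun _ => d) (fun _ => k) 0 → M
  | .center => c
  | .hair _ => 1
  | .pivot _ j => p j
  | .leaf _ j e => l j e

theorem vertexMap_commute (h1 : ∀ j, Commute c (p j)) (h2 : ∀ j e, Commute (p j) (l j e))
    {u v : T4V 1 (fun _ => d) (fun _ => k) 0} (h : t4Adj u v) :
    Commute (vertexMap c p l u) (vertexMap c p l v) := by
  cases u <;> cases v <;> simp only [t4Adj] at h
  case center.hair i => exact i.elim0
  case center.pivot i j => exact h1 j
  case pivot.leaf i j i' j' e =>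
    cases h
    exact h2 j e

variable (h1 : ∀ j, Commute c (p j)) (h2 : ∀ j e, Commute (p j) (l j e))

/-- The homomorphism out of `G(T((d,k); 0))` with prescribed values on the canonical generators. -/
def hom : Grp d k →* M :=
  PresentedGroup.toGroup (f := vertexMap c p l) (by
    rintro r ⟨u, v, huv, rfl⟩
    have h : Commute (vertexMap c p l u) (vertexMap c p l v) := by
      rcases huv with ⟨-, h | h⟩
      · exact vertexMap_commute c p l h1 h2 h
      · exact (vertexMap_commute c p l h1 h2 h).symm
    simp [h.eq])

@[simp] theorem hom_C : hom c p l h1 h2 (gC d k) = c := PresentedGroup.toGroup.of _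
@[simp] theorem hom_P (j : Fin k) : hom c p l h1 h2 (gP d j) = p j := PresentedGroup.toGroup.of _
@[simp] theorem hom_L (j : Fin k) (e : Fin d) : hom c p l h1 h2 (gL j e) = l j e :=
  PresentedGroup.toGroup.of _

end Hom

theorem mem_of_generators {d k : ℕ} (K : Subgroup (Grp d k)) (hC : gC d k ∈ K)
    (hP : ∀ j, gP d j ∈ K) (hL : ∀ j e, gL j e ∈ K) (x : Grp d k) : x ∈ K := by
  have : (⊤ : Subgroup (Grp d k)) ≤ K := by
    rw [← PresentedGroup.closure_range_of, Subgroup.closure_le]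
    rintro _ ⟨v, rfl⟩
    cases v with
    | center => exact hC
    | hair i => exact i.elim0
    | pivot i j => rw [Subsingleton.elim i 0]; exact hP j
    | leaf i j e => obtain rfl := Subsingleton.elim i 0; exact hL j e
  exact this trivial

/-! ### Permutations of `A × Fin (m+1)` -/

section Perms

variable {A : Type*} [Group A] {m : ℕ}

/-- Left translation by `s i` on the `i`-th copy of `A`. -/
def trans : (Fin (m + 1) → A) →* Equiv.Perm (A × Fin (m + 1)) where
  toFun s :=
    { toFun := fun x => (s x.2 * x.1, x.2)
      invFun := fun x => ((s x.2)⁻¹ * x.1, x.2)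
      left_inv := fun x => by simp
      right_inv := fun x => by simp }
  map_one' := by ext x <;> simp
  map_mul' s t := by ext x <;> simp [mul_assoc]

@[simp] theorem trans_apply (s : Fin (m + 1) → A) (x : A × Fin (m + 1)) :
    trans s x = (s x.2 * x.1, x.2) := rfl

/-- The cyclic shift of the copies of `A`, twisted by left translation by `b` when passing from the
last copy back to the first one; its `(m+1)`-st power is left translation by `b`. -/
def rot (b : A) : Equiv.Perm (A × Fin (m + 1)) :=
  (Equiv.prodCongr (Equiv.refl A) (finRotate (m + 1))) *
    trans (fun i => if i = Fin.last m then b else 1)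

theorem rot_lt (b a : A) {j : ℕ} (h : j < m) :
    rot b (a, (⟨j, by omega⟩ : Fin (m + 1))) = (a, ⟨j + 1, by omega⟩) := by
  have : (⟨j, by omega⟩ : Fin (m + 1)) ≠ Fin.last m := by simp [Fin.ext_iff]; omega
  simp [rot, this, finRotate_of_lt h]

theorem rot_last (b a : A) :
    rot b (a, (⟨m, by omega⟩ : Fin (m + 1))) = (b * a, 0) := by
  have : (⟨m, by omega⟩ : Fin (m + 1)) = Fin.last m := rfl
  simp [rot, this]

theorem rot_pow (b a : A) (j : ℕ) (h : j < m + 1) :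
    (rot b ^ j) (a, (0 : Fin (m + 1))) = (a, ⟨j, h⟩) := by
  induction j with
  | zero => rfl
  | succ j ih => rw [pow_succ', Equiv.Perm.mul_apply, ih (by omega), rot_lt b a (by omega)]

theorem rot_commute {a b : A} (h : Commute a b) :
    Commute (trans fun _ : Fin (m + 1) => a) (rot b) := by
  ext ⟨x, i⟩
  · by_cases hi : i = Fin.last m
    · simp [rot, hi, ← mul_assoc, h.eq]
    · simp [rot, hi]
  · simp [rot]

theorem trans_commute {s t : Fin (m + 1) → A} (h : ∀ i, Commute (s i) (t i)) :
    Commute (trans s) (trans t) :=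
  Commute.map (funext h : s * t = t * s) trans

end Perms

/-! ### The embedding and the action -/

section Main

variable (d m : ℕ)

/-- The embedding of `G(S)` in `G(T)`: one pivot goes to `p₀ ^ (m+1)` and keeps its leaves, the other
ones, with their leaves, go to the conjugates by powers of `p₀` of `p₁` and its leaves. -/
def phi : Grp d (m + 2) →* Grp d 2 :=
  hom (gC d 2)
    (Fin.cases (gP d 0 ^ (m + 1)) fun i : Fin (m + 1) =>
      (gP d 0 ^ (i : ℕ))⁻¹ * gP d 1 * gP d 0 ^ (i : ℕ))
    (Fin.cases (gL 0) fun (i : Fin (m + 1)) e =>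
      (gP d 0 ^ (i : ℕ))⁻¹ * gL 1 e * gP d 0 ^ (i : ℕ))
    (by
      refine Fin.cases ?_ fun i => ?_
      · exact (commute_CP 0).pow_right _
      · have := (commute_CP (d := d) (0 : Fin 2)).pow_right i
        exact (this.inv_right.mul_right (commute_CP 1)).mul_right this)
    (by
      refine Fin.cases (fun e => ?_) fun i e => ?_
      · exact (commute_PL 0 e).pow_left _
      · have := (commute_PL (1 : Fin 2) e).conj (gP d 0 ^ (i : ℕ))⁻¹
        simpa using this)

/-- The action of `G(T)` on `G(S) × Fin (m+1)` modelled on left translation, where `(a, i)` stands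
for `p₀ ^ i * phi a`. -/
def rho : Grp d 2 →* Equiv.Perm (Grp d (m + 2) × Fin (m + 1)) :=
  hom (trans fun _ => gC d (m + 2))
    ![rot (gP d 0), trans fun i => gP d i.succ]
    ![fun e => trans fun _ => gL 0 e, fun e => trans fun i => gL i.succ e]
    (by
      intro j
      fin_cases j
      · exact rot_commute (commute_CP 0)
      · exact trans_commute fun i => commute_CP i.succ)
    (by
      intro j e
      fin_cases j
      · exact (rot_commute (commute_PL 0 e).symm).symm
      · exact trans_commute fun i => commute_PL i.succ e)

/-- The element `p₀ ^ i * phi a` of `G(T)` that the point `(a, i)` stands for. -/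
def toG (x : Grp d (m + 2) × Fin (m + 1)) : Grp d 2 := gP d 0 ^ (x.2 : ℕ) * phi d m x.1

theorem rho_conj (g : Grp d 2) (s : Fin (m + 1) → Grp d (m + 2)) (hg : rho d m g = trans s)
    (i : Fin (m + 1)) (a : Grp d (m + 2)) :
    rho d m ((gP d 0 ^ (i : ℕ))⁻¹ * g * gP d 0 ^ (i : ℕ)) (a, 0) = (s i * a, 0) := by
  have h0 : rho d m (gP d 0) = rot (gP d 0) := by simp [rho]
  simp only [map_mul, map_inv, map_pow, h0, hg, Equiv.Perm.mul_apply]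
  rw [rot_pow _ _ _ i.2, Equiv.Perm.inv_eq_iff_eq, rot_pow _ _ _ i.2]
  rfl

theorem rho_phi (x : Grp d (m + 2)) (a : Grp d (m + 2)) :
    rho d m (phi d m x) (a, 0) = (x * a, 0) := by
  let K : Subgroup (Grp d (m + 2)) :=
    { carrier := {x | ∀ a, rho d m (phi d m x) (a, 0) = (x * a, 0)}
      one_mem' := fun a => by simp
      mul_mem' := fun {x y} hx hy a => by
        simp only [Set.mem_ofPred_eq] at hx hy
        simp [hx, hy, mul_assoc]
      inv_mem' := fun {x} hx a => by
        simp only [Set.mem_ofPred_eq] at hx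
        rw [map_inv, map_inv, Equiv.Perm.inv_eq_iff_eq, hx, mul_inv_cancel_left] }
  refine mem_of_generators K ?_ ?_ ?_ x a
  · intro a
    simp [rho, phi]
  · refine Fin.cases (fun a => ?_) fun i a => ?_
    · have h0 : rho d m (gP d 0) = rot (gP d 0) := by simp [rho]
      simp only [phi, hom_P, Fin.cases_zero, map_pow, h0]
      rw [pow_succ', Equiv.Perm.mul_apply, rot_pow _ _ m (by omega), rot_last]
    · simp only [phi, hom_P, Fin.cases_succ]
      exact rho_conj d m _ (fun i => gP d i.succ) (by simp [rho]) i a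
  · refine Fin.cases (fun e a => ?_) fun i e a => ?_
    · simp [rho, phi]
    · simp only [phi, hom_L, Fin.cases_succ]
      exact rho_conj d m _ (fun i => gL i.succ e) (by simp [rho]) i a

theorem phi_injective : Function.Injective (phi d m) := by
  rw [injective_iff_map_eq_one]
  intro x hx
  have := rho_phi d m x 1
  rw [hx] at this
  simpa using this.symm

theorem toG_rho (g : Grp d 2) (x : Grp d (m + 2) × Fin (m + 1)) :
    toG d m (rho d m g x) = g * toG d m x := by
  let K : Subgroup (Grp d 2) :=
    { carrier := {g | ∀ x, toG d m (rho d m g x) = g * toG d m x}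
      one_mem' := fun x => by simp
      mul_mem' := fun {g h} hg hh x => by
        simp only [Set.mem_ofPred_eq] at hg hh
        simp [hg, hh, mul_assoc]
      inv_mem' := fun {g} hg x => by
        simp only [Set.mem_ofPred_eq] at hg
        rw [eq_inv_mul_iff_mul_eq, ← hg]
        simp }
  refine mem_of_generators K ?_ ?_ ?_ g x
  · rintro ⟨a, i⟩
    simp [rho, toG, phi, ← mul_assoc, ((commute_CP (d := d) (0 : Fin 2)).pow_right i).eq]
  · intro j
    fin_cases j
    · rintro ⟨a, i, hi⟩
      simp only [rho, hom_P, Fin.zero_eta, Matrix.cons_val_zero]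
      rcases Nat.lt_succ_iff_lt_or_eq.mp hi with h | rfl
      · rw [rot_lt _ _ h]
        simp [toG, pow_succ', mul_assoc]
      · rw [rot_last]
        simp [toG, phi, pow_succ', mul_assoc]
    · rintro ⟨a, i⟩
      simp [rho, toG, phi, mul_assoc]
  · intro j e
    fin_cases j
    · rintro ⟨a, i⟩
      simp [rho, toG, phi, ← mul_assoc, ((commute_PL (0 : Fin 2) e).pow_left i).eq]
    · rintro ⟨a, i⟩
      simp [rho, toG, phi, mul_assoc]

theorem finiteIndex_range : (phi d m).range.FiniteIndex := by
  have hs : Function.Surjective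
      (fun i : Fin (m + 1) => ((gP d 0 ^ (i : ℕ) : Grp d 2) : Grp d 2 ⧸ (phi d m).range)) := by
    intro q
    induction q using QuotientGroup.induction_on with
    | H g =>
      -- `g` is the image of the point `g • (1, 0)`
      have h := toG_rho d m g (1, 0)
      refine ⟨(rho d m g (1, 0)).2, QuotientGroup.eq.mpr ⟨(rho d m g (1, 0)).1, ?_⟩⟩
      rw [eq_inv_mul_iff_mul_eq]
      simpa [toG] using h
  have := Finite.of_surjective _ hs
  exact Subgroup.finiteIndex_of_finite_quotient

end Main

end TwoPivots

theorem stmt8 (d : ℕ) (hd : 0 < d) (k : ℕ) (hk : 2 < k) :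
    ∃ H : Subgroup (RAAG (t4Graph 1 (fun _ => d) (fun _ => 2) 0)),
      H.FiniteIndex ∧
      Nonempty (↥H ≃* RAAG (t4Graph 1 (fun _ => d) (fun _ => k) 0)) := by
  obtain ⟨m, rfl⟩ : ∃ m, k = m + 2 := ⟨k - 2, by omega⟩
  exact ⟨_, TwoPivots.finiteIndex_range d m,
    ⟨(MonoidHom.ofInjective (TwoPivots.phi_injective d m)).symm⟩⟩
end

section
/- Let T = T((v_1,k_1), …, (v_l,k_l); p) and S = T((v_1,k_1), …, (v_l,k_l); q) be two trees of diameter 4 differing only in the number of hairs, and set K = k_1 + … + k_l and r = (q+K−1)(p+K−1) + 1 − K. Then the right-angled Artin group G(R), where R = T((v_1,k_1), …, (v_l,k_l); r), is isomorphic to a subgroup of index q+K−1 in G(T) and to a subgroup of index p+K−1 in G(S). In particular, G(S) and G(T) are commensurable. -/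
/-! ### Homomorphisms out of the group of a diameter 4 tree -/

/-- The index set of the pivots. -/
abbrev Piv {l : ℕ} (k : Fin l → ℕ) : Type := Σ i, Fin (k i)

section Lift

variable {l : ℕ} {d k : Fin l → ℕ} {q : ℕ}

/-- The canonical generator at the center. -/
def cGen (d k : Fin l → ℕ) (q : ℕ) : RAAG (t4Graph l d k q) := PresentedGroup.of .center

/-- The canonical generator at a hair. -/
def hGen (d k : Fin l → ℕ) (q : ℕ) (a : Fin q) : RAAG (t4Graph l d k q) :=
  PresentedGroup.of (.hair a)

/-- The canonical generator at a pivot. -/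
def pGen (d k : Fin l → ℕ) (q : ℕ) (j : Piv k) : RAAG (t4Graph l d k q) :=
  PresentedGroup.of (.pivot j.1 j.2)

/-- The canonical generator at a leaf of the pivot `j`. -/
def lGen (d k : Fin l → ℕ) (q : ℕ) (j : Piv k) (y : Fin (d j.1)) : RAAG (t4Graph l d k q) :=
  PresentedGroup.of (.leaf j.1 j.2 y)

theorem commute_of_adj {V : Type} {G : SimpleGraph V} {u w : V} (h : G.Adj u w) :
    Commute (PresentedGroup.of u : RAAG G) (PresentedGroup.of w) := by
  have h1 : (PresentedGroup.mk (raagRels G)) (FreeGroup.of u * FreeGroup.of w *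
      (FreeGroup.of u)⁻¹ * (FreeGroup.of w)⁻¹) = 1 :=
    PresentedGroup.one_of_mem ⟨u, w, h, rfl⟩
  simp only [map_mul, map_inv] at h1
  exact mul_inv_eq_iff_eq_mul.mp (mul_inv_eq_one.mp h1)

theorem commute_c_h (a : Fin q) : Commute (cGen d k q) (hGen d k q a) :=
  commute_of_adj (by simp [t4Graph, SimpleGraph.fromRel_adj, t4Adj])

theorem commute_c_p (j : Piv k) : Commute (cGen d k q) (pGen d k q j) :=
  commute_of_adj (by simp [t4Graph, SimpleGraph.fromRel_adj, t4Adj])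

theorem commute_p_l (j : Piv k) (y : Fin (d j.1)) :
    Commute (pGen d k q j) (lGen d k q j y) :=
  commute_of_adj (by simp [t4Graph, SimpleGraph.fromRel_adj, t4Adj])

variable {M : Type*} [Group M]

/-- The images of the vertices under an assignment given separately on center, hairs, pivots and
leaves. -/
def genMap (c : M) (h : Fin q → M) (P : Piv k → M) (L : (j : Piv k) → Fin (d j.1) → M) :
    T4V l d k q → M
  | .center => c
  | .hair a => h a
  | .pivot i j => P ⟨i, j⟩
  | .leaf i j y => L ⟨i, j⟩ y

theorem genMap_commute (c : M) (h : Fin q → M) (P : Piv k → M)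
    (L : (j : Piv k) → Fin (d j.1) → M)
    (hch : ∀ a, Commute c (h a)) (hcp : ∀ j, Commute c (P j))
    (hpl : ∀ j y, Commute (P j) (L j y)) {u w : T4V l d k q} (huw : t4Adj u w) :
    Commute (genMap c h P L u) (genMap c h P L w) := by
  cases u with
  | center =>
    cases w with
    | center => exact huw.elim
    | hair a => exact hch a
    | pivot i j => exact hcp ⟨i, j⟩
    | leaf i j y => exact huw.elim
  | hair a => exact huw.elim
  | leaf i j y => exact huw.elim
  | pivot i j =>
    cases w with
    | center => exact huw.elim
    | hair a => exact huw.elim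
    | pivot i j => exact huw.elim
    | leaf i' j' y =>
      have h1 : (⟨i, j⟩ : Piv k) = ⟨i', j'⟩ := huw
      simp only [genMap, h1]
      exact hpl ⟨i', j'⟩ y

/-- The homomorphism given by images of the generators that satisfy the commutation relations. -/
def t4Lift (c : M) (h : Fin q → M) (P : Piv k → M)
    (L : (j : Piv k) → Fin (d j.1) → M)
    (hch : ∀ a, Commute c (h a)) (hcp : ∀ j, Commute c (P j))
    (hpl : ∀ j y, Commute (P j) (L j y)) : RAAG (t4Graph l d k q) →* M :=
  PresentedGroup.toGroup (f := genMap c h P L) (by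
    rintro r ⟨u, w, huw, rfl⟩
    have hc : Commute (genMap c h P L u) (genMap c h P L w) := by
      rcases (SimpleGraph.fromRel_adj _ _ _).mp huw with ⟨-, h1 | h1⟩
      · exact genMap_commute c h P L hch hcp hpl h1
      · exact (genMap_commute c h P L hch hcp hpl h1).symm
    simp [hc.eq])

section
variable (c : M) (h : Fin q → M) (P : Piv k → M) (L : (j : Piv k) → Fin (d j.1) → M)
    (hch : ∀ a, Commute c (h a)) (hcp : ∀ j, Commute c (P j))
    (hpl : ∀ j y, Commute (P j) (L j y))

@[simp] theorem t4Lift_c : t4Lift c h P L hch hcp hpl (cGen d k q) = c :=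
  PresentedGroup.toGroup.of _

@[simp] theorem t4Lift_h (a : Fin q) : t4Lift c h P L hch hcp hpl (hGen d k q a) = h a :=
  PresentedGroup.toGroup.of _

@[simp] theorem t4Lift_p (j : Piv k) : t4Lift c h P L hch hcp hpl (pGen d k q j) = P j :=
  PresentedGroup.toGroup.of _

@[simp] theorem t4Lift_l (j : Piv k) (y : Fin (d j.1)) :
    t4Lift c h P L hch hcp hpl (lGen d k q j y) = L j y :=
  PresentedGroup.toGroup.of _

end

/-- A subgroup containing all canonical generators is everything. -/
theorem t4_mem (S : Subgroup (RAAG (t4Graph l d k q)))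
    (hc : cGen d k q ∈ S) (hh : ∀ a, hGen d k q a ∈ S) (hp : ∀ j, pGen d k q j ∈ S)
    (hl : ∀ j y, lGen d k q j y ∈ S) (g : RAAG (t4Graph l d k q)) : g ∈ S := by
  have h1 : Subgroup.closure (Set.range (PresentedGroup.of (rels := raagRels (t4Graph l d k q))))
      ≤ S := by
    rw [Subgroup.closure_le]
    rintro _ ⟨w, rfl⟩
    cases w with
    | center => exact hc
    | hair a => exact hh a
    | pivot i j => exact hp ⟨i, j⟩
    | leaf i j y => exact hl ⟨i, j⟩ y
  rw [PresentedGroup.closure_range_of] at h1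
  exact h1 (Subgroup.mem_top g)

end Lift

/-! ### Permutations of `ℤ/n × N` commuting with right multiplication -/

section Perms

theorem perm_apply_inv {α : Type*} (f : Equiv.Perm α) (x : α) : f (f⁻¹ x) = x :=
  f.apply_symm_apply x

variable {n : ℕ} {N : Type} [Group N]

/-- Left multiplication by `f i` on the `i`-th copy of `N`. -/
def diag : (ZMod n → N) →* Equiv.Perm (ZMod n × N) where
  toFun f :=
    { toFun := fun z => (z.1, f z.1 * z.2)
      invFun := fun z => (z.1, (f z.1)⁻¹ * z.2)
      left_inv := fun z => by simp
      right_inv := fun z => by simp }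
  map_one' := by ext z <;> simp
  map_mul' f g := by ext z <;> simp [mul_assoc]

@[simp] theorem diag_apply (f : ZMod n → N) (z : ZMod n × N) :
    diag f z = (z.1, f z.1 * z.2) := rfl

theorem diag_commute {f g : ZMod n → N} (h : ∀ i, Commute (f i) (g i)) :
    Commute (diag f) (diag g) := by
  have h1 : Commute f g := funext h
  exact h1.map diag

/-- The cyclic shift of the copies of `N`, twisted by `x` when passing from the last copy to the
copy at `0`. Its `n`-th power is left multiplication by `x` on each copy. -/
def shift (x : N) : Equiv.Perm (ZMod n × N) where
  toFun z := (z.1 + 1, if z.1 + 1 = 0 then x * z.2 else z.2)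
  invFun z := (z.1 - 1, if z.1 = 0 then x⁻¹ * z.2 else z.2)
  left_inv z := by
    by_cases h : z.1 + 1 = 0 <;> refine Prod.ext (add_sub_cancel_right _ _) ?_ <;> simp [h]
  right_inv z := by by_cases h : z.1 = 0 <;> ext <;> simp [h]

theorem shift_apply (x : N) (z : ZMod n × N) :
    shift x z = (z.1 + 1, if z.1 + 1 = 0 then x * z.2 else z.2) := rfl

theorem shift_commute_diag (x y : N) (h : Commute x y) :
    Commute (shift x : Equiv.Perm (ZMod n × N)) (diag fun _ => y) := by
  ext z
  · simp [shift_apply]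
  · by_cases h0 : z.1 + 1 = 0
    · simp [shift_apply, h0, ← mul_assoc, h.eq]
    · simp [shift_apply, h0]

theorem shift_pow_lt (x g : N) (m : ℕ) (hm : m < n) :
    ((shift x : Equiv.Perm (ZMod n × N)) ^ m) (0, g) = ((m : ZMod n), g) := by
  induction m with
  | zero => simp
  | succ m ih =>
    have h0 : ((m : ZMod n) + 1) ≠ 0 := by
      rw [← Nat.cast_succ, Ne, ZMod.natCast_eq_zero_iff]
      exact Nat.not_dvd_of_pos_of_lt (Nat.succ_pos m) hm
    rw [pow_succ', Equiv.Perm.mul_apply, ih (by omega), shift_apply]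
    simp [h0]

theorem shift_pow_n [NeZero n] (x g : N) :
    ((shift x : Equiv.Perm (ZMod n × N)) ^ n) (0, g) = (0, x * g) := by
  obtain ⟨m, hm⟩ : ∃ m, n = m + 1 := ⟨n - 1, by have := NeZero.pos n; omega⟩
  have h0 : ((m : ZMod n) + 1) = 0 := by
    rw [← Nat.cast_succ, ZMod.natCast_eq_zero_iff, Nat.succ_eq_add_one, ← hm]
  have h1 : ((shift x : Equiv.Perm (ZMod n × N)) ^ (m + 1)) (0, g) = (0, x * g) := by
    rw [pow_succ', Equiv.Perm.mul_apply, shift_pow_lt x g m (by omega), shift_apply]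
    simp [h0]
  have h2 : (shift x : Equiv.Perm (ZMod n × N)) ^ n = shift x ^ (m + 1) := by
    congr 1
  rw [h2, h1]

theorem shift_pow_val [NeZero n] (x g : N) (i : ZMod n) :
    ((shift x : Equiv.Perm (ZMod n × N)) ^ i.val) (0, g) = (i, g) := by
  rw [shift_pow_lt x g _ (ZMod.val_lt i), ZMod.natCast_zmod_val]

end Perms

/-! ### The kernel of the map to `ℤ/n` -/

/-- The index set for the hairs of `R`: the pair `(i, a)` stands for the conjugate
`P₀ ^ (-i) * a * P₀ ^ i` of a hair `a`, and the pair `(i, j)` for `P_j ^ (-i) * P₀ ^ i`, where `P₀`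
is the pivot `j₀`. -/
abbrev HairIdx {l : ℕ} (k : Fin l → ℕ) (p n : ℕ) (j₀ : Piv k) : Type :=
  (ZMod n × Fin p) ⊕ ({i : ZMod n // i ≠ 0} × {j : Piv k // j ≠ j₀})

section Kernel

variable {l : ℕ} {d k : Fin l → ℕ} {p r n : ℕ} {j₀ : Piv k}

/-- The image in `G(T)` of a hair of `R`. -/
def bigHair (d : Fin l → ℕ) : HairIdx k p n j₀ → RAAG (t4Graph l d k p)
  | .inl (i, a) => (pGen d k p j₀ ^ i.val)⁻¹ * hGen d k p a * pGen d k p j₀ ^ i.val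
  | .inr (i, j) => (pGen d k p j.1 ^ i.1.val)⁻¹ * pGen d k p j₀ ^ i.1.val

theorem commute_c_bigHair (z : HairIdx k p n j₀) :
    Commute (cGen d k p) (bigHair d z) := by
  rcases z with ⟨i, a⟩ | ⟨i, j⟩
  · exact (((commute_c_p j₀).pow_right _).inv_right.mul_right (commute_c_h a)).mul_right
      ((commute_c_p j₀).pow_right _)
  · exact ((commute_c_p j.1).pow_right _).inv_right.mul_right ((commute_c_p j₀).pow_right _)

/-- The embedding of `G(R)` in `G(T)`. -/
def toBig (d : Fin l → ℕ) (e : Fin r ≃ HairIdx k p n j₀) :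
    RAAG (t4Graph l d k r) →* RAAG (t4Graph l d k p) :=
  t4Lift (cGen d k p) (fun a => bigHair d (e a)) (fun j => pGen d k p j ^ n) (lGen d k p)
    (fun _ => commute_c_bigHair _) (fun j => (commute_c_p j).pow_right _)
    (fun j y => (commute_p_l j y).pow_left _)

/-- The map to `ℤ/n` sending each pivot to `1` and the other canonical generators to `0`. -/
def toCyc (d k : Fin l → ℕ) (p n : ℕ) : RAAG (t4Graph l d k p) →* Multiplicative (ZMod n) :=
  t4Lift 1 (fun _ => 1) (fun _ => Multiplicative.ofAdd 1) (fun _ _ => 1)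
    (fun _ => Commute.one_left _) (fun _ => Commute.one_left _) (fun _ _ => Commute.one_right _)

theorem toCyc_p_pow (j : Piv k) (m : ℕ) :
    toCyc d k p n (pGen d k p j ^ m) = Multiplicative.ofAdd (m : ZMod n) := by
  rw [map_pow, toCyc, t4Lift_p, ← ofAdd_nsmul, nsmul_one]

theorem toCyc_toBig (e : Fin r ≃ HairIdx k p n j₀) (x : RAAG (t4Graph l d k r)) :
    toCyc d k p n (toBig d e x) = 1 := by
  refine t4_mem ((toCyc d k p n).comp (toBig d e)).ker ?_ ?_ ?_ ?_ x
  · simp [MonoidHom.mem_ker, toBig, toCyc]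
  · intro a
    rw [MonoidHom.mem_ker, MonoidHom.comp_apply, toBig, t4Lift_h]
    rcases e a with ⟨i, a⟩ | ⟨i, j⟩
    · have h : toCyc d k p n (hGen d k p a) = 1 := by rw [toCyc, t4Lift_h]
      simp only [bigHair, map_mul, map_inv, h, mul_one, inv_mul_cancel]
    · simp only [bigHair, map_mul, map_inv, toCyc_p_pow, inv_mul_cancel]
  · intro j
    rw [MonoidHom.mem_ker, MonoidHom.comp_apply, toBig, t4Lift_p, toCyc_p_pow,
      ZMod.natCast_self, ofAdd_zero]
  · intro j y
    simp [MonoidHom.mem_ker, toBig, toCyc]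

open Classical in
/-- The element of `G(R)` that `toBig` sends to `P_j ^ (-i) * P₀ ^ i`: a hair, or `1` in the
degenerate cases `i = 0` and `j = j₀`. -/
noncomputable def uElt (d : Fin l → ℕ) (e : Fin r ≃ HairIdx k p n j₀) (j : Piv k) (i : ZMod n) :
    RAAG (t4Graph l d k r) :=
  if h : i ≠ 0 ∧ j ≠ j₀ then hGen d k r (e.symm (.inr (⟨i, h.1⟩, ⟨j, h.2⟩))) else 1

theorem uElt_zero (e : Fin r ≃ HairIdx k p n j₀) (j : Piv k) : uElt d e j 0 = 1 := by
  simp [uElt]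

theorem uElt_base (e : Fin r ≃ HairIdx k p n j₀) (i : ZMod n) : uElt d e j₀ i = 1 := by
  simp [uElt]

theorem commute_c_uElt (e : Fin r ≃ HairIdx k p n j₀) (j : Piv k) (i : ZMod n) :
    Commute (cGen d k r) (uElt d e j i) := by
  unfold uElt
  split_ifs
  · exact commute_c_h _
  · exact Commute.one_right _

theorem toBig_uElt (e : Fin r ≃ HairIdx k p n j₀) (j : Piv k) (i : ZMod n) :
    toBig d e (uElt d e j i) = (pGen d k p j ^ i.val)⁻¹ * pGen d k p j₀ ^ i.val := by
  by_cases h : i ≠ 0 ∧ j ≠ j₀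
  · simp [uElt, h, toBig, bigHair]
  · rw [uElt, dif_neg h, map_one]
    rcases not_and_or.mp h with h1 | h1
    · rw [not_not.mp h1]; simp
    · rw [not_not.mp h1]; simp

/-- The action of a pivot: the twisted shift, conjugated so as to account for the transversal
consisting of powers of `P₀` rather than of `P_j`. -/
noncomputable def actP (d : Fin l → ℕ) (e : Fin r ≃ HairIdx k p n j₀) (j : Piv k) :
    Equiv.Perm (ZMod n × RAAG (t4Graph l d k r)) :=
  (diag (uElt d e j))⁻¹ * shift (pGen d k r j) * diag (uElt d e j)

/-- The action of a leaf at the pivot `j`. -/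
noncomputable def actL (d : Fin l → ℕ) (e : Fin r ≃ HairIdx k p n j₀) (j : Piv k)
    (y : Fin (d j.1)) : Equiv.Perm (ZMod n × RAAG (t4Graph l d k r)) :=
  (diag (uElt d e j))⁻¹ * diag (fun _ => lGen d k r j y) * diag (uElt d e j)

theorem actP_commute_actL (e : Fin r ≃ HairIdx k p n j₀) (j : Piv k) (y : Fin (d j.1)) :
    Commute (actP d e j) (actL d e j y) := by
  have h := (shift_commute_diag (n := n) _ _ (commute_p_l (d := d) (q := r) j y)).eq
  simp only [Commute, SemiconjBy, actP, actL, mul_assoc, mul_inv_cancel_left]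
  rw [← mul_assoc (shift _), h, mul_assoc]

theorem diag_c_commute_actP (e : Fin r ≃ HairIdx k p n j₀) (j : Piv k) :
    Commute (diag fun _ : ZMod n => cGen d k r) (actP d e j) := by
  have h1 : Commute (diag fun _ : ZMod n => cGen d k r) (diag (uElt d e j)) :=
    diag_commute fun i => commute_c_uElt e j i
  exact (h1.inv_right.mul_right (shift_commute_diag _ _ (commute_c_p j).symm).symm).mul_right h1

/-- The action of `G(T)` on `ℤ/n × G(R)` induced from left multiplication when `(i, g)` is read as
`P₀ ^ i * toBig g`. -/
noncomputable def act (d : Fin l → ℕ) (e : Fin r ≃ HairIdx k p n j₀) :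
    RAAG (t4Graph l d k p) →* Equiv.Perm (ZMod n × RAAG (t4Graph l d k r)) :=
  t4Lift (diag fun _ => cGen d k r) (fun a => diag fun i => hGen d k r (e.symm (.inl (i, a))))
    (actP d e) (actL d e)
    (fun _ => diag_commute fun _ => commute_c_h _) (diag_c_commute_actP e)
    (actP_commute_actL e)

theorem act_p_pow (e : Fin r ≃ HairIdx k p n j₀) (j : Piv k) (m : ℕ) :
    act d e (pGen d k p j ^ m) =
      (diag (uElt d e j))⁻¹ * shift (pGen d k r j) ^ m * diag (uElt d e j) := by
  have h : actP d e j = (diag (uElt d e j))⁻¹ * shift (pGen d k r j) *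
      (diag (uElt d e j))⁻¹⁻¹ := by rw [inv_inv]; rfl
  rw [map_pow, act, t4Lift_p, h, conj_pow, inv_inv]

/-- The element `P₀ ^ i * toBig g` that the pair `(i, g)` stands for. -/
def place (d : Fin l → ℕ) (e : Fin r ≃ HairIdx k p n j₀) (z : ZMod n × RAAG (t4Graph l d k r)) :
    RAAG (t4Graph l d k p) :=
  pGen d k p j₀ ^ z.1.val * toBig d e z.2

/-- Undoing the conjugation in `actP` and `actL` replaces the transversal of powers of `P₀` by that
of powers of `P_j`, to which `P_j` and its leaves are adapted. -/
theorem place_diag_inv (e : Fin r ≃ HairIdx k p n j₀) (j : Piv k)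
    (z : ZMod n × RAAG (t4Graph l d k r)) :
    place d e ((diag (uElt d e j))⁻¹ z) = pGen d k p j ^ z.1.val * toBig d e z.2 := by
  rw [← map_inv, diag_apply, place]
  simp only [Pi.inv_apply, map_mul, map_inv, toBig_uElt]
  group

variable [NeZero n]

theorem act_p_pow_val (e : Fin r ≃ HairIdx k p n j₀) (j : Piv k) (i : ZMod n)
    (g : RAAG (t4Graph l d k r)) :
    act d e (pGen d k p j ^ i.val) (0, g) = (i, (uElt d e j i)⁻¹ * g) := by
  rw [act_p_pow, Equiv.Perm.mul_apply, Equiv.Perm.mul_apply, diag_apply, uElt_zero, one_mul,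
    shift_pow_val, ← map_inv, diag_apply]
  rfl

theorem act_p_pow_val_inv (e : Fin r ≃ HairIdx k p n j₀) (j : Piv k) (i : ZMod n)
    (g : RAAG (t4Graph l d k r)) :
    act d e (pGen d k p j ^ i.val)⁻¹ (i, g) = (0, uElt d e j i * g) := by
  rw [map_inv, Equiv.Perm.inv_eq_iff_eq, act_p_pow_val, inv_mul_cancel_left]

/-- The image of `x` in `G(T)` acts on the copy of `G(R)` at `0` as left multiplication by `x`. -/
theorem act_toBig (e : Fin r ≃ HairIdx k p n j₀) (x g : RAAG (t4Graph l d k r)) :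
    act d e (toBig d e x) (0, g) = (0, x * g) := by
  let S : Subgroup (RAAG (t4Graph l d k r)) :=
    { carrier := {x | ∀ g, act d e (toBig d e x) (0, g) = (0, x * g)}
      one_mem' := fun g => by simp
      mul_mem' := fun {a b} ha hb g => by
        rw [map_mul, map_mul, Equiv.Perm.mul_apply, hb, ha, mul_assoc]
      inv_mem' := fun {a} ha g => by
        rw [map_inv, map_inv, Equiv.Perm.inv_eq_iff_eq, ha, mul_inv_cancel_left] }
  refine t4_mem S ?_ ?_ ?_ ?_ x g
  · intro g
    simp [toBig, act]
  · intro a g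
    rw [toBig, t4Lift_h]
    obtain ⟨z, rfl⟩ := e.symm.surjective a
    rw [Equiv.apply_symm_apply]
    rcases z with ⟨i, a⟩ | ⟨i, j⟩
    · simp only [bigHair, map_mul, Equiv.Perm.mul_apply]
      rw [act_p_pow_val, uElt_base]
      have h2 : act d e (hGen d k p a) (i, (1 : RAAG (t4Graph l d k r))⁻¹ * g)
          = (i, hGen d k r (e.symm (.inl (i, a))) * g) := by
        simp [act]
      rw [h2, act_p_pow_val_inv, uElt_base, one_mul]
    · simp only [bigHair, map_mul, Equiv.Perm.mul_apply]
      rw [act_p_pow_val, uElt_base, act_p_pow_val_inv]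
      simp [uElt, i.2, j.2]
  · intro j g
    rw [toBig, t4Lift_p, act_p_pow, Equiv.Perm.mul_apply, Equiv.Perm.mul_apply, diag_apply,
      uElt_zero, one_mul, shift_pow_n, ← map_inv, diag_apply]
    simp [uElt_zero]
  · intro j y g
    rw [toBig, t4Lift_l, act, t4Lift_l, actL, ← map_inv, Equiv.Perm.mul_apply,
      Equiv.Perm.mul_apply]
    simp only [diag_apply, Pi.inv_apply, uElt_zero, one_mul, inv_one]

theorem place_act (e : Fin r ≃ HairIdx k p n j₀) (x : RAAG (t4Graph l d k p))
    (z : ZMod n × RAAG (t4Graph l d k r)) :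
    place d e (act d e x z) = x * place d e z := by
  let S : Subgroup (RAAG (t4Graph l d k p)) :=
    { carrier := {x | ∀ z, place d e (act d e x z) = x * place d e z}
      one_mem' := fun z => by simp
      mul_mem' := fun {a b} ha hb z => by
        rw [map_mul, Equiv.Perm.mul_apply, ha, hb, mul_assoc]
      inv_mem' := fun {a} ha z => by
        rw [eq_inv_mul_iff_mul_eq, ← ha, map_inv, perm_apply_inv] }
  -- Substituting `z = (diag (uElt d e j))⁻¹ w` makes the conjugation in `actP` and `actL` cancel.
  have hdiag (j : Piv k) (z : ZMod n × RAAG (t4Graph l d k r)) :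
      ∃ w, z = (diag (uElt d e j))⁻¹ w := ⟨diag (uElt d e j) z, (Equiv.symm_apply_apply _ _).symm⟩
  refine t4_mem S ?_ ?_ ?_ ?_ x z
  · rintro ⟨i, g⟩
    have h1 := ((commute_c_p (d := d) (q := p) j₀).pow_right i.val).eq
    simp only [act, t4Lift_c, diag_apply, place, map_mul]
    rw [← mul_assoc, ← mul_assoc, h1]
    simp [toBig]
  · rintro a ⟨i, g⟩
    simp only [act, t4Lift_h, diag_apply, place, map_mul]
    simp [toBig, bigHair, mul_assoc]
  · intro j z
    obtain ⟨⟨i, g⟩, rfl⟩ := hdiag j z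
    rw [act, t4Lift_p, actP, Equiv.Perm.mul_apply, Equiv.Perm.mul_apply,
      perm_apply_inv, place_diag_inv, place_diag_inv, shift_apply]
    by_cases h0 : i + 1 = 0
    · have h1 : i.val + 1 = n := by
        have h2 : ((i.val + 1 : ℕ) : ZMod n) = 0 := by
          rw [Nat.cast_succ, ZMod.natCast_zmod_val, h0]
        rw [ZMod.natCast_eq_zero_iff] at h2
        have := Nat.le_of_dvd (Nat.succ_pos _) h2
        have := ZMod.val_lt i
        omega
      have h3 : toBig d e (pGen d k r j) = pGen d k p j * pGen d k p j ^ i.val := by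
        rw [← pow_succ', h1, toBig, t4Lift_p]
      simp only [h0, if_true, map_mul, h3, ZMod.val_zero, pow_zero, one_mul, mul_assoc]
    · have h1 : (i + 1).val = i.val + 1 := by
        have h3 : i.val + 1 < n := by
          refine lt_of_le_of_ne (ZMod.val_lt i) fun h2 => h0 ?_
          have h4 : ((i.val + 1 : ℕ) : ZMod n) = 0 := by rw [h2, ZMod.natCast_self]
          rwa [Nat.cast_succ, ZMod.natCast_zmod_val] at h4
        have h4 : i + 1 = ((i.val + 1 : ℕ) : ZMod n) := by
          rw [Nat.cast_succ, ZMod.natCast_zmod_val]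
        rw [h4, ZMod.val_natCast_of_lt h3]
      simp only [h0, if_false, h1, pow_succ', mul_assoc]
  · intro j y z
    obtain ⟨⟨i, g⟩, rfl⟩ := hdiag j z
    have h1 := ((commute_p_l (d := d) (q := p) j y).pow_left i.val).eq
    rw [act, t4Lift_l, actL, Equiv.Perm.mul_apply, Equiv.Perm.mul_apply,
      perm_apply_inv, place_diag_inv, place_diag_inv, diag_apply]
    have h3 : toBig d e (lGen d k r j y) = lGen d k p j y := by rw [toBig, t4Lift_l]
    simp only [map_mul, h3]
    rw [← mul_assoc, h1, mul_assoc]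

theorem toBig_injective (e : Fin r ≃ HairIdx k p n j₀) : Function.Injective (toBig d e) := by
  intro x y h
  have h1 := act_toBig e x 1
  rw [h, act_toBig e y 1] at h1
  simpa using h1.symm

theorem range_toBig (e : Fin r ≃ HairIdx k p n j₀) :
    (toBig d e).range = (toCyc d k p n).ker := by
  apply le_antisymm
  · rintro _ ⟨x, rfl⟩
    exact toCyc_toBig e x
  · intro h hh
    have h1 := place_act e h (0, 1)
    have h2 : place d e (0, 1) = 1 := by simp [place]
    rw [h2, mul_one, place] at h1
    generalize act d e h (0, 1) = z at h1
    rw [MonoidHom.mem_ker, ← h1, map_mul, toCyc_toBig, mul_one, toCyc_p_pow,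
      ZMod.natCast_zmod_val] at hh
    have h3 : z.1 = 0 := hh
    rw [h3, ZMod.val_zero, pow_zero, one_mul] at h1
    exact ⟨z.2, h1⟩

theorem index_range_toBig (e : Fin r ≃ HairIdx k p n j₀) : (toBig d e).range.index = n := by
  have hs : Function.Surjective (toCyc d k p n) := fun i =>
    ⟨pGen d k p j₀ ^ (Multiplicative.toAdd i).val, by
      rw [toCyc_p_pow, ZMod.natCast_zmod_val, ofAdd_toAdd]⟩
  rw [range_toBig, Subgroup.index_ker, MonoidHom.range_eq_top.mpr hs, Subgroup.card_top]
  exact Nat.card_zmod n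

end Kernel

theorem card_hairIdx {l : ℕ} (k : Fin l → ℕ) (p n : ℕ) [NeZero n] (j₀ : Piv k) :
    Nat.card (HairIdx k p n j₀) = n * p + (n - 1) * ((∑ i, k i) - 1) := by
  classical
  simp [HairIdx, Nat.card_eq_fintype_card, Fintype.card_subtype_compl, ZMod.card]

/-- The subgroup isomorphic to `G(R)`, of any index `n ≥ 1`, provided that `r` is the number of
hairs arising. -/
theorem exists_subgroup (l : ℕ) (d k : Fin l → ℕ) (p r n : ℕ) (hn : n ≠ 0) (hk : 1 ≤ ∑ i, k i)
    (hr : r = n * p + (n - 1) * ((∑ i, k i) - 1)) :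
    ∃ H : Subgroup (RAAG (t4Graph l d k p)),
      H.index = n ∧ Nonempty (RAAG (t4Graph l d k r) ≃* ↥H) := by
  have : NeZero n := ⟨hn⟩
  have hne : Nonempty (Piv k) := by
    rw [← Fintype.card_pos_iff]
    simpa using Nat.pos_of_ne_zero (by omega : ∑ i, k i ≠ 0)
  obtain ⟨j₀⟩ := hne
  have e : Fin r ≃ HairIdx k p n j₀ :=
    (finCongr (hr.trans (card_hairIdx k p n j₀).symm)).trans (Finite.equivFin _).symm
  exact ⟨(toBig d e).range, index_range_toBig e, ⟨MonoidHom.ofInjective (toBig_injective e)⟩⟩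

/-! ### The two subgroups and commensurability -/

/-- The two counts of the hairs of `R` agree. -/
theorem hair_count (p q K : ℕ) (hK : 2 ≤ K) :
    (q + K - 1) * (p + K - 1) + 1 - K = (q + K - 1) * p + (q + K - 1 - 1) * (K - 1) := by
  obtain ⟨m, rfl⟩ : ∃ m, K = m + 2 := ⟨K - 2, by omega⟩
  have h1 : q + (m + 2) - 1 = q + m + 1 := by omega
  have h2 : p + (m + 2) - 1 = p + m + 1 := by omega
  rw [h1, h2, Nat.add_sub_cancel, show m + 2 - 1 = m + 1 by omega]
  apply Nat.sub_eq_of_eq_add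
  ring

theorem stmt9 (l : ℕ) (hl : 0 < l) (v k : Fin l → ℕ) (p q : ℕ)
    (hv : StrictMono v) (hvpos : ∀ i, 0 < v i) (hkpos : ∀ i, 0 < k i)
    (hdiam : l = 1 → ∀ i, 2 ≤ k i) :
    (∃ H : Subgroup (RAAG (t4Graph l v k p)),
      H.index = q + (∑ i, k i) - 1 ∧
      Nonempty
        (RAAG (t4Graph l v k
            ((q + (∑ i, k i) - 1) * (p + (∑ i, k i) - 1) + 1 - ∑ i, k i)) ≃* ↥H)) ∧
    (∃ H' : Subgroup (RAAG (t4Graph l v k q)),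
      H'.index = p + (∑ i, k i) - 1 ∧
      Nonempty
        (RAAG (t4Graph l v k
            ((q + (∑ i, k i) - 1) * (p + (∑ i, k i) - 1) + 1 - ∑ i, k i)) ≃* ↥H')) ∧
    GroupsCommensurable (RAAG (t4Graph l v k q)) (RAAG (t4Graph l v k p)) := by
  -- The tree has diameter 4, so it has at least two pivots; this makes both indices positive.
  have hK : 2 ≤ ∑ i, k i := by
    rcases Nat.lt_or_ge 1 l with h | h
    · calc 2 ≤ ∑ _i : Fin l, 1 := by simpa using Nat.succ_le_of_lt h
        _ ≤ ∑ i, k i := Finset.sum_le_sum fun i _ => hkpos i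
    · have h1 : l = 1 := by omega
      exact (hdiam h1 ⟨0, hl⟩).trans
        (Finset.single_le_sum (f := k) (fun _ _ => Nat.zero_le _) (Finset.mem_univ _))
  have hT := exists_subgroup l v k p _ (q + (∑ i, k i) - 1) (by omega) (by omega)
    (hair_count p q _ hK)
  have hS := exists_subgroup l v k q _ (p + (∑ i, k i) - 1) (by omega) (by omega)
    (hair_count q p _ hK)
  rw [mul_comm (p + (∑ i, k i) - 1)] at hS
  refine ⟨hT, hS, ?_⟩
  obtain ⟨A, hA, ⟨eA⟩⟩ := hS
  obtain ⟨B, hB, ⟨eB⟩⟩ := hT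
  exact ⟨A, B, ⟨by omega⟩, ⟨by omega⟩, ⟨eA.symm.trans eB⟩⟩
end

section
/- The right-angled Artin group defined by the path on 4 vertices (with presentation ⟨x, p_1, c, p_2 | [x,p_1] = [p_1,c] = [c,p_2] = 1⟩) is commensurable with the right-angled Artin group defined by the path on 5 vertices (with presentation ⟨x_1, p_1, c, p_2, x_2 | [x_1,p_1] = [p_1,c] = [c,p_2] = [p_2,x_2] = 1⟩). -/
/-! ### Homomorphisms out of right-angled Artin groups -/

/-- The homomorphism out of a right-angled Artin group determined by images of the
canonical generators that commute along edges. -/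
def raagLift {V : Type} {Γ : SimpleGraph V} {H : Type*} [Group H] (f : V → H)
    (hf : ∀ u v, Γ.Adj u v → Commute (f u) (f v)) : RAAG Γ →* H :=
  PresentedGroup.toGroup (f := f) (by
    rintro r ⟨u, v, huv, rfl⟩
    have h := (hf u v huv).eq
    simp [h])

theorem raagLift_of {V : Type} {Γ : SimpleGraph V} {H : Type*} [Group H] (f : V → H)
    (hf : ∀ u v, Γ.Adj u v → Commute (f u) (f v)) (v : V) :
    raagLift f hf (PresentedGroup.of v) = f v :=
  PresentedGroup.toGroup.of _

theorem raag_commute {V : Type} {Γ : SimpleGraph V} {u v : V} (h : Γ.Adj u v) :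
    Commute (PresentedGroup.of u : RAAG Γ) (PresentedGroup.of v) := by
  have h1 : (PresentedGroup.mk (raagRels Γ)) (FreeGroup.of u * FreeGroup.of v *
      (FreeGroup.of u)⁻¹ * (FreeGroup.of v)⁻¹) = 1 :=
    PresentedGroup.one_of_mem ⟨u, v, h, rfl⟩
  simp only [map_mul, map_inv] at h1
  exact mul_inv_eq_iff_eq_mul.1 (mul_inv_eq_one.1 h1)

/-! ### Recognising an embedding of index at most two -/

/-- If `G` acts on `T × Bool` so that the image of each generator of `T` acts on the `false` sheet as
left multiplication by that generator, then `t` can be recovered from `φ t` as the image of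
`(1, false)`. -/
theorem injective_of_action {V : Type} {Γ : SimpleGraph V} {G : Type*} [Group G]
    (φ : RAAG Γ →* G) (ψ : G →* Equiv.Perm (RAAG Γ × Bool))
    (h : ∀ v x, ψ (φ (PresentedGroup.of v)) (x, false) = (PresentedGroup.of v * x, false)) :
    Function.Injective φ := by
  have key : ∀ t x : RAAG Γ, ψ (φ t) (x, false) = (t * x, false) := by
    intro t
    have ht : t ∈ Subgroup.closure (Set.range (PresentedGroup.of (rels := raagRels Γ))) := by
      rw [PresentedGroup.closure_range_of]; trivial
    induction ht using Subgroup.closure_induction with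
    | mem y hy => obtain ⟨v, rfl⟩ := hy; exact h v
    | one => simp
    | mul y z _ _ hy hz => intro x; simp [hy, hz, mul_assoc]
    | inv y _ hy =>
      intro x
      rw [map_inv, map_inv, Equiv.Perm.inv_eq_iff_eq, hy]
      simp
  rw [injective_iff_map_eq_one]
  intro t ht
  have := key t 1
  simpa [ht, eq_comm] using this

/-- If every generator either preserves or swaps the two cosets `N` and `d N`, these cosets
exhaust the group. The first alternative says that `v` preserves both cosets, the second that
`v` swaps them. -/
theorem finiteIndex_of_generators {V : Type} {Γ : SimpleGraph V} (N : Subgroup (RAAG Γ))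
    (d : RAAG Γ)
    (h : ∀ v : V, ((PresentedGroup.of v : RAAG Γ) ∈ N ∧ d⁻¹ * PresentedGroup.of v * d ∈ N) ∨
      (d⁻¹ * PresentedGroup.of v ∈ N ∧ PresentedGroup.of v * d ∈ N)) :
    N.FiniteIndex := by
  have key : ∀ g : RAAG Γ, (g ∈ N ∧ d⁻¹ * g * d ∈ N) ∨ (d⁻¹ * g ∈ N ∧ g * d ∈ N) := by
    intro g
    have hg : g ∈ Subgroup.closure (Set.range (PresentedGroup.of (rels := raagRels Γ))) := by
      rw [PresentedGroup.closure_range_of]; trivial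
    induction hg using Subgroup.closure_induction with
    | mem y hy => obtain ⟨v, rfl⟩ := hy; exact h v
    | one => left; simp [N.one_mem]
    | mul y z _ _ hy hz =>
      rcases hy with ⟨y1, y2⟩ | ⟨y1, y2⟩ <;> rcases hz with ⟨z1, z2⟩ | ⟨z1, z2⟩
      · left
        exact ⟨N.mul_mem y1 z1, by simpa [mul_assoc] using N.mul_mem y2 z2⟩
      · right
        exact ⟨by simpa [mul_assoc] using N.mul_mem y2 z1,
          by simpa [mul_assoc] using N.mul_mem y1 z2⟩
      · right
        exact ⟨by simpa [mul_assoc] using N.mul_mem y1 z1,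
          by simpa [mul_assoc] using N.mul_mem y2 z2⟩
      · left
        exact ⟨by simpa [mul_assoc] using N.mul_mem y2 z1,
          by simpa [mul_assoc] using N.mul_mem y1 z2⟩
    | inv y _ hy =>
      rcases hy with ⟨y1, y2⟩ | ⟨y1, y2⟩
      · left
        exact ⟨N.inv_mem y1, by simpa [mul_assoc] using N.inv_mem y2⟩
      · right
        exact ⟨by simpa [mul_assoc] using N.inv_mem y2,
          by simpa [mul_assoc] using N.inv_mem y1⟩
  have hsurj : Function.Surjective
      (fun i : Bool => ((if i then d else 1 : RAAG Γ) : RAAG Γ ⧸ N)) := by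
    intro q
    induction q using QuotientGroup.induction_on with
    | H g =>
      rcases key g with ⟨h1, _⟩ | ⟨h1, _⟩
      · exact ⟨false, QuotientGroup.eq.2 (by simpa using h1)⟩
      · exact ⟨true, QuotientGroup.eq.2 (by simpa using h1)⟩
  have : Finite (RAAG Γ ⧸ N) := Finite.of_surjective _ hsurj
  exact Subgroup.finiteIndex_of_finite_quotient

/-! ### The common subgroup -/

/-- The path `0 - 1 - 2 - 3 - 4` with an extra leaf `5` attached to `2`. -/
def spider : SimpleGraph (Fin 6) :=
  SimpleGraph.fromRel fun i j => (i, j) ∈ [(0, 1), (1, 2), (2, 3), (3, 4), (2, 5)]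

/-- The canonical generators of the right-angled Artin group of `spider`. -/
abbrev sg (i : Fin 6) : RAAG spider := PresentedGroup.of i

theorem commute_of_spider_adj {H : Type*} [Group H] (f : Fin 6 → H)
    (h01 : Commute (f 0) (f 1)) (h12 : Commute (f 1) (f 2)) (h23 : Commute (f 2) (f 3))
    (h34 : Commute (f 3) (f 4)) (h25 : Commute (f 2) (f 5)) :
    ∀ u v, spider.Adj u v → Commute (f u) (f v) := by
  intro u v huv
  simp only [spider, SimpleGraph.fromRel_adj, List.mem_cons, Prod.mk.injEq, List.not_mem_nil,
    or_false] at huv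
  obtain ⟨-, (h | h | h | h | h) | (h | h | h | h | h)⟩ := huv <;>
    obtain ⟨rfl, rfl⟩ := h <;> first | assumption | (apply Commute.symm; assumption)

theorem sg_commute : Commute (sg 0) (sg 1) ∧ Commute (sg 1) (sg 2) ∧ Commute (sg 2) (sg 3) ∧
    Commute (sg 3) (sg 4) ∧ Commute (sg 2) (sg 5) := by
  refine ⟨?_, ?_, ?_, ?_, ?_⟩ <;> apply raag_commute <;> simp [spider]

theorem commute_of_path_adj {n : ℕ} {H : Type*} [Group H] (f : Fin n → H)
    (h : ∀ (i : ℕ) (hi : i + 1 < n), Commute (f ⟨i, by omega⟩) (f ⟨i + 1, hi⟩)) :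
    ∀ u v, (SimpleGraph.pathGraph n).Adj u v → Commute (f u) (f v) := by
  rintro ⟨u, hu⟩ ⟨v, hv⟩ huv
  rw [SimpleGraph.pathGraph_adj] at huv
  simp only at huv
  rcases huv with rfl | rfl
  · exact h _ _
  · exact (h _ _).symm

theorem path_commute {n : ℕ} (i : ℕ) (hi : i + 1 < n) :
    Commute (PresentedGroup.of ⟨i, by omega⟩ : RAAG (SimpleGraph.pathGraph n))
      (PresentedGroup.of ⟨i + 1, hi⟩) :=
  raag_commute (by simp [SimpleGraph.pathGraph_adj])

/-! ### Permutations of the two cosets -/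

/-- The permutation of `T × Bool` preserving the two sheets, acting on them by left
multiplication by `g` and `h` respectively. -/
def keepPerm {T : Type*} [Group T] (g h : T) : Equiv.Perm (T × Bool) where
  toFun p := (bif p.2 then h * p.1 else g * p.1, p.2)
  invFun p := (bif p.2 then h⁻¹ * p.1 else g⁻¹ * p.1, p.2)
  left_inv := by rintro ⟨x, _ | _⟩ <;> simp
  right_inv := by rintro ⟨x, _ | _⟩ <;> simp

/-- The permutation of `T × Bool` swapping the two sheets, acting by left multiplication by
`g` from the `false` sheet to the `true` one and by `h` in the other direction. -/
def swapPerm {T : Type*} [Group T] (g h : T) : Equiv.Perm (T × Bool) where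
  toFun p := (bif p.2 then h * p.1 else g * p.1, !p.2)
  invFun p := (bif p.2 then g⁻¹ * p.1 else h⁻¹ * p.1, !p.2)
  left_inv := by rintro ⟨x, _ | _⟩ <;> simp
  right_inv := by rintro ⟨x, _ | _⟩ <;> simp

section Perm

variable {T : Type*} [Group T] (g h g' h' x : T)

@[simp] theorem keepPerm_false : keepPerm g h (x, false) = (g * x, false) := rfl
@[simp] theorem keepPerm_true : keepPerm g h (x, true) = (h * x, true) := rfl
@[simp] theorem swapPerm_false : swapPerm g h (x, false) = (g * x, true) := rfl
@[simp] theorem swapPerm_true : swapPerm g h (x, true) = (h * x, false) := rfl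
@[simp] theorem swapPerm_symm_true : (swapPerm g h).symm (x, true) = (g⁻¹ * x, false) := rfl

variable {g h g' h'}

theorem keepPerm_commute_keepPerm (h1 : Commute g g') (h2 : Commute h h') :
    Commute (keepPerm g h) (keepPerm g' h') := by
  apply Equiv.ext
  rintro ⟨x, _ | _⟩ <;> simp [← mul_assoc, h1.eq, h2.eq]

theorem keepPerm_commute_swapPerm (h1 : h * g' = g' * g) (h2 : g * h' = h' * h) :
    Commute (keepPerm g h) (swapPerm g' h') := by
  apply Equiv.ext
  rintro ⟨x, _ | _⟩ <;> simp [← mul_assoc, h1, h2]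

end Perm

/-! ### The path on four vertices -/

/-- The canonical generators of the right-angled Artin group of the path on four vertices. -/
abbrev pg4 (i : Fin 4) : RAAG (SimpleGraph.pathGraph 4) := PresentedGroup.of i

/-- Images of the generators of `RAAG spider` in the right-angled Artin group of the path on four
vertices. -/
def f4 : Fin 6 → RAAG (SimpleGraph.pathGraph 4) :=
  ![pg4 0, pg4 1, pg4 2, (pg4 3)⁻¹ * pg4 1 * pg4 3, (pg4 3)⁻¹ * pg4 0 * pg4 3, pg4 3 * pg4 3]

theorem f4_commute : ∀ u v, spider.Adj u v → Commute (f4 u) (f4 v) := by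
  have h01 : Commute (pg4 0) (pg4 1) := path_commute (n := 4) 0 (by norm_num)
  have h12 : Commute (pg4 1) (pg4 2) := path_commute (n := 4) 1 (by norm_num)
  have h23 : Commute (pg4 2) (pg4 3) := path_commute (n := 4) 2 (by norm_num)
  refine commute_of_spider_adj f4 h01 h12 ?_ ?_ ?_
  · exact (h23.inv_right.mul_right h12.symm).mul_right h23
  · have := (Commute.conj_iff (pg4 3)⁻¹).2 h01.symm
    simpa [f4] using this
  · exact h23.mul_right h23

/-- The embedding of `RAAG spider` in the right-angled Artin group of the path on four vertices. -/
def φ4 : RAAG spider →* RAAG (SimpleGraph.pathGraph 4) := raagLift f4 f4_commute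

/-- The action of the generators `a, b, c, d` on the two cosets `T` and `d T`. -/
def k4 : Fin 4 → Equiv.Perm (RAAG spider × Bool) :=
  ![keepPerm (sg 0) (sg 4), keepPerm (sg 1) (sg 3), keepPerm (sg 2) (sg 2), swapPerm 1 (sg 5)]

theorem k4_commute : ∀ u v, (SimpleGraph.pathGraph 4).Adj u v → Commute (k4 u) (k4 v) := by
  obtain ⟨h01, h12, h23, h34, h25⟩ := sg_commute
  apply commute_of_path_adj
  intro i hi
  obtain rfl | rfl | rfl : i = 0 ∨ i = 1 ∨ i = 2 := by omega
  · exact keepPerm_commute_keepPerm h01 h34.symm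
  · exact keepPerm_commute_keepPerm h12 h23.symm
  · exact keepPerm_commute_swapPerm (by simp) h25

theorem φ4_injective : Function.Injective φ4 := by
  apply injective_of_action φ4 (raagLift k4 k4_commute)
  intro v x
  rw [φ4, raagLift_of]
  fin_cases v <;> simp [f4, raagLift_of, k4]

theorem φ4_finiteIndex : φ4.range.FiniteIndex := by
  have hm : ∀ i, f4 i ∈ φ4.range := fun i => ⟨sg i, raagLift_of _ _ _⟩
  have h23 : Commute (pg4 2) (pg4 3) := path_commute (n := 4) 2 (by norm_num)
  apply finiteIndex_of_generators _ (pg4 3)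
  intro v
  fin_cases v
  · exact Or.inl ⟨hm 0, hm 4⟩
  · exact Or.inl ⟨hm 1, hm 3⟩
  · refine Or.inl ⟨hm 2, ?_⟩
    have : (pg4 3)⁻¹ * pg4 2 * pg4 3 = pg4 2 := by rw [mul_assoc, h23.eq, inv_mul_cancel_left]
    exact this ▸ hm 2
  · refine Or.inr ⟨?_, hm 5⟩
    simp

/-! ### The path on five vertices -/

/-- The canonical generators of the right-angled Artin group of the path on five vertices. -/
abbrev pg5 (i : Fin 5) : RAAG (SimpleGraph.pathGraph 5) := PresentedGroup.of i

/-- Images of the generators of `RAAG spider` in the right-angled Artin group of the path on five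
vertices. -/
def f5 : Fin 6 → RAAG (SimpleGraph.pathGraph 5) :=
  ![pg5 0, pg5 1 * pg5 1, pg5 2, pg5 3 * pg5 3, pg5 4, (pg5 3)⁻¹ * pg5 1]

theorem f5_commute : ∀ u v, spider.Adj u v → Commute (f5 u) (f5 v) := by
  have h01 : Commute (pg5 0) (pg5 1) := path_commute (n := 5) 0 (by norm_num)
  have h12 : Commute (pg5 1) (pg5 2) := path_commute (n := 5) 1 (by norm_num)
  have h23 : Commute (pg5 2) (pg5 3) := path_commute (n := 5) 2 (by norm_num)
  have h34 : Commute (pg5 3) (pg5 4) := path_commute (n := 5) 3 (by norm_num)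
  exact commute_of_spider_adj f5 (h01.mul_right h01) (h12.mul_left h12) (h23.mul_right h23)
    (h34.mul_left h34) (h23.inv_right.mul_right h12.symm)

/-- The embedding of `RAAG spider` in the right-angled Artin group of the path on five vertices. -/
def φ5 : RAAG spider →* RAAG (SimpleGraph.pathGraph 5) := raagLift f5 f5_commute

/-- The action of the generators `x₁, p₁, c, p₂, x₂` on the two cosets `T` and `p₂ T`.
With `s = p₂⁻¹ p₁`, it is read off from `p₁ = p₂ s`, `p₁ p₂ = p₁² s⁻¹` and
`p₂⁻¹ x₁ p₂ = s x₁ s⁻¹`. -/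
def k5 : Fin 5 → Equiv.Perm (RAAG spider × Bool) :=
  ![keepPerm (sg 0) (sg 5 * sg 0 * (sg 5)⁻¹), swapPerm (sg 5) (sg 1 * (sg 5)⁻¹),
    keepPerm (sg 2) (sg 2), swapPerm 1 (sg 3), keepPerm (sg 4) (sg 4)]

theorem k5_commute : ∀ u v, (SimpleGraph.pathGraph 5).Adj u v → Commute (k5 u) (k5 v) := by
  obtain ⟨h01, h12, h23, h34, h25⟩ := sg_commute
  apply commute_of_path_adj
  intro i hi
  obtain rfl | rfl | rfl | rfl : i = 0 ∨ i = 1 ∨ i = 2 ∨ i = 3 := by omega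
  · refine keepPerm_commute_swapPerm (by group) ?_
    rw [← mul_assoc, h01.eq]
    group
  · exact (keepPerm_commute_swapPerm h25.eq (h12.symm.mul_right h25.inv_right).eq).symm
  · exact keepPerm_commute_swapPerm (by simp) h23
  · exact (keepPerm_commute_swapPerm (by simp) h34.symm).symm

theorem φ5_injective : Function.Injective φ5 := by
  apply injective_of_action φ5 (raagLift k5 k5_commute)
  intro v x
  rw [φ5, raagLift_of]
  fin_cases v <;> simp [f5, raagLift_of, k5, mul_assoc]

theorem φ5_finiteIndex : φ5.range.FiniteIndex := by
  have hm : ∀ i, f5 i ∈ φ5.range := fun i => ⟨sg i, raagLift_of _ _ _⟩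
  have h01 : Commute (pg5 0) (pg5 1) := path_commute (n := 5) 0 (by norm_num)
  have h23 : Commute (pg5 2) (pg5 3) := path_commute (n := 5) 2 (by norm_num)
  have h34 : Commute (pg5 3) (pg5 4) := path_commute (n := 5) 3 (by norm_num)
  apply finiteIndex_of_generators _ (pg5 3)
  intro v
  fin_cases v
  · refine Or.inl ⟨hm 0, ?_⟩
    have h1 := φ5.range.mul_mem (φ5.range.mul_mem (hm 5) (hm 0)) (φ5.range.inv_mem (hm 5))
    have h2 : f5 5 * f5 0 * (f5 5)⁻¹ = (pg5 3)⁻¹ * pg5 0 * pg5 3 := by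
      change (pg5 3)⁻¹ * pg5 1 * pg5 0 * ((pg5 3)⁻¹ * pg5 1)⁻¹ = _
      rw [mul_assoc (pg5 3)⁻¹, ← h01.eq]
      group
    exact h2 ▸ h1
  · refine Or.inr ⟨hm 5, ?_⟩
    have h1 := φ5.range.mul_mem (hm 1) (φ5.range.inv_mem (hm 5))
    have h2 : f5 1 * (f5 5)⁻¹ = pg5 1 * pg5 3 := by
      change pg5 1 * pg5 1 * ((pg5 3)⁻¹ * pg5 1)⁻¹ = _
      group
    exact h2 ▸ h1
  · refine Or.inl ⟨hm 2, ?_⟩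
    have : (pg5 3)⁻¹ * pg5 2 * pg5 3 = pg5 2 := by rw [mul_assoc, h23.eq, inv_mul_cancel_left]
    exact this ▸ hm 2
  · refine Or.inr ⟨?_, hm 3⟩
    simp
  · refine Or.inl ⟨hm 4, ?_⟩
    have : (pg5 3)⁻¹ * pg5 4 * pg5 3 = pg5 4 := by
      rw [mul_assoc, ← h34.eq, inv_mul_cancel_left]
    exact this ▸ hm 4

theorem stmt10 :
    GroupsCommensurable (RAAG (SimpleGraph.pathGraph 4))
      (RAAG (SimpleGraph.pathGraph 5)) := by
  exact ⟨φ4.range, φ5.range, φ4_finiteIndex, φ5_finiteIndex,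
    ⟨(MonoidHom.ofInjective φ4_injective).symm.trans (MonoidHom.ofInjective φ5_injective)⟩⟩
end

section
/- Let Γ be a finite tree and let w be a nontrivial element of the right-angled Artin group G(Γ). Then the centralizer C(w) of w in G(Γ) is non-abelian if and only if w is conjugate to a nonzero power of a canonical generator corresponding to a non-leaf vertex of Γ; and in this case C(w) is isomorphic to ℤ × F, where F is a non-abelian free group. -/
/-! ### Lyndon length functions -/

/-- An integral Lyndon length function on `E`: `len g` is the distance from a base vertex `x₀` to
`g x₀` for an action of `E` on a tree without inversions, where `ι.range` is the stabilizer of `x₀`,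
`t` moves `x₀` to an adjacent vertex, and the edge between them has stabilizer inside `⟨p⟩`.
Twice the Gromov product of `g x₀` and `h x₀` at `x₀` is `len g + len h - len (g⁻¹ * h)`, and
`hyp` is the `0`-hyperbolic inequality. The other fields say that displacements have the parity of a
homomorphism to `ℤ` (`parity`), that every nontrivial path from `x₀` starts with an edge to a
translate of `t x₀` or `t⁻¹ x₀` by the stabilizer of `x₀` (`peel`), and that the elements of the
stabilizer fixing an edge from `x₀` to `t x₀` or `t⁻¹ x₀` lie in `⟨p⟩` (`edge`). -/
structure IsTreeLength {G E : Type} [Group G] [Group E] (ι : G →* E) (t p : E)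
    (len : E → ℕ) : Prop where
  zero_iff : ∀ g, len g = 0 ↔ g ∈ ι.range
  inv : ∀ g, len g⁻¹ = len g
  hyp : ∀ g h k, min ((len g : ℤ) + len h - len (g⁻¹ * h)) ((len h : ℤ) + len k - len (h⁻¹ * k))
    ≤ (len g : ℤ) + len k - len (g⁻¹ * k)
  parity : ∃ χ : E →* Multiplicative ℤ, (∀ g, (2 : ℤ) ∣ (len g : ℤ) - (χ g).toAdd) ∧
    ∀ g, len g = 0 → χ g = 1
  len_t : ∀ u : ℤˣ, len (t ^ (u : ℤ)) = 1
  peel : ∀ g, 0 < len g → ∃ (h : G) (u : ℤˣ), len ((ι h * t ^ (u : ℤ))⁻¹ * g) + 1 = len g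
  edge : ∀ (h : G) (u : ℤˣ), len ((t ^ (u : ℤ))⁻¹ * ι h * t ^ (u : ℤ)) = 0 →
    ι h ∈ Subgroup.zpowers p

namespace IsTreeLength

variable {G E : Type} [Group G] [Group E] {ι : G →* E} {t p : E} {len : E → ℕ}

theorem len_one (H : IsTreeLength ι t p len) : len 1 = 0 := (H.zero_iff 1).2 (one_mem _)

theorem len_mul_le (H : IsTreeLength ι t p len) (g h : E) : len (g * h) ≤ len g + len h := by
  have := H.hyp g⁻¹ 1 h
  simp [H.inv, H.len_one] at this
  omega

theorem len_ι (H : IsTreeLength ι t p len) (h : G) : len (ι h) = 0 :=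
  (H.zero_iff _).2 ⟨h, rfl⟩

theorem zero_mul (H : IsTreeLength ι t p len) {a : E} (ha : len a = 0) (g : E) :
    len (a * g) = len g := by
  have h1 := H.len_mul_le a g
  have h2 := H.len_mul_le a⁻¹ (a * g)
  rw [inv_mul_cancel_left, H.inv] at h2
  omega

theorem mul_zero (H : IsTreeLength ι t p len) {a : E} (ha : len a = 0) (g : E) :
    len (g * a) = len g := by
  have h1 := H.len_mul_le g a
  have h2 := H.len_mul_le (g * a) a⁻¹
  rw [mul_inv_cancel_right, H.inv] at h2
  omega

/-- If `a` fixes the base vertex and the different vertex `w x₀`, then it fixes the first edge of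
the path between them. -/
theorem fix_edge (H : IsTreeLength ι t p len) {a w : E} {h : G} {u : ℤˣ} (ha : len a = 0)
    (haw : len (w⁻¹ * a * w) = 0) (hx : len ((ι h * t ^ (u : ℤ))⁻¹ * w) + 1 = len w) :
    (ι h)⁻¹ * a * ι h ∈ Subgroup.zpowers p := by
  obtain ⟨b, rfl⟩ := (H.zero_iff a).1 ha
  rw [← map_inv, ← map_mul, ← map_mul]
  apply H.edge _ u
  set x := ι h * t ^ (u : ℤ) with hxd
  have lx : len x = 1 := by rw [hxd, H.zero_mul (H.len_ι h), H.len_t]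
  have e : (t ^ (u : ℤ))⁻¹ * ι (h⁻¹ * b * h) * t ^ (u : ℤ) = x⁻¹ * (ι b * x) := by
    simp [hxd, mul_assoc]
  rw [e]
  have h1 := H.hyp x w (ι b * w)
  have h2 := H.hyp x (ι b * w) (ι b * x)
  have e2 : (ι b * w)⁻¹ * (ι b * x) = (x⁻¹ * w)⁻¹ := by group
  rw [e2, H.inv] at h2
  rw [← mul_assoc w⁻¹] at h1
  rw [H.zero_mul ha] at h1 h2
  rw [H.zero_mul ha] at h2
  omega

/-- The common stabilizer of two different vertices is conjugate into `⟨p⟩`, the conjugator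
depending only on the vertices. -/
theorem exists_conj (H : IsTreeLength ι t p len) {w : E} (hw : 0 < len w) :
    ∃ h : G, ∀ a, len a = 0 → len (w⁻¹ * a * w) = 0 →
      (ι h)⁻¹ * a * ι h ∈ Subgroup.zpowers p := by
  obtain ⟨h, u, hx⟩ := H.peel w hw
  exact ⟨h, fun a ha haw => H.fix_edge ha haw hx⟩

/-- If the paths through `g⁻¹ x₀`, `x₀`, `h x₀` and through `x₀`, `h x₀`, `h k x₀` do not backtrack,
then neither does their concatenation. -/
theorem concat (H : IsTreeLength ι t p len) {g h k : E} (hgh : len (g * h) = len g + len h)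
    (hhk : len (h * k) = len h + len k) (hh : 0 < len h) :
    len (g * h * k) = len g + len h + len k := by
  have h1 := H.hyp h⁻¹ (g * h)⁻¹ k
  have e : h⁻¹⁻¹ * (g * h)⁻¹ = g⁻¹ := by group
  rw [e] at h1
  simp only [inv_inv, H.inv, mul_assoc] at h1 ⊢
  have h2 := H.len_mul_le (g * h) k
  rw [mul_assoc] at h2
  omega

theorem len_pow (H : IsTreeLength ι t p len) {w : E} (h2 : len (w * w) = 2 * len w)
    (h0 : 0 < len w) (n : ℕ) : len (w ^ n) = n * len w := by
  rcases n with _ | n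
  · simp [H.len_one]
  · have key : ∀ n : ℕ, len (w ^ (n + 1)) = (n + 1) * len w ∧
        len (w ^ (n + 2)) = (n + 2) * len w := by
      intro n
      induction n with
      | zero => exact ⟨by simp, by simpa [pow_two] using h2⟩
      | succ n ih =>
        refine ⟨by simpa [add_assoc] using ih.2, ?_⟩
        have e : w ^ (n + 1 + 2) = w ^ (n + 1) * w * w := by
          rw [← pow_succ, ← pow_succ]
        rw [e, H.concat _ (by omega) h0, ih.1]
        · ring
        · rw [← pow_succ, ih.2, ih.1]; ring
    exact (key n).1

/-- Every element is conjugate to one which is elliptic at `x₀` or whose axis passes through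
`x₀`. -/
theorem exists_cyc_reduced (H : IsTreeLength ι t p len) (w : E) :
    ∃ g, len (g⁻¹ * w * g) = 0 ∨
      (0 < len (g⁻¹ * w * g) ∧
        len ((g⁻¹ * w * g) * (g⁻¹ * w * g)) = 2 * len (g⁻¹ * w * g)) := by
  induction hn : len w using Nat.strong_induction_on generalizing w with
  | _ n ih =>
  by_cases hw : len w = 0
  · exact ⟨1, Or.inl (by simpa using hw)⟩
  by_cases hww : len (w * w) = 2 * len w
  · refine ⟨1, Or.inr ⟨by simpa using Nat.pos_of_ne_zero hw, by simpa using hww⟩⟩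
  obtain ⟨χ, hχ, hχ0⟩ := H.parity
  have hle := H.len_mul_le w w
  obtain ⟨h, u, hx⟩ := H.peel w (by omega)
  obtain ⟨h', u', hy⟩ := H.peel w⁻¹ (by rw [H.inv]; omega)
  have lx : len (ι h * t ^ (u : ℤ)) = 1 := by rw [H.zero_mul (H.len_ι h), H.len_t]
  have ly : len (ι h' * t ^ (u' : ℤ)) = 1 := by rw [H.zero_mul (H.len_ι h'), H.len_t]
  generalize ι h * t ^ (u : ℤ) = x at *
  generalize ι h' * t ^ (u' : ℤ) = y at *
  have p0 := hχ (w * w)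
  have p1 := hχ (x⁻¹ * y)
  have p2 := hχ x
  have p3 := hχ y
  simp only [map_mul, map_inv, toAdd_mul, toAdd_inv] at p0 p1
  have q := hχ0 (w * w)
  -- an element of displacement one squaring into a vertex stabilizer would invert an edge
  have hw1 : len w ≠ 1 := by
    intro h1
    have h3 : len (w * w) = 0 := by omega
    have h4 := congrArg Multiplicative.toAdd (q h3)
    have h5 := hχ w
    simp only [map_mul, toAdd_mul, toAdd_one] at h4
    omega
  rw [H.inv] at hy
  have a1 := H.hyp x w w⁻¹
  have a2 := H.hyp x w⁻¹ y
  have e1 : len (w⁻¹ * w⁻¹) = len (w * w) := by rw [← mul_inv_rev, H.inv]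
  have e2 : len (w⁻¹⁻¹ * y) = len (y⁻¹ * w⁻¹) := by
    rw [← H.inv]; congr 1; group
  rw [e1] at a1
  rw [e2] at a2
  simp only [H.inv] at a1 a2
  have hxy : len (x⁻¹ * y) = 0 := by omega
  have a3 := H.hyp w⁻¹ y x
  have e3 : len (w⁻¹⁻¹ * y) = len (y⁻¹ * w⁻¹) := e2
  have e4 : len (y⁻¹ * x) = len (x⁻¹ * y) := by
    rw [← H.inv]; congr 1; group
  rw [e3, e4, inv_inv, H.inv] at a3
  have a4 := H.hyp x w (w * x)
  rw [inv_mul_cancel_left] at a4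
  have b4 := H.len_mul_le w x
  have lt : len (x⁻¹ * w * x) < n := by
    rw [mul_assoc]
    omega
  obtain ⟨g, hg⟩ := ih _ lt _ rfl
  refine ⟨x * g, ?_⟩
  have e : (x * g)⁻¹ * w * (x * g) = g⁻¹ * (x⁻¹ * w * x) * g := by group
  rw [e]
  exact hg

/-- The path from `g⁻¹ x₀` enters the ray through the points `w ^ n * x₀` within distance `len g`
of `x₀`, and follows it from there on. -/
theorem exists_aligned (H : IsTreeLength ι t p len) {w : E} (g : E) (h0 : 0 < len w)
    (h2 : len (w * w) = 2 * len w) :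
    ∃ N : ℕ, 0 < len (g * w ^ N) ∧ len (g * w ^ N * w) = len (g * w ^ N) + len w := by
  refine ⟨len g + 1, ?_⟩
  set N := len g + 1 with hN
  have l1 := H.len_pow h2 h0 N
  have l2 := H.len_pow h2 h0 (N + 1)
  have hb : len g + 1 ≤ N * len w := by
    rw [hN]; exact Nat.le_mul_of_pos_right _ h0
  have hb2 : (N + 1) * len w = N * len w + len w := by ring
  have t1 := H.len_mul_le g⁻¹ (g * w ^ N)
  rw [inv_mul_cancel_left, H.inv] at t1
  refine ⟨by omega, ?_⟩
  have h3 := H.hyp g⁻¹ (w ^ N) (w ^ (N + 1))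
  have h4 := H.hyp g⁻¹ (w ^ (N + 1)) (w ^ N)
  have e : (w ^ N)⁻¹ * w ^ (N + 1) = w := by rw [pow_succ w N, inv_mul_cancel_left]
  have e' : (w ^ (N + 1))⁻¹ * w ^ N = w⁻¹ := by
    rw [pow_succ w N, mul_inv_rev, mul_assoc, inv_mul_cancel, mul_one]
  rw [e] at h3
  rw [e'] at h4
  rw [inv_inv] at h3 h4
  rw [H.inv] at h3 h4
  rw [H.inv] at h4
  rw [mul_assoc, ← pow_succ]
  have t2 := H.len_mul_le (g * w ^ N) w
  have t3 := H.len_mul_le g⁻¹ (g * w ^ (N + 1))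
  rw [inv_mul_cancel_left, H.inv] at t3
  rw [mul_assoc, ← pow_succ] at t2
  omega

/-- Elements commuting with a hyperbolic element act on its axis by translations, so their commutators
fix the axis pointwise and lie in an edge stabilizer; a homomorphism to an abelian group that is injective
on `⟨p⟩` shows that such commutators are trivial. -/
theorem commute_of_hyperbolic (H : IsTreeLength ι t p len) {M : Type} [CommGroup M] (χ : E →* M)
    (hχ : ∀ n : ℤ, χ (p ^ n) = 1 → n = 0) {w : E} (h0 : 0 < len w)
    (h2 : len (w * w) = 2 * len w) {g h : E} (hg : Commute g w) (hh : Commute h w) :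
    Commute g h := by
  obtain ⟨N, hN0, hN⟩ := H.exists_aligned g h0 h2
  obtain ⟨M, hM0, hM⟩ := H.exists_aligned h h0 h2
  set x := g * w ^ N with hx
  set y := h * w ^ M with hy
  have cx : Commute x w := hg.mul_left ((Commute.refl w).pow_left N)
  have cy : Commute y w := hh.mul_left ((Commute.refl w).pow_left M)
  have lxw : len (w * x) = len w + len x := by rw [← cx.eq, hN]; ring
  have lyw : len (w * y) = len w + len y := by rw [← cy.eq, hM]; ring
  -- the concatenation `x * y` is aligned since `y x₀` branches off in the direction of the axis
  have branch : ∀ x y : E, Commute y w → 0 < len y → len (x * w) = len x + len w →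
      len (y * w) = len y + len w → len (x * y) = len x + len y := by
    intro x y cy hy0 hx hy
    have h1 := H.hyp x⁻¹ y w
    have h3 := H.hyp y (y * w) w
    have e : (y * w)⁻¹ * w = y⁻¹ := by rw [cy.eq]; group
    rw [e, inv_mul_cancel_left] at h3
    simp only [H.inv, inv_inv] at h1 h3
    have := H.len_mul_le x y
    omega
  have lxy := branch x y cy hM0 hN hM
  have lyx := branch y x cx hN0 hM hN
  have lxyw := H.concat lxy hM hM0
  have lyxw := H.concat lyx hN hN0
  -- both `x * y * x₀` and `y * x * x₀` lie on the ray from `x₀` through the points `w ^ K * x₀`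
  set K := len x + len y + 1 with hK
  have lK := H.len_pow h2 h0 K
  have hKb : len x + len y + 1 ≤ K * len w := Nat.le_mul_of_pos_right _ h0
  have ray : ∀ z : E, Commute z w → 0 < len z → len (z * w) = len z + len w →
      len (z * w ^ K) = len z + len (w ^ K) := by
    intro z cz hz0 hz
    exact branch z (w ^ K) ((Commute.refl w).pow_left K) (by omega) hz (by
      rw [← pow_succ, H.len_pow h2 h0, H.len_pow h2 h0]; ring)
  have onray : ∀ z : E, Commute z w → 0 < len z → len (z * w) = len z + len w →
      len z ≤ len (w ^ K) → len (z⁻¹ * w ^ K) + len z = len (w ^ K) := by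
    intro z cz hz0 hz hzK
    have h1 := ray z cz hz0 hz
    have h3 := H.hyp z (z * w ^ K) (w ^ K)
    have e : (z * w ^ K)⁻¹ * w ^ K = z⁻¹ := by rw [(cz.pow_right K).eq]; group
    rw [e, inv_mul_cancel_left, H.inv] at h3
    have := H.len_mul_le z (z⁻¹ * w ^ K)
    rw [mul_inv_cancel_left] at this
    omega
  have r1 := onray (x * y) (cx.mul_left cy) (by omega) (by omega) (by omega)
  have r2 := onray (y * x) (cy.mul_left cx) (by omega) (by omega) (by omega)
  have h5 := H.hyp (y * x) (w ^ K) (x * y)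
  have e5 : len ((w ^ K)⁻¹ * (x * y)) = len ((x * y)⁻¹ * w ^ K) := by
    rw [← H.inv]; congr 1; group
  rw [e5] at h5
  have lc : len ((y * x)⁻¹ * (x * y)) = 0 := by omega
  have cc : Commute ((y * x)⁻¹ * (x * y)) w := ((cy.mul_left cx).inv_left).mul_left (cx.mul_left cy)
  obtain ⟨k, hk⟩ := H.exists_conj h0
  obtain ⟨n, hn⟩ := Subgroup.mem_zpowers_iff.1 (hk _ lc (by
    rw [mul_assoc, cc.eq, inv_mul_cancel_left]; exact lc))
  have hn0 : n = 0 := by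
    apply hχ
    rw [hn]
    simp only [map_mul, map_inv]
    rw [mul_comm (χ y)]
    simp
  have hc : (y * x)⁻¹ * (x * y) = 1 := by
    rw [hn0, zpow_zero] at hn
    have : (y * x)⁻¹ * (x * y) = ι k * ((ι k)⁻¹ * ((y * x)⁻¹ * (x * y)) * ι k) * (ι k)⁻¹ := by group
    rw [this, ← hn]; simp
  have cxy : Commute x y := (inv_mul_eq_one.1 hc).symm
  have c1 : Commute (w ^ N) y := (cy.pow_right N).symm
  have c2 : Commute g y := by
    have : g = x * (w ^ N)⁻¹ := by rw [hx]; group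
    rw [this]; exact cxy.mul_left c1.inv_left
  have : h = y * (w ^ M)⁻¹ := by rw [hy]; group
  rw [this]
  exact c2.mul_right (hg.pow_right M).inv_right

/-- A length function restricts to a subgroup containing the vertex group and `t`. -/
theorem comap (H : IsTreeLength ι t p len) {E' : Type} [Group E'] (f : E' →* E)
    (hf : Function.Injective f) {ι' : G →* E'} {t' p' : E'} (hι : ∀ g, f (ι' g) = ι g)
    (ht : f t' = t) (hp : f p' = p) : IsTreeLength ι' t' p' (fun g => len (f g)) where
  zero_iff g := by
    rw [H.zero_iff]
    constructor
    · rintro ⟨h, hh⟩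
      exact ⟨h, hf (by rw [hι, hh])⟩
    · rintro ⟨h, rfl⟩
      exact ⟨h, (hι h).symm⟩
  inv g := by rw [map_inv, H.inv]
  hyp g h k := by
    simpa using H.hyp (f g) (f h) (f k)
  parity := by
    obtain ⟨χ, h1, h2⟩ := H.parity
    exact ⟨χ.comp f, fun g => h1 _, fun g hg => h2 _ hg⟩
  len_t u := by rw [map_zpow, ht, H.len_t]
  peel g hg := by
    obtain ⟨h, u, hx⟩ := H.peel _ hg
    exact ⟨h, u, by simpa [hι, ht] using hx⟩
  edge h u hu := by
    have h1 := H.edge h u (by simpa [hι, ht] using hu)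
    obtain ⟨n, hn⟩ := Subgroup.mem_zpowers_iff.1 h1
    exact Subgroup.mem_zpowers_iff.2 ⟨n, hf (by rw [map_zpow, hp, hn, hι])⟩

end IsTreeLength

/-! ### Common prefixes of lists -/

/-- The length of the longest common prefix of two lists. -/
def lcpLength {α : Type} [DecidableEq α] : List α → List α → ℕ
  | a :: l, b :: m => if a = b then lcpLength l m + 1 else 0
  | _, _ => 0

section lcpLength

variable {α : Type} [DecidableEq α]

@[simp] theorem lcpLength_nil_left (l : List α) : lcpLength [] l = 0 := by
  simp [lcpLength]

@[simp] theorem lcpLength_nil_right (l : List α) : lcpLength l [] = 0 := by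
  cases l <;> simp [lcpLength]

theorem lcpLength_comm (l m : List α) : lcpLength l m = lcpLength m l := by
  induction l generalizing m with
  | nil => simp
  | cons a l ih =>
    cases m with
    | nil => simp
    | cons b m => simp only [lcpLength, ih m, eq_comm]

theorem lcpLength_ultra (l m k : List α) :
    min (lcpLength l m) (lcpLength m k) ≤ lcpLength l k := by
  induction l generalizing m k with
  | nil => simp
  | cons a l ih =>
    cases m with
    | nil => simp
    | cons b m =>
      cases k with
      | nil => simp
      | cons c k =>
        have := ih m k
        simp only [lcpLength]
        split_ifs <;> first | omega | (subst_vars; simp_all)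

theorem lcpLength_concat (l m : List α) (x : α) :
    lcpLength l m ≤ lcpLength (l ++ [x]) m ∧
      lcpLength (l ++ [x]) m ≤ lcpLength l m + 1 := by
  induction l generalizing m with
  | nil =>
    cases m with
    | nil => simp
    | cons b m =>
      simp only [List.nil_append, lcpLength]
      split_ifs <;> simp
  | cons a l ih =>
    cases m with
    | nil => simp
    | cons b m =>
      have := ih m
      simp only [List.cons_append, lcpLength]
      split_ifs <;> omega

theorem lcpLength_spec (l m : List α) : ∃ c l' m', l = c ++ l' ∧ m = c ++ m' ∧
    c.length = lcpLength l m := by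
  induction l generalizing m with
  | nil => exact ⟨[], [], m, by simp⟩
  | cons a l ih =>
    cases m with
    | nil => exact ⟨[], a :: l, [], by simp⟩
    | cons b m =>
      by_cases hab : a = b
      · obtain ⟨c, l', m', h1, h2, h3⟩ := ih m
        exact ⟨a :: c, l', m', by simp [h1], by simp [hab, ← h2], by simp [lcpLength, hab, h3]⟩
      · exact ⟨[], a :: l, b :: m, by simp [lcpLength, hab]⟩

theorem lcpLength_self (l : List α) : lcpLength l l = l.length := by
  induction l with
  | nil => simp
  | cons a l ih => simp [lcpLength, ih]

end lcpLength

/-! ### The Bass–Serre tree of an HNN extension -/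

namespace HNNLength

open HNNExtension HNNExtension.NormalWord

variable {G : Type} [Group G] {A B : Subgroup G} (φ : A ≃* B) (d : TransversalPair G A B)

/-- The letters of the normal form of `g`, read from the right. Two elements have the same
`path` exactly when they define the same coset of `G` in `G \ HNNExtension G A B φ`, and the lists
which occur are the vertices of the Bass–Serre tree: removing the last entry of a list gives the
neighbour in the direction of the root. -/
noncomputable def path (g : HNNExtension G A B φ) : List (ℤˣ × G) :=
  (g • (empty : NormalWord d)).toList.reverse

/-- The number of occurrences of the stable letter in the normal form. -/
noncomputable def hlen (g : HNNExtension G A B φ) : ℕ := (path φ d g).length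

theorem path_of_mul (a : G) (g : HNNExtension G A B φ) :
    path φ d (of a * g) = path φ d g := by
  simp [path, mul_smul, of_smul_eq_smul]

theorem path_t_mul (u : ℤˣ) (g : HNNExtension G A B φ) :
    ∃ x, path φ d (t ^ (u : ℤ) * g) = path φ d g ++ [x] ∨
      path φ d g = path φ d (t ^ (u : ℤ) * g) ++ [x] := by
  simp only [path, mul_smul, t_pow_smul_eq_unitsSMul]
  generalize g • (empty : NormalWord d) = w
  rw [unitsSMul]
  split_ifs with h
  · cases w using consRecOn with
    | ofGroup => simp [Cancels] at h
    | cons g u' w h1 h2 => exact ⟨_, Or.inr (by simp [unitsSMulWithCancel]; rfl)⟩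
  · exact ⟨_, Or.inl (by simp; rfl)⟩

theorem path_eq_nil (g : HNNExtension G A B φ) : path φ d g = [] ↔ g ∈ of.range := by
  constructor
  · obtain ⟨w, rfl⟩ := (equiv φ d).symm.surjective g
    simp only [path, equiv, Equiv.coe_fn_symm_mk, prod_smul_empty, List.reverse_eq_nil_iff]
    exact fun h => ⟨w.head, by simp [ReducedWord.prod, h]⟩
  · rintro ⟨a, rfl⟩
    simp [path, of_smul_eq_smul]

theorem path_concat {g : HNNExtension G A B φ} {l : List (ℤˣ × G)} {x : ℤˣ × G}
    (h : path φ d g = l ++ [x]) : ∃ (a : G) (u : ℤˣ) (g' : HNNExtension G A B φ),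
    g = of a * t ^ (u : ℤ) * g' ∧ path φ d g' = l := by
  obtain ⟨w, rfl⟩ := (equiv φ d).symm.surjective g
  simp only [path, equiv, Equiv.coe_fn_symm_mk, prod_smul_empty] at h ⊢
  cases w using consRecOn with
  | ofGroup => simp at h
  | cons a u w h1 h2 =>
    simp only [cons_toList, List.reverse_cons] at h
    refine ⟨a, u, w.prod φ, by rw [prod_cons]; simp [mul_assoc], ?_⟩
    rw [prod_smul_empty]
    exact (List.append_inj' h rfl).1

theorem of_of_path_eq {g h : HNNExtension G A B φ} (e : path φ d g = path φ d h) :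
    ∃ a, g = of a * h := by
  obtain ⟨w, rfl⟩ := (equiv φ d).symm.surjective g
  obtain ⟨v, rfl⟩ := (equiv φ d).symm.surjective h
  simp only [path, equiv, Equiv.coe_fn_symm_mk, prod_smul_empty, List.reverse_inj] at e ⊢
  exact ⟨w.head * v.head⁻¹, by simp [ReducedWord.prod, e]⟩

/-- Induction on the number of stable letters, peeling them off from the left. -/
theorem normal_induction {P : HNNExtension G A B φ → Prop} (h0 : ∀ a, P (of a))
    (hs : ∀ a (u : ℤˣ) g, hlen φ d (of a * t ^ (u : ℤ) * g) = hlen φ d g + 1 → P g →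
      P (of a * t ^ (u : ℤ) * g)) (g : HNNExtension G A B φ) : P g := by
  induction hn : hlen φ d g generalizing g with
  | zero =>
    obtain ⟨a, rfl⟩ := (path_eq_nil φ d g).1 (List.length_eq_zero_iff.1 hn)
    exact h0 a
  | succ n ih =>
    have hne : path φ d g ≠ [] := by
      intro h; simp [hlen, h] at hn
    obtain ⟨a, u, g', rfl, h'⟩ := path_concat φ d (List.dropLast_append_getLast hne).symm
    have h3 : hlen φ d g' = n := by
      rw [hlen, h', List.length_dropLast]
      unfold hlen at hn
      omega
    exact hs _ _ _ (by rw [hn, h3]) (ih _ h3)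

theorem hlen_of (a : G) : hlen φ d (of a) = 0 := by
  rw [hlen, (path_eq_nil φ d _).2 ⟨a, rfl⟩]; rfl

theorem hlen_of_mul (a : G) (g : HNNExtension G A B φ) : hlen φ d (of a * g) = hlen φ d g := by
  rw [hlen, path_of_mul]; rfl

theorem hlen_t_mul (u : ℤˣ) (g : HNNExtension G A B φ) :
    hlen φ d (t ^ (u : ℤ) * g) = hlen φ d g + 1 ∨ hlen φ d g = hlen φ d (t ^ (u : ℤ) * g) + 1 := by
  obtain ⟨x, h | h⟩ := path_t_mul φ d u g
  · left; simp [hlen, h]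
  · right
    have := congrArg List.length h
    simpa [hlen] using this

theorem hlen_mul_le (g h : HNNExtension G A B φ) :
    hlen φ d (g * h) ≤ hlen φ d g + hlen φ d h := by
  induction g using normal_induction φ d with
  | h0 a => rw [hlen_of_mul]; omega
  | hs a u g e ih =>
    rw [e, mul_assoc, mul_assoc, hlen_of_mul]
    have := hlen_t_mul φ d u (g * h)
    omega

theorem hlen_t (u : ℤˣ) : hlen φ d (t ^ (u : ℤ)) = 1 := by
  have h := hlen_t_mul φ d u 1
  have h1 : hlen φ d 1 = 0 := by simpa using hlen_of φ d 1
  rw [mul_one] at h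
  omega

theorem hlen_inv_le (g : HNNExtension G A B φ) : hlen φ d g⁻¹ ≤ hlen φ d g := by
  induction g using normal_induction φ d with
  | h0 a => rw [← map_inv, hlen_of, hlen_of]
  | hs a u g e ih =>
    rw [e, mul_inv_rev, mul_inv_rev]
    have h1 := hlen_mul_le φ d g⁻¹ ((t ^ (u : ℤ))⁻¹ * (of a)⁻¹)
    have h2 := hlen_mul_le φ d (t ^ (u : ℤ))⁻¹ (of a)⁻¹
    have h3 : hlen φ d (t ^ (u : ℤ) : HNNExtension G A B φ)⁻¹ = 1 := by
      have := hlen_t φ d (-u)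
      rwa [Units.val_neg, zpow_neg] at this
    have h4 : hlen φ d (of a : HNNExtension G A B φ)⁻¹ = 0 := by rw [← map_inv, hlen_of]
    omega

theorem hlen_inv (g : HNNExtension G A B φ) : hlen φ d g⁻¹ = hlen φ d g := by
  have h1 := hlen_inv_le φ d g
  have h2 := hlen_inv_le φ d g⁻¹
  rw [inv_inv] at h2
  omega

section dist

open Classical

/-- The vertices of the tree given by `k * g` and `g` are at distance at most `hlen k`. -/
theorem path_dist_le (k g : HNNExtension G A B φ) :
    (path φ d (k * g)).length + (path φ d g).length ≤
      hlen φ d k + 2 * lcpLength (path φ d (k * g)) (path φ d g) := by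
  induction k using normal_induction φ d with
  | h0 a => rw [path_of_mul, lcpLength_self, hlen_of]; omega
  | hs a u k e ih =>
    rw [e, mul_assoc, mul_assoc, path_of_mul]
    obtain ⟨x, h | h⟩ := path_t_mul φ d u (k * g)
    · have := lcpLength_concat (path φ d (k * g)) (path φ d g) x
      rw [h, List.length_append, List.length_singleton]
      omega
    · have := lcpLength_concat (path φ d (t ^ (u : ℤ) * (k * g))) (path φ d g) x
      rw [← h] at this
      have h' := congrArg List.length h
      rw [List.length_append, List.length_singleton] at h'
      omega

/-- Two vertices are joined by a path through any common ancestor `c`. -/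
theorem hlen_mul_inv_le (r s c : List (ℤˣ × G)) (x y : HNNExtension G A B φ)
    (hx : path φ d x = c ++ r) (hy : path φ d y = c ++ s) :
    hlen φ d (x * y⁻¹) ≤ r.length + s.length := by
  induction r using List.reverseRecOn generalizing x with
  | nil =>
    induction s using List.reverseRecOn generalizing y with
    | nil =>
      obtain ⟨a, rfl⟩ := of_of_path_eq φ d (hx.trans hy.symm)
      simp [hlen_of]
    | append_singleton s z ih =>
      rw [← List.append_assoc] at hy
      obtain ⟨a, u, y', rfl, h'⟩ := path_concat φ d hy
      have h1 := ih y' h'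
      rw [← hlen_inv] at h1 ⊢
      rw [mul_inv_rev, inv_inv] at h1 ⊢
      rw [mul_assoc, mul_assoc, hlen_of_mul]
      have := hlen_t_mul φ d u (y' * x⁻¹)
      simp only [List.length_append, List.length_singleton]
      omega
  | append_singleton r z ih =>
    rw [← List.append_assoc] at hx
    obtain ⟨a, u, x', rfl, h'⟩ := path_concat φ d hx
    have h1 := ih x' h'
    rw [mul_assoc, mul_assoc, hlen_of_mul]
    have := hlen_t_mul φ d u (x' * y⁻¹)
    simp only [List.length_append, List.length_singleton]
    omega

/-- The distance of two vertices is computed by their last common ancestor. -/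
theorem hlen_mul_inv (x y : HNNExtension G A B φ) :
    hlen φ d (x * y⁻¹) + 2 * lcpLength (path φ d x) (path φ d y) =
      hlen φ d x + hlen φ d y := by
  obtain ⟨c, r, s, h1, h2, h3⟩ := lcpLength_spec (path φ d x) (path φ d y)
  have h4 := hlen_mul_inv_le φ d r s c x y h1 h2
  have h5 := path_dist_le φ d (x * y⁻¹) y
  rw [inv_mul_cancel_right] at h5
  have h6 := congrArg List.length h1
  have h7 := congrArg List.length h2
  rw [List.length_append] at h6 h7
  unfold hlen at *
  omega

end dist

/-- The number of stable letters in the normal form is the length function of the action of an HNN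
extension on its Bass–Serre tree. -/
theorem isTreeLength {p : G} (φ : Subgroup.zpowers p ≃* Subgroup.zpowers p)
    (d : TransversalPair G (Subgroup.zpowers p) (Subgroup.zpowers p)) :
    IsTreeLength (of : G →* HNNExtension G _ _ φ) t (of p) (hlen φ d) where
  zero_iff g := by rw [hlen, List.length_eq_zero_iff, path_eq_nil]
  inv := hlen_inv φ d
  hyp g h k := by
    classical
    have h1 := hlen_mul_inv φ d g⁻¹ h⁻¹
    have h2 := hlen_mul_inv φ d h⁻¹ k⁻¹
    have h3 := hlen_mul_inv φ d g⁻¹ k⁻¹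
    simp only [inv_inv, hlen_inv] at h1 h2 h3
    have h4 := lcpLength_ultra (path φ d g⁻¹) (path φ d h⁻¹) (path φ d k⁻¹)
    omega
  parity := by
    refine ⟨HNNExtension.lift 1 (Multiplicative.ofAdd 1) (by simp), fun g => ?_, fun g hg => ?_⟩
    · induction g using normal_induction φ d with
      | h0 a => simp [hlen_of]
      | hs a u g e ih =>
        rw [e]
        simp only [map_mul, lift_of, map_zpow, lift_t, MonoidHom.one_apply, one_mul, toAdd_mul,
          toAdd_zpow, toAdd_ofAdd, Nat.cast_add, Nat.cast_one]
        rcases Int.units_eq_one_or u with rfl | rfl <;> simp <;> omega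
    · obtain ⟨a, rfl⟩ := (path_eq_nil φ d g).1 (List.length_eq_zero_iff.1 hg)
      simp
  len_t := hlen_t φ d
  peel g hg := by
    induction g using normal_induction φ d with
    | h0 a => simp [hlen_of] at hg
    | hs a u g e _ => exact ⟨a, u, by rw [inv_mul_cancel_left, e]⟩
  edge h u hh := by
    by_contra hc
    have hts : ∀ u : ℤˣ, toSubgroup (Subgroup.zpowers p) (Subgroup.zpowers p) u =
        Subgroup.zpowers p := by
      intro u; simp [toSubgroup]
    have hc' : h ∉ Subgroup.zpowers p := by
      intro hm
      obtain ⟨n, rfl⟩ := Subgroup.mem_zpowers_iff.1 hm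
      exact hc (by rw [map_zpow]; exact Subgroup.zpow_mem_zpowers _ _)
    let w : ReducedWord G (Subgroup.zpowers p) (Subgroup.zpowers p) :=
      { head := 1
        toList := [(-u, h), (u, 1)]
        chain := by simp [hts, hc'] }
    have hw : w.prod φ = (t ^ (u : ℤ))⁻¹ * of h * t ^ (u : ℤ) := by
      simp [w, ReducedWord.prod]
    have := ReducedWord.toList_eq_nil_of_mem_of_range φ w (by
      rw [hw]; exact (path_eq_nil φ d _).1 (List.length_eq_zero_iff.1 hh))
    simp [w] at this

end HNNLength

/-! ### Right-angled Artin groups -/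

namespace RAAG

variable {V : Type} {Γ : SimpleGraph V}

/-- The canonical generator of a vertex. -/
def gen (Γ : SimpleGraph V) (v : V) : RAAG Γ := PresentedGroup.of v

theorem gen_commute {u v : V} (h : Γ.Adj u v) : Commute (gen Γ u) (gen Γ v) := by
  have h1 : PresentedGroup.mk (raagRels Γ) _ = 1 := PresentedGroup.one_of_mem ⟨u, v, h, rfl⟩
  simp only [map_mul, map_inv] at h1
  exact commutatorElement_eq_one_iff_commute.1 h1

/-- The homomorphism out of a right-angled Artin group with given values on the generators. -/
def lift {H : Type} [Group H] (f : V → H) (hf : ∀ u v, Γ.Adj u v → Commute (f u) (f v)) :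
    RAAG Γ →* H :=
  PresentedGroup.toGroup (f := f) (by
    rintro r ⟨u, v, h, rfl⟩
    simp only [map_mul, map_inv, FreeGroup.lift_apply_of]
    exact commutatorElement_eq_one_iff_commute.2 (hf u v h))

@[simp] theorem lift_gen {H : Type} [Group H] (f : V → H)
    (hf : ∀ u v, Γ.Adj u v → Commute (f u) (f v)) (v : V) : lift f hf (gen Γ v) = f v :=
  PresentedGroup.toGroup.of _

theorem hom_ext {H : Type} [Group H] {f g : RAAG Γ →* H} (h : ∀ v, f (gen Γ v) = g (gen Γ v)) :
    f = g := PresentedGroup.ext h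

open Classical in
/-- The exponent sum of the generator `v`. -/
noncomputable def expSum (Γ : SimpleGraph V) (v : V) : RAAG Γ →* Multiplicative ℤ :=
  lift (fun u => if u = v then Multiplicative.ofAdd 1 else 1) fun _ _ _ => Commute.all _ _

theorem expSum_self (v : V) (n : ℤ) : expSum Γ v (gen Γ v ^ n) = Multiplicative.ofAdd n := by
  rw [map_zpow, expSum, lift_gen, if_pos rfl, ← ofAdd_zsmul]; simp

theorem expSum_ne {u v : V} (h : u ≠ v) (n : ℤ) : expSum Γ v (gen Γ u ^ n) = 1 := by
  rw [map_zpow, expSum, lift_gen, if_neg h, one_zpow]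

/-- The subgroup generated by the star of a vertex. -/
def starSubgroup (Γ : SimpleGraph V) (v : V) : Subgroup (RAAG Γ) :=
  Subgroup.closure {x | ∃ u, (u = v ∨ Γ.Adj v u) ∧ x = gen Γ u}

theorem gen_mem_star {v u : V} (h : u = v ∨ Γ.Adj v u) : gen Γ u ∈ starSubgroup Γ v :=
  Subgroup.subset_closure ⟨u, h, rfl⟩

theorem closure_commute {H : Type} [Group H] {S : Set H} (hS : ∀ x ∈ S, ∀ y ∈ S, Commute x y)
    {a b : H} (ha : a ∈ Subgroup.closure S) (hb : b ∈ Subgroup.closure S) : Commute a b := by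
  have h1 : Subgroup.closure S ≤ Subgroup.centralizer (S : Set H) := by
    rw [Subgroup.closure_le]
    intro x hx
    exact Subgroup.mem_centralizer_iff.2 fun y hy => hS y hy x hx
  have h2 := Subgroup.closure_le_centralizer_centralizer S hb
  exact Subgroup.mem_centralizer_iff.1 h2 a (h1 ha)

theorem star_commute {v : V} (hv : ∀ a b, Γ.Adj v a → Γ.Adj v b → a = b) {g h : RAAG Γ}
    (hg : g ∈ starSubgroup Γ v) (hh : h ∈ starSubgroup Γ v) : Commute g h := by
  refine closure_commute ?_ hg hh
  rintro _ ⟨a, ha, rfl⟩ _ ⟨b, hb, rfl⟩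
  rcases ha with rfl | ha <;> rcases hb with rfl | hb
  · exact Commute.refl _
  · exact gen_commute hb
  · exact (gen_commute ha).symm
  · rw [hv a b ha hb]

theorem star_eq_top_of_subsingleton [Subsingleton V] (v : V) (g : RAAG Γ) :
    g ∈ starSubgroup Γ v :=
  PresentedGroup.generated_by _ _ (fun u => gen_mem_star (Or.inl (Subsingleton.elim u v))) g

/-! ### Removing a leaf -/

section leaf

variable {l p : V} (hl : ∀ u, Γ.Adj l u ↔ u = p)

/-- The inclusion of the subgroup generated by all vertices but `l`. -/
def incl (Γ : SimpleGraph V) (l : V) : RAAG (Γ.induce {l}ᶜ) →* RAAG Γ :=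
  lift (fun v => gen Γ v) fun _ _ h => gen_commute h

@[simp] theorem incl_gen (v : ({l}ᶜ : Set V)) :
    incl Γ l (gen _ v) = gen Γ (v : V) := lift_gen _ _ _

open Classical in
/-- The retraction killing `l`. -/
noncomputable def retr (Γ : SimpleGraph V) (l : V) : RAAG Γ →* RAAG (Γ.induce {l}ᶜ) :=
  lift (fun v => if h : v = l then 1 else gen _ ⟨v, h⟩) fun u v h => by
    by_cases hu : u = l
    · simp [hu]
    · by_cases hv : v = l
      · simp [hv]
      · simp only [hu, hv, dite_false]
        exact gen_commute h

theorem incl_injective (Γ : SimpleGraph V) (l : V) : Function.Injective (incl Γ l) := by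
  have h : (retr Γ l).comp (incl Γ l) = MonoidHom.id _ := by
    apply hom_ext
    intro v
    have hv : (v : V) ≠ l := v.2
    simp [retr, hv]
  intro a b hab
  have := congrArg (retr Γ l) hab
  rwa [← MonoidHom.comp_apply, ← MonoidHom.comp_apply, h] at this

include hl in
/-- If `l` is a leaf attached to `p`, then `RAAG Γ` is an HNN extension of the group of `Γ - l` with
stable letter `l` centralizing `⟨p⟩`, so it acts on a tree with edge stabilizers conjugate to
`⟨p⟩`. -/
theorem exists_isTreeLength :
    ∃ len, IsTreeLength (incl Γ l) (gen Γ l) (gen Γ p) len := by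
  classical
  have hpl : p ≠ l := ((hl p).2 rfl).ne'
  let G := RAAG (Γ.induce ({l}ᶜ : Set V))
  let p' : G := gen _ ⟨p, hpl⟩
  let E := HNNExtension G (Subgroup.zpowers p') (Subgroup.zpowers p') (MulEquiv.refl _)
  have htp : Commute (HNNExtension.t : E) (HNNExtension.of p') :=
    HNNExtension.t_mul_of (φ := MulEquiv.refl _) ⟨p', Subgroup.mem_zpowers p'⟩
  let f : RAAG Γ →* E :=
    lift (fun v => if h : v = l then HNNExtension.t else HNNExtension.of (gen _ ⟨v, h⟩))
      fun u v h => by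
        by_cases hu : u = l
        · have hv : v = p := (hl v).1 (hu ▸ h)
          subst hv
          simpa [hu, hpl] using htp
        · by_cases hv : v = l
          · have hu' : u = p := (hl u).1 (hv ▸ h.symm)
            subst hu'
            simpa [hv, hpl] using htp.symm
          · simp only [hu, hv, dite_false]
            have hc : Commute (gen (Γ.induce ({l}ᶜ : Set V)) ⟨u, hu⟩) (gen _ ⟨v, hv⟩) :=
              gen_commute h
            exact hc.map HNNExtension.of
  have hincl : incl Γ l p' = gen Γ p := incl_gen _
  let b : E →* RAAG Γ := HNNExtension.lift (incl Γ l) (gen Γ l) (by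
    rintro ⟨a, ha⟩
    obtain ⟨n, rfl⟩ := Subgroup.mem_zpowers_iff.1 ha
    have : Commute (gen Γ l) (gen Γ p) := gen_commute ((hl p).2 rfl)
    simpa [hincl] using (this.zpow_right n).eq)
  have hb : b.comp f = MonoidHom.id _ := by
    apply hom_ext
    intro v
    by_cases hv : v = l
    · subst hv
      simpa [b, f] using HNNExtension.lift_t _ _ _
    · simpa [b, f, hv] using (HNNExtension.lift_of _ _ _ _).trans (incl_gen ⟨v, hv⟩)
  have hf : Function.Injective f := by
    intro x y hxy
    have := congrArg b hxy
    rwa [← MonoidHom.comp_apply, ← MonoidHom.comp_apply, hb] at this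
  obtain ⟨d⟩ := HNNExtension.NormalWord.TransversalPair.nonempty G
    (Subgroup.zpowers p') (Subgroup.zpowers p')
  refine ⟨_, (HNNLength.isTreeLength (MulEquiv.refl _) d).comap f hf (fun g => ?_) ?_ ?_⟩
  · have : f.comp (incl Γ l) = HNNExtension.of := by
      apply hom_ext
      intro v
      have hv : (v : V) ≠ l := v.2
      simp [f, hv]
    exact DFunLike.congr_fun this g
  · simp [f]
  · simp [f, hpl, p']

end leaf

/-- A nontrivial finite tree has a leaf `l` different from a given vertex; `p` is its neighbour. -/
theorem exists_leaf [Finite V] [Nontrivial V] (hΓ : Γ.IsTree) (v : V) :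
    ∃ l p, l ≠ v ∧ (∀ u, Γ.Adj l u ↔ u = p) ∧ (Γ.induce {l}ᶜ).IsTree := by
  classical
  have := Fintype.ofFinite V
  have key : ∀ l, l ≠ v → Γ.degree l = 1 →
      ∃ l p, l ≠ v ∧ (∀ u, Γ.Adj l u ↔ u = p) ∧ (Γ.induce {l}ᶜ).IsTree := by
    intro l hlv hd
    obtain ⟨p, hp, hu⟩ := SimpleGraph.degree_eq_one_iff_existsUnique_adj.1 hd
    refine ⟨l, p, hlv, fun u => ⟨fun h => hu u h, fun h => h ▸ hp⟩, ?_, hΓ.isAcyclic.induce _⟩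
    exact hΓ.connected.induce_compl_singleton_of_degree_eq_one hd
  obtain ⟨a, b, hab, ha, hb⟩ := hΓ.exists_ne_and_degree_eq_one
  by_cases h : a = v
  · exact key b (fun h' => hab (h.trans h'.symm)) hb
  · exact key a h ha

theorem card_compl_lt [Fintype V] (l : V) [Fintype ({l}ᶜ : Set V)] :
    Fintype.card ({l}ᶜ : Set V) < Fintype.card V :=
  Fintype.card_subtype_lt (x := l) (by simp)

/-! ### Centralizers -/

/-- The centralizer of a nonzero power of a generator is generated by the star of that vertex. -/
theorem mem_star_of_commute [Fintype V] (hΓ : Γ.IsTree) (v : V) {k : ℤ}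
    (hk : k ≠ 0) {g : RAAG Γ} (hg : Commute g (gen Γ v ^ k)) : g ∈ starSubgroup Γ v := by
  induction hn : Fintype.card V using Nat.strong_induction_on generalizing V with
  | _ n ih =>
  subst hn
  rcases subsingleton_or_nontrivial V with hs | hs
  · exact star_eq_top_of_subsingleton v g
  classical
  obtain ⟨l, p, hlv, hl, hT⟩ := exists_leaf hΓ v
  obtain ⟨len, H⟩ := exists_isTreeLength hl
  have base : ∀ g : RAAG Γ, Commute g (gen Γ v ^ k) → len g = 0 → g ∈ starSubgroup Γ v := by
    intro g hg h0
    obtain ⟨g', rfl⟩ := (H.zero_iff g).1 h0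
    have h1 : Commute g' (gen _ ⟨v, hlv.symm⟩ ^ k) := by
      apply incl_injective Γ l
      simpa using hg.eq
    have h2 := ih _ (card_compl_lt l) hT _ h1 rfl
    have h3 : starSubgroup (Γ.induce {l}ᶜ) ⟨v, hlv.symm⟩ ≤ (starSubgroup Γ v).comap (incl Γ l) := by
      rw [starSubgroup, Subgroup.closure_le]
      rintro _ ⟨u, hu, rfl⟩
      change incl Γ l _ ∈ starSubgroup Γ v
      rw [incl_gen]
      refine gen_mem_star (hu.imp (fun h => by rw [h]) fun h => h)
    exact h3 h2
  have lv : len (gen Γ v ^ k) = 0 :=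
    (H.zero_iff _).2 ⟨gen _ ⟨v, hlv.symm⟩ ^ k, by simp⟩
  have lg : ∀ g : RAAG Γ, Commute g (gen Γ v ^ k) → len (g⁻¹ * gen Γ v ^ k * g) = 0 := by
    intro g hg
    rw [mul_assoc, ← hg.eq, inv_mul_cancel_left, lv]
  by_cases hvp : v = p
  · subst hvp
    -- peel off the stable letters of `g` one at a time, using that they commute with `v`
    induction hm : len g generalizing g with
    | zero => exact base g hg hm
    | succ m ihm =>
      obtain ⟨h, u, hx⟩ := H.peel g (by omega)
      obtain ⟨m', hm'⟩ := Subgroup.mem_zpowers_iff.1 (H.fix_edge lv (lg g hg) hx)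
      have e := congrArg (expSum Γ v) hm'
      rw [map_mul, map_mul, map_inv, mul_comm, mul_inv_cancel_left, expSum_self, expSum_self] at e
      rw [Multiplicative.ofAdd.injective e] at hm'
      have hch : Commute (incl Γ l h) (gen Γ v ^ k) := by
        rw [Commute, SemiconjBy]
        conv_lhs => rw [hm']
        group
      have hlc : Commute (gen Γ l) (gen Γ v) := gen_commute ((hl v).2 rfl)
      have hx' : Commute (incl Γ l h * gen Γ l ^ (u : ℤ)) (gen Γ v ^ k) :=
        hch.mul_left ((hlc.zpow_left _).zpow_right _)
      have h2 := ihm (hx'.inv_left.mul_left hg) (by omega)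
      have h3 : incl Γ l h * gen Γ l ^ (u : ℤ) ∈ starSubgroup Γ v :=
        mul_mem (base _ hch (H.len_ι h))
          (zpow_mem (gen_mem_star (Or.inr ((hl v).2 rfl).symm)) _)
      simpa only [mul_inv_cancel_left] using mul_mem h3 h2
  · refine base g hg ?_
    by_contra h0
    obtain ⟨h, hh⟩ := H.exists_conj (Nat.pos_of_ne_zero h0)
    obtain ⟨m, hm⟩ := Subgroup.mem_zpowers_iff.1 (hh _ lv (lg g hg))
    have e := congrArg (expSum Γ v) hm
    rw [map_mul, map_mul, map_inv, mul_comm, mul_inv_cancel_left, expSum_self,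
      expSum_ne (Ne.symm hvp)] at e
    exact hk (Multiplicative.ofAdd.injective e).symm

/-- A nontrivial element with a non-abelian centralizer is conjugate to a power of a generator. By
induction on the tree: for the action given by a leaf, hyperbolic elements have abelian centralizers,
and the centralizer of an elliptic element fixing no edge lies in a vertex group. -/
theorem isConj_of_not_commute [Fintype V] (hΓ : Γ.IsTree) {w a b : RAAG Γ} (hw : w ≠ 1)
    (ha : Commute a w) (hb : Commute b w) (hab : ¬ Commute a b) :
    ∃ (v : V) (k : ℤ), k ≠ 0 ∧ IsConj (gen Γ v ^ k) w := by
  induction hn : Fintype.card V using Nat.strong_induction_on generalizing V with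
  | _ n ih =>
  subst hn
  obtain ⟨v⟩ := hΓ.connected.nonempty
  rcases subsingleton_or_nontrivial V with hs | hs
  · exact absurd (star_commute (v := v) (fun a b _ _ => Subsingleton.elim a b)
      (star_eq_top_of_subsingleton v a) (star_eq_top_of_subsingleton v b)) hab
  classical
  obtain ⟨l, p, hlv, hl, hT⟩ := exists_leaf hΓ v
  obtain ⟨len, H⟩ := exists_isTreeLength hl
  obtain ⟨g, hg⟩ := H.exists_cyc_reduced w
  have conj : ∀ {x y : RAAG Γ}, Commute (g⁻¹ * x * g) (g⁻¹ * y * g) ↔ Commute x y := by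
    intro x y
    simpa using Commute.conj_iff (a := x) (b := y) g⁻¹
  rw [← conj] at ha hb hab
  have hw1 : g⁻¹ * w * g ≠ 1 := by
    intro h
    apply hw
    have : w = g * (g⁻¹ * w * g) * g⁻¹ := by group
    rw [this, h]; simp
  have hc : IsConj (g⁻¹ * w * g) w := isConj_iff.2 ⟨g, by group⟩
  generalize g⁻¹ * w * g = w1 at *
  generalize g⁻¹ * a * g = a1 at *
  generalize g⁻¹ * b * g = b1 at *
  suffices ∃ (v : V) (k : ℤ), k ≠ 0 ∧ IsConj (gen Γ v ^ k) w1 by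
    obtain ⟨v, k, hk, h⟩ := this
    exact ⟨v, k, hk, h.trans hc⟩
  rcases hg with h0 | ⟨h0, h2⟩
  · by_cases hp : ∃ h : RAAG (Γ.induce ({l}ᶜ : Set V)),
        (incl Γ l h)⁻¹ * w1 * incl Γ l h ∈ Subgroup.zpowers (gen Γ p)
    · obtain ⟨h, hh⟩ := hp
      obtain ⟨k, hk⟩ := Subgroup.mem_zpowers_iff.1 hh
      have e : w1 = incl Γ l h * gen Γ p ^ k * (incl Γ l h)⁻¹ := by rw [hk]; group
      refine ⟨p, k, ?_, isConj_iff.2 ⟨_, e.symm⟩⟩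
      rintro rfl
      exact hw1 (by rw [e]; simp)
    -- `w1` fixes no edge at the base vertex, so its centralizer fixes the base vertex
    · have fix : ∀ x, Commute x w1 → x ∈ (incl Γ l).range := by
        intro x hx
        rw [← H.zero_iff]
        by_contra hx0
        obtain ⟨h, hh⟩ := H.exists_conj (Nat.pos_of_ne_zero hx0)
        exact hp ⟨h, hh w1 h0 (by rw [mul_assoc, ← hx.eq, inv_mul_cancel_left, h0])⟩
      obtain ⟨w', rfl⟩ := (H.zero_iff _).1 h0
      obtain ⟨a', rfl⟩ := fix _ ha
      obtain ⟨b', rfl⟩ := fix _ hb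
      have inj := incl_injective Γ l
      have hcom : ∀ x y, Commute (incl Γ l x) (incl Γ l y) ↔ Commute x y := fun x y =>
        ⟨fun h => inj (by simpa using h.eq), fun h => h.map _⟩
      rw [hcom] at ha hb hab
      obtain ⟨v, k, hk, h⟩ := ih _ (card_compl_lt l) hT (w := w') (by rintro rfl; simp at hw1)
        ha hb hab rfl
      exact ⟨v, k, hk, by simpa using (incl Γ l).map_isConj h⟩
  · refine absurd (H.commute_of_hyperbolic (expSum Γ p) (fun n hn => ?_) h0 h2 ha hb) hab
    rw [expSum_self] at hn
    exact Multiplicative.ofAdd.injective hn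

theorem not_adj_of_adj (hΓ : Γ.IsTree) {v a b : V} (ha : Γ.Adj v a) (hb : Γ.Adj v b) :
    ¬ Γ.Adj a b := by
  intro hab
  refine hΓ.isAcyclic (.cons ha (.cons hab (.cons hb.symm .nil))) ?_
  simp [SimpleGraph.Walk.isCycle_def, SimpleGraph.Walk.isTrail_def, ha.ne, ha.ne', hb.ne, hb.ne',
    hab.ne]

/-- The centralizer of a nonzero power of a generator is `ℤ × F` with `F` free on the
neighbours of the vertex. -/
theorem exists_hom [Fintype V] (hΓ : Γ.IsTree) (v : V) {n : ℕ}
    (e : Fin n ≃ Γ.neighborSet v) {k : ℤ} (hk : k ≠ 0) :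
    ∃ Φ : Multiplicative ℤ × FreeGroup (Fin n) →* RAAG Γ, Function.Injective Φ ∧
      ∀ g, g ∈ Φ.range ↔ Commute g (gen Γ v ^ k) := by
  classical
  let F : FreeGroup (Fin n) →* RAAG Γ := FreeGroup.lift fun i => gen Γ (e i : V)
  let Z : Multiplicative ℤ →* RAAG Γ := zpowersHom _ (gen Γ v)
  have hF : ∀ x, Commute (F x) (gen Γ v) := by
    intro x
    induction x using FreeGroup.induction_on with
    | C1 => simp
    | of i => simpa [F] using (gen_commute (e i).2).symm
    | inv_of i h => rw [map_inv]; exact h.inv_left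
    | mul x y hx hy => rw [map_mul]; exact hx.mul_left hy
  have hZF : ∀ m x, Commute (Z m) (F x) := fun m x => by
    simpa [Z] using ((hF x).symm.zpow_left m.toAdd)
  let Φ := MonoidHom.noncommCoprod Z F hZF
  -- the retraction onto the star of `v`, a left inverse of `Φ`
  let ρ : RAAG Γ →* Multiplicative ℤ × FreeGroup (Fin n) :=
    lift (fun u => if u = v then (Multiplicative.ofAdd 1, 1)
      else if h : Γ.Adj v u then (1, FreeGroup.of (e.symm ⟨u, h⟩)) else 1) fun a b hab => by
        by_cases ha : a = v
        · have hbv : b ≠ v := by rintro rfl; exact hab.ne ha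
          by_cases hb : Γ.Adj v b <;> simp [ha, hbv, hb, Commute, SemiconjBy]
        · by_cases ha' : Γ.Adj v a
          · by_cases hb : b = v
            · simp [ha, ha', hb, Commute, SemiconjBy]
            · have hb' : ¬ Γ.Adj v b := fun h => not_adj_of_adj hΓ ha' h hab
              simp [hb, hb']
          · simp [ha, ha']
  have hρF : ρ.comp F = MonoidHom.inr _ _ := by
    ext i : 1
    have h1 : Γ.Adj v (e i) := (e i).2
    have h2 : (⟨e i, h1⟩ : Γ.neighborSet v) = e i := rfl
    simp only [MonoidHom.comp_apply, F, FreeGroup.lift_apply_of, ρ, lift_gen, h1.ne', if_false,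
      dif_pos h1, h2, Equiv.symm_apply_apply, MonoidHom.inr_apply]
  have hρZ : ∀ m, ρ (Z m) = (m, 1) := by
    intro m
    simp only [Z, zpowersHom_apply, map_zpow, ρ, lift_gen, if_pos]
    ext <;> simp
  have hρ : ∀ x, ρ (Φ x) = x := by
    rintro ⟨m, x⟩
    have := DFunLike.congr_fun hρF x
    simp only [MonoidHom.comp_apply, MonoidHom.inr_apply] at this
    simp [Φ, MonoidHom.noncommCoprod_apply, hρZ, this]
  refine ⟨Φ, Function.LeftInverse.injective hρ, fun g => ⟨?_, fun hg => ?_⟩⟩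
  · rintro ⟨⟨m, x⟩, rfl⟩
    refine Commute.zpow_right ?_ k
    simp only [Φ, MonoidHom.noncommCoprod_apply]
    refine Commute.mul_left ?_ (hF x)
    simp [Z]
  · have h1 : starSubgroup Γ v ≤ Φ.range := by
      rw [starSubgroup, Subgroup.closure_le]
      rintro _ ⟨u, rfl | hu, rfl⟩
      · exact ⟨(Multiplicative.ofAdd 1, 1), by simp [Φ, Z]⟩
      · exact ⟨(1, FreeGroup.of (e.symm ⟨u, hu⟩)), by simp [Φ, F]⟩
    exact h1 (mem_star_of_commute hΓ v hk hg)

/-- Non-adjacent generators are mapped to non-commuting transpositions, other generators to `1`. -/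
theorem not_commute_gen {a b : V} (hab : a ≠ b) (h : ¬ Γ.Adj a b) :
    ¬ Commute (gen Γ a) (gen Γ b) := by
  classical
  let f : RAAG Γ →* Equiv.Perm (Fin 3) :=
    lift (fun u => if u = a then Equiv.swap 0 1 else if u = b then Equiv.swap 1 2 else 1)
      fun u v huv => by
        by_cases h1 : u = a <;> by_cases h2 : v = a <;> by_cases h3 : u = b <;>
          by_cases h4 : v = b <;> simp_all [SimpleGraph.adj_comm]
  intro hc
  have h1 : Commute (f (gen Γ a)) (f (gen Γ b)) := hc.map f
  simp only [f, lift_gen, if_pos, if_neg hab.symm] at h1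
  revert h1
  unfold Commute SemiconjBy
  decide

end RAAG

theorem stmt12 {V : Type} [Fintype V] (Γ : SimpleGraph V) (hΓ : Γ.IsTree)
    (w : RAAG Γ) (hw : w ≠ 1) :
    ((¬ ∀ a ∈ Subgroup.centralizer {w}, ∀ b ∈ Subgroup.centralizer {w},
        a * b = b * a) ↔
      ∃ v : V, (∃ a b : V, a ≠ b ∧ Γ.Adj v a ∧ Γ.Adj v b) ∧
        ∃ n : ℤ, n ≠ 0 ∧ IsConj ((PresentedGroup.of v : RAAG Γ) ^ n) w) ∧
    ((¬ ∀ a ∈ Subgroup.centralizer {w}, ∀ b ∈ Subgroup.centralizer {w},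
        a * b = b * a) →
      ∃ n : ℕ, 2 ≤ n ∧
        Nonempty (↥(Subgroup.centralizer {w}) ≃*
          Multiplicative ℤ × FreeGroup (Fin n))) := by
  classical
  have mem : ∀ x : RAAG Γ, x ∈ Subgroup.centralizer {w} ↔ Commute x w := fun x => by
    rw [Subgroup.mem_centralizer_singleton_iff]; rfl
  have conj : ∀ g x y : RAAG Γ, Commute (g * x * g⁻¹) (g * y * g⁻¹) ↔ Commute x y :=
    fun g x y => Commute.conj_iff g
  have fwd : (¬ ∀ a ∈ Subgroup.centralizer {w}, ∀ b ∈ Subgroup.centralizer {w},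
        a * b = b * a) → ∃ v : V, (∃ a b : V, a ≠ b ∧ Γ.Adj v a ∧ Γ.Adj v b) ∧
        ∃ n : ℤ, n ≠ 0 ∧ IsConj ((PresentedGroup.of v : RAAG Γ) ^ n) w := by
    intro h
    push Not at h
    obtain ⟨a, ha, b, hb, hab⟩ := h
    rw [mem] at ha hb
    obtain ⟨v, k, hk, hc⟩ := RAAG.isConj_of_not_commute hΓ hw ha hb hab
    refine ⟨v, ?_, k, hk, hc⟩
    by_contra hv
    push Not at hv
    obtain ⟨c, rfl⟩ := isConj_iff.1 hc
    apply hab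
    have ea : a = c * (c⁻¹ * a * c) * c⁻¹ := by group
    have eb : b = c * (c⁻¹ * b * c) * c⁻¹ := by group
    rw [ea, conj] at ha
    rw [eb, conj] at hb
    change Commute a b
    rw [ea, eb, conj]
    exact RAAG.star_commute (fun x y hx hy => by_contra fun hxy => hv x y hxy hx hy)
      (RAAG.mem_star_of_commute hΓ v hk ha) (RAAG.mem_star_of_commute hΓ v hk hb)
  refine ⟨⟨fwd, ?_⟩, fun h => ?_⟩
  · rintro ⟨v, ⟨a, b, hab, ha, hb⟩, k, hk, hc⟩ h
    obtain ⟨c, rfl⟩ := isConj_iff.1 hc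
    have star : ∀ u, Γ.Adj v u → c * RAAG.gen Γ u * c⁻¹ ∈
        Subgroup.centralizer {c * (PresentedGroup.of v : RAAG Γ) ^ k * c⁻¹} := fun u hu => by
      rw [mem, conj]
      exact (RAAG.gen_commute hu).symm.zpow_right k
    have h1 : Commute _ _ := h _ (star a ha) _ (star b hb)
    rw [conj] at h1
    exact RAAG.not_commute_gen hab (RAAG.not_adj_of_adj hΓ ha hb) h1
  · obtain ⟨v, ⟨a, b, hab, ha, hb⟩, k, hk, hc⟩ := fwd h
    obtain ⟨c, rfl⟩ := isConj_iff.1 hc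
    refine ⟨Fintype.card (Γ.neighborSet v), ?_, ?_⟩
    · exact Fintype.one_lt_card_iff.2 ⟨⟨a, ha⟩, ⟨b, hb⟩, fun e => hab (congrArg Subtype.val e)⟩
    · obtain ⟨Φ, hΦ, hr⟩ := RAAG.exists_hom hΓ v (Fintype.equivFin (Γ.neighborSet v)).symm hk
      let Ψ := (MulAut.conj c).toMonoidHom.comp Φ
      have hΨ : Function.Injective Ψ := (MulAut.conj c).injective.comp hΦ
      have e : Ψ.range = Subgroup.centralizer {c * (PresentedGroup.of v : RAAG Γ) ^ k * c⁻¹} := by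
        ext g
        have eg : g = c * (c⁻¹ * g * c) * c⁻¹ := by group
        rw [mem]
        conv_rhs => rw [eg, conj]
        refine Iff.trans ?_ (hr _)
        constructor
        · rintro ⟨x, rfl⟩
          exact ⟨x, by simp [Ψ, mul_assoc]⟩
        · rintro ⟨x, hx⟩
          exact ⟨x, by rw [eg, ← hx]; simp [Ψ]⟩
      exact ⟨((MonoidHom.ofInjective hΨ).trans (MulEquiv.subgroupCongr e)).symm⟩
end

section
/- Let Γ be a finite simplicial graph and v a vertex of Γ. Then the centralizer of the canonical generator v in the right-angled Artin group G(Γ) is the subgroup generated by v together with all vertices adjacent to v (the star of v). In particular, if Γ is a finite tree and v has degree n, then this centralizer is isomorphic to ℤ × F_n, where F_n is the free group of rank n; thus it is isomorphic to ℤ² when v is a leaf and contains a non-abelian free group otherwise. -/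
/-! ### Centralizers of basis elements in free groups -/

open FreeGroup in
/-- In a free group, the elements commuting with a basis element are its powers. Stripping leading
letters `x` or `x⁻¹` shortens the word. If `w` has another first letter, then `x w` is reduced; as
`w x` represents the same element and has the same length, it is the same word, so `w` starts with
`x` after all. -/
lemma mem_zpowers_of_commute {X : Type*} (x : X) (f : FreeGroup X)
    (h : f * of x = of x * f) : f ∈ Subgroup.zpowers (of x) := by
  classical
  induction hn : f.toWord.length using Nat.strong_induction_on generalizing f with
  | _ n ih =>
    rcases hw : f.toWord with _ | ⟨⟨y, b⟩, w⟩
    · rw [toWord_eq_nil_iff] at hw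
      simp [hw, one_mem]
    by_cases hy : y = x
    · subst hy
      have hf : f = mk [(y, b)] * mk w := by
        rw [mul_mk, ← mk_toWord (x := f), hw]; rfl
      have hz : mk [(y, b)] ∈ Subgroup.zpowers (of y) := by
        cases b
        · exact Subgroup.inv_mem _ (Subgroup.mem_zpowers (of y))
        · exact Subgroup.mem_zpowers (of y)
      have hc : mk [(y, b)] * of y = of y * mk [(y, b)] := by
        obtain ⟨k, hk⟩ := Subgroup.mem_zpowers_iff.1 hz
        rw [← hk]
        exact ((Commute.refl (of y)).zpow_left k)
      have hlt : (mk w).toWord.length < n := by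
        have := norm_mk_le (L₁ := w)
        rw [hw] at hn
        simp only [List.length_cons] at hn
        unfold FreeGroup.norm at this
        omega
      have hm := ih _ hlt (mk w) (by
        rw [hf, mul_assoc, ← mul_assoc (of y), ← hc, mul_assoc] at h
        exact mul_left_cancel h) rfl
      rw [hf]
      exact mul_mem hz hm
    · exfalso
      have h1 : (of x * f).toWord = (x, true) :: f.toWord := by
        rw [toWord_mul, toWord_of, List.singleton_append, reduce.cons, reduce_toWord, hw]
        simp [Ne.symm hy]
      have h2 := toWord_mul_sublist f (of x)
      rw [h, h1, toWord_of] at h2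
      have h3 := h2.eq_of_length (by simp)
      rw [hw] at h3
      simp at h3
      exact hy h3.1.1.symm

/-! ### The graph group inside a semidirect product -/

namespace StarCentralizer

variable {V : Type} (Γ : SimpleGraph V)

lemma adj_commute {u v : V} (h : Γ.Adj u v) :
    (PresentedGroup.of u : RAAG Γ) * PresentedGroup.of v =
      PresentedGroup.of v * PresentedGroup.of u := by
  have : PresentedGroup.mk (raagRels Γ) _ = 1 := PresentedGroup.one_of_mem ⟨u, v, h, rfl⟩
  simp only [map_mul, map_inv] at this
  exact mul_inv_eq_iff_eq_mul.1 (mul_inv_eq_one.1 this)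

/-- The universal property of the graph group: vertex images that commute along edges define a
homomorphism. -/
def lift {H : Type*} [Group H] (f : V → H) (hf : ∀ u w, Γ.Adj u w → f u * f w = f w * f u) :
    RAAG Γ →* H :=
  PresentedGroup.toGroup (f := f) (by
    rintro r ⟨u, w, h, rfl⟩
    simp [hf u w h])

@[simp] lemma lift_of {H : Type*} [Group H] (f : V → H)
    (hf : ∀ u w, Γ.Adj u w → f u * f w = f w * f u) (u : V) :
    lift Γ f hf (PresentedGroup.of u) = f u :=
  PresentedGroup.toGroup.of _

/-- The subgroup generated by the link of `v`, i.e. by the vertices adjacent to `v`. -/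
def link (v : V) : Subgroup (RAAG Γ) :=
  Subgroup.closure ((fun u => (PresentedGroup.of u : RAAG Γ)) '' Γ.neighborSet v)

lemma link_commute (v : V) {l : RAAG Γ} (hl : l ∈ link Γ v) :
    l * PresentedGroup.of v = PresentedGroup.of v * l := by
  have : link Γ v ≤ Subgroup.centralizer {(PresentedGroup.of v : RAAG Γ)} := by
    refine (Subgroup.closure_le _).2 ?_
    rintro _ ⟨u, hu, rfl⟩
    exact Subgroup.mem_centralizer_singleton_iff.2 (adj_commute Γ hu).symm
  exact Subgroup.mem_centralizer_singleton_iff.1 (this hl)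

/-- The graph group permutes the basis of the free group on the cosets of the link subgroup. -/
def act (v : V) : RAAG Γ →* MulAut (FreeGroup (RAAG Γ ⧸ link Γ v)) where
  toFun a := FreeGroup.freeGroupCongr (MulAction.toPerm a)
  map_one' := by
    apply MulEquiv.toMonoidHom_injective
    ext x
    simp
  map_mul' a b := by
    apply MulEquiv.toMonoidHom_injective
    ext x
    simp [mul_smul]

lemma act_of (v : V) (a : RAAG Γ) (x : RAAG Γ ⧸ link Γ v) :
    act Γ v a (FreeGroup.of x) = FreeGroup.of (a • x) := by
  simp [act]

/-- The free group on the cosets of the link subgroup, extended by the graph group. -/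
abbrev Semi (v : V) : Type := FreeGroup (RAAG Γ ⧸ link Γ v) ⋊[act Γ v] RAAG Γ

/-- The coset of the identity, as a basis element of the free group. -/
def base (v : V) : FreeGroup (RAAG Γ ⧸ link Γ v) := FreeGroup.of ((1 : RAAG Γ) : RAAG Γ ⧸ link Γ v)

lemma base_comm (v u : V) (h : Γ.Adj v u) :
    (SemidirectProduct.inl (base Γ v) : Semi Γ v) * SemidirectProduct.inr (PresentedGroup.of u) =
      SemidirectProduct.inr (PresentedGroup.of u) * SemidirectProduct.inl (base Γ v) := by
  have hu : (PresentedGroup.of u : RAAG Γ) ∈ link Γ v :=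
    Subgroup.subset_closure ⟨u, h, rfl⟩
  have : act Γ v (PresentedGroup.of u) (base Γ v) = base Γ v := by
    rw [base, act_of]
    congr 1
    rw [MulAction.Quotient.smul_coe, QuotientGroup.eq]
    simpa using hu
  ext <;> simp [this]

open Classical in
/-- The embedding of the graph group that sends `v` to the basis element `base` and every other
vertex to itself in the right factor. It is injective by `ofSemi_toSemi`. -/
noncomputable def toSemi (v : V) : RAAG Γ →* Semi Γ v :=
  lift Γ (fun u => if u = v then SemidirectProduct.inl (base Γ v)
      else SemidirectProduct.inr (PresentedGroup.of u)) (by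
    intro u w h
    by_cases hu : u = v
    · subst hu
      have : w ≠ u := h.ne'
      simpa [this] using base_comm Γ u w h
    · by_cases hw : w = v
      · subst hw
        simpa [hu] using (base_comm Γ w u h.symm).symm
      · simp only [hu, hw, if_false, ← map_mul, adj_commute Γ h])

/-- The homomorphism on the free group that sends the coset `bL` to `b v b⁻¹`. -/
def conjHom (v : V) : FreeGroup (RAAG Γ ⧸ link Γ v) →* RAAG Γ :=
  FreeGroup.lift (fun x => Quotient.liftOn' x (fun b => b * PresentedGroup.of v * b⁻¹) (by
    intro a b hab
    have h := link_commute Γ v (QuotientGroup.leftRel_apply.1 hab)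
    have h' : PresentedGroup.of v = a⁻¹ * b * PresentedGroup.of v * (a⁻¹ * b)⁻¹ := by
      rw [h]; group
    change a * _ * a⁻¹ = b * _ * b⁻¹
    conv_lhs => rw [h']
    group))

lemma conjHom_of (v : V) (b : RAAG Γ) :
    conjHom Γ v (FreeGroup.of (b : RAAG Γ ⧸ link Γ v)) = b * PresentedGroup.of v * b⁻¹ := by
  simp only [conjHom, FreeGroup.lift_apply_of]
  rfl

/-- The left inverse of `toSemi`. -/
def ofSemi (v : V) : Semi Γ v →* RAAG Γ :=
  SemidirectProduct.lift (conjHom Γ v) (MonoidHom.id _) (by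
    intro a
    ext x
    induction x using QuotientGroup.induction_on with
    | H b =>
      simp only [MonoidHom.comp_apply, MulEquiv.coe_toMonoidHom, act_of,
        MulAction.Quotient.smul_coe, conjHom_of, MonoidHom.id_apply, MulAut.conj_apply, smul_eq_mul]
      group)

lemma ofSemi_toSemi (v : V) (a : RAAG Γ) : ofSemi Γ v (toSemi Γ v a) = a := by
  have : (ofSemi Γ v).comp (toSemi Γ v) = MonoidHom.id _ := by
    apply PresentedGroup.ext
    intro u
    by_cases hu : u = v
    · subst hu
      simp [toSemi, ofSemi, base, conjHom_of]
    · simp [toSemi, ofSemi, hu]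
  exact DFunLike.congr_fun this a

/-! ### The centralizer of a vertex -/

lemma of_mem_closure_star (v : V) : (PresentedGroup.of v : RAAG Γ) ∈ Subgroup.closure
    ((fun u => (PresentedGroup.of u : RAAG Γ)) '' insert v (Γ.neighborSet v)) :=
  Subgroup.subset_closure ⟨v, Set.mem_insert _ _, rfl⟩

theorem centralizer_eq (v : V) :
    Subgroup.centralizer {(PresentedGroup.of v : RAAG Γ)} =
      Subgroup.closure
        ((fun u => (PresentedGroup.of u : RAAG Γ)) '' insert v (Γ.neighborSet v)) := by
  classical
  apply le_antisymm
  · intro a ha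
    rw [Subgroup.mem_centralizer_singleton_iff] at ha
    have hv : toSemi Γ v (PresentedGroup.of v) = SemidirectProduct.inl (base Γ v) := by
      simp [toSemi]
    have h := congrArg (toSemi Γ v) ha
    rw [map_mul, map_mul, hv] at h
    have ha' := ofSemi_toSemi Γ v a
    generalize toSemi Γ v a = p at h ha'
    have hl := congrArg SemidirectProduct.left h
    simp only [SemidirectProduct.mul_left, SemidirectProduct.left_inl,
      SemidirectProduct.right_inl, map_one, MulAut.one_apply] at hl
    rw [base, act_of] at hl
    -- Exponent sums of the basis element `base` on both sides.
    have hsum := congrArg (FreeGroup.lift (fun y : RAAG Γ ⧸ link Γ v =>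
      if y = ((1 : RAAG Γ) : RAAG Γ ⧸ link Γ v) then Multiplicative.ofAdd (1 : ℤ) else 1)) hl
    rw [map_mul, map_mul, mul_comm, mul_left_inj] at hsum
    have hcos : p.right • ((1 : RAAG Γ) : RAAG Γ ⧸ link Γ v) =
        ((1 : RAAG Γ) : RAAG Γ ⧸ link Γ v) := by
      by_contra hne
      simp only [FreeGroup.lift_apply_of, if_neg hne, if_true] at hsum
      exact absurd hsum (by decide)
    have hb : p.right ∈ link Γ v := by
      rw [MulAction.Quotient.smul_coe, eq_comm, QuotientGroup.eq] at hcos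
      simpa using hcos
    rw [hcos] at hl
    obtain ⟨k, hk⟩ := Subgroup.mem_zpowers_iff.1 (mem_zpowers_of_commute _ _ hl)
    rw [← SemidirectProduct.inl_left_mul_inr_right p, map_mul, ← hk] at ha'
    simp only [ofSemi, SemidirectProduct.lift_inl, SemidirectProduct.lift_inr, map_zpow,
      conjHom_of, MonoidHom.id_apply, one_mul, inv_one, mul_one] at ha'
    rw [← ha']
    refine mul_mem (zpow_mem (of_mem_closure_star Γ v) _) ?_
    exact Subgroup.closure_mono (Set.image_mono (Set.subset_insert _ _)) hb
  · refine (Subgroup.closure_le _).2 ?_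
    rintro _ ⟨u, hu, rfl⟩
    rcases hu with rfl | hu
    · exact Subgroup.mem_centralizer_singleton_iff.2 rfl
    · exact Subgroup.mem_centralizer_singleton_iff.2 (adj_commute Γ hu).symm

/-! ### Stars without adjacent neighbours -/

/-- The natural map from the free group on the neighbours of `v`. -/
def nbrHom (v : V) : FreeGroup (Γ.neighborSet v) →* RAAG Γ :=
  FreeGroup.lift (fun u => PresentedGroup.of u.1)

lemma nbrHom_mem (v : V) (w : FreeGroup (Γ.neighborSet v)) : nbrHom Γ v w ∈ link Γ v := by
  have : (nbrHom Γ v).range ≤ link Γ v := by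
    rw [nbrHom, FreeGroup.range_lift_eq_closure]
    refine Subgroup.closure_mono ?_
    rintro _ ⟨u, rfl⟩
    exact ⟨u.1, u.2, rfl⟩
  exact this ⟨w, rfl⟩

/-- The natural map from `ℤ × FreeGroup (neighbours of v)`, sending the generator of `ℤ` to `v`. -/
def starHom (v : V) : Multiplicative ℤ × FreeGroup (Γ.neighborSet v) →* RAAG Γ :=
  MonoidHom.noncommCoprod (zpowersHom (RAAG Γ) (PresentedGroup.of v)) (nbrHom Γ v) (by
    intro n w
    rw [zpowersHom_apply]
    exact (show Commute _ _ from (link_commute Γ v (nbrHom_mem Γ v w)).symm).zpow_left _)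

lemma starHom_range (v : V) :
    (starHom Γ v).range = Subgroup.centralizer {(PresentedGroup.of v : RAAG Γ)} := by
  rw [centralizer_eq]
  apply le_antisymm
  · rintro _ ⟨⟨n, w⟩, rfl⟩
    simp only [starHom, MonoidHom.noncommCoprod_apply, zpowersHom_apply]
    refine mul_mem (zpow_mem (of_mem_closure_star Γ v) _) ?_
    exact Subgroup.closure_mono (Set.image_mono (Set.subset_insert _ _)) (nbrHom_mem Γ v w)
  · refine (Subgroup.closure_le _).2 ?_
    rintro _ ⟨u, hu, rfl⟩
    rcases hu with rfl | hu
    · exact ⟨(Multiplicative.ofAdd 1, 1), by simp [starHom]⟩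
    · exact ⟨(1, FreeGroup.of ⟨u, hu⟩), by simp [starHom, nbrHom]⟩

open Classical in
/-- If no two neighbours of `v` are adjacent, killing the vertices outside the star of `v` is a left
inverse of `starHom`. -/
lemma starHom_injective (v : V)
    (h3 : ∀ u w, Γ.Adj v u → Γ.Adj v w → ¬ Γ.Adj u w) : Function.Injective (starHom Γ v) := by
  let r : V → Multiplicative ℤ × FreeGroup (Γ.neighborSet v) := fun u =>
    if u = v then (Multiplicative.ofAdd 1, 1)
    else if h : Γ.Adj v u then (1, FreeGroup.of ⟨u, h⟩) else 1
  have hr : ∀ u w, Γ.Adj u w → r u * r w = r w * r u := by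
    intro u w h
    by_cases hu : u = v
    · subst hu
      have : w ≠ u := h.ne'
      simp [r, this, h]
    by_cases hw : w = v
    · subst hw
      simp [r, hu, h.symm]
    by_cases hu' : Γ.Adj v u
    · have hw' : ¬ Γ.Adj v w := fun hw' => h3 u w hu' hw' h
      simp [r, hw, hw']
    · simp [r, hu, hu']
  have hcomp : (lift Γ r hr).comp (starHom Γ v) = MonoidHom.id _ := by
    refine MonoidHom.ext fun p => ?_
    obtain ⟨n, w⟩ := p
    have h1 : (lift Γ r hr) (PresentedGroup.of v) = (Multiplicative.ofAdd 1, 1) := by simp [r]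
    have h2 : (lift Γ r hr).comp (nbrHom Γ v) = MonoidHom.inr _ _ := by
      ext u
      · have : u.1 ≠ v := (show Γ.Adj v u.1 from u.2).ne'
        have hu : Γ.Adj v u.1 := u.2
        simp [nbrHom, r, this, hu]
      · have : u.1 ≠ v := (show Γ.Adj v u.1 from u.2).ne'
        have hu : Γ.Adj v u.1 := u.2
        simp [nbrHom, r, this, hu]
    have h2' : lift Γ r hr (nbrHom Γ v w) = (1, w) := DFunLike.congr_fun h2 w
    simp only [starHom, MonoidHom.comp_apply, MonoidHom.noncommCoprod_apply, zpowersHom_apply,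
      map_mul, map_zpow, h1, h2', MonoidHom.id_apply]
    ext
    · simp [← ofAdd_zsmul]
    · simp
  intro a b hab
  have := congrArg (lift Γ r hr) hab
  rwa [← MonoidHom.comp_apply, ← MonoidHom.comp_apply, hcomp] at this

lemma tree_no_triangle (hT : Γ.IsAcyclic) (v u w : V) (hu : Γ.Adj v u) (hw : Γ.Adj v w) :
    ¬ Γ.Adj u w := by
  classical
  intro h
  exact hT.cliqueFree le_rfl {v, u, w} (SimpleGraph.is3Clique_triple_iff.2 ⟨hu, hw, h⟩)

end StarCentralizer

theorem stmt13 {V : Type} [Fintype V] [DecidableEq V] (Γ : SimpleGraph V)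
    [DecidableRel Γ.Adj] (v : V) :
    Subgroup.centralizer {(PresentedGroup.of v : RAAG Γ)} =
      Subgroup.closure
        ((fun u => (PresentedGroup.of u : RAAG Γ)) '' insert v (Γ.neighborSet v)) ∧
    (Γ.IsTree →
      Nonempty (↥(Subgroup.centralizer {(PresentedGroup.of v : RAAG Γ)}) ≃*
        Multiplicative ℤ × FreeGroup (Fin (Γ.degree v))) ∧
      (Γ.degree v = 1 →
        Nonempty (↥(Subgroup.centralizer {(PresentedGroup.of v : RAAG Γ)}) ≃*
          Multiplicative ℤ × Multiplicative ℤ)) ∧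
      (1 < Γ.degree v →
        ∃ H : Subgroup (RAAG Γ),
          H ≤ Subgroup.centralizer {(PresentedGroup.of v : RAAG Γ)} ∧
          ∃ S : Type, Nontrivial S ∧ Nonempty (↥H ≃* FreeGroup S))) := by
  refine ⟨StarCentralizer.centralizer_eq Γ v, fun hT => ?_⟩
  have hinj := StarCentralizer.starHom_injective Γ v
    (StarCentralizer.tree_no_triangle Γ hT.isAcyclic v)
  let e : Γ.neighborSet v ≃ Fin (Γ.degree v) :=
    Fintype.equivFinOfCardEq (Γ.card_neighborSet_eq_degree v)
  let E : ↥(Subgroup.centralizer {(PresentedGroup.of v : RAAG Γ)}) ≃*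
      Multiplicative ℤ × FreeGroup (Fin (Γ.degree v)) :=
    ((MonoidHom.ofInjective hinj).trans
      (MulEquiv.subgroupCongr (StarCentralizer.starHom_range Γ v))).symm.trans
      ((MulEquiv.refl _).prodCongr (FreeGroup.freeGroupCongr e))
  refine ⟨⟨E⟩, fun h1 => ?_, fun h1 => ?_⟩
  · have : Unique (Fin (Γ.degree v)) := by rw [h1]; infer_instance
    exact ⟨E.trans ((MulEquiv.refl _).prodCongr (FreeGroup.mulEquivIntOfUnique))⟩
  · have hn : Function.Injective (StarCentralizer.nbrHom Γ v) := by
      intro a b hab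
      have : StarCentralizer.starHom Γ v (1, a) = StarCentralizer.starHom Γ v (1, b) := by
        simp [StarCentralizer.starHom, hab]
      exact (Prod.mk.inj (hinj this)).2
    refine ⟨(StarCentralizer.nbrHom Γ v).range, ?_, Γ.neighborSet v, ?_,
      ⟨(MonoidHom.ofInjective hn).symm⟩⟩
    · rintro _ ⟨w, rfl⟩
      exact Subgroup.mem_centralizer_singleton_iff.2
        (StarCentralizer.link_commute Γ v (StarCentralizer.nbrHom_mem Γ v w))
    · rw [← Fintype.one_lt_card_iff_nontrivial, Γ.card_neighborSet_eq_degree v]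
      exact h1
end

section
/- Let Δ be a finite tree with at least two vertices. Then the extension graph Δ^e of the right-angled Artin group G(Δ) is a tree, i.e., it is connected and contains no cycles. -/
/-- The vertices of the extension graph of a RAAG: the elements conjugate to
a canonical generator. -/
abbrev ExtVert {V : Type} (Γ : SimpleGraph V) : Type :=
  {g : RAAG Γ // ∃ v : V, IsConj (PresentedGroup.of v : RAAG Γ) g}

/-- The extension graph of a RAAG: vertices are the elements conjugate to a
canonical generator; two distinct vertices are adjacent iff they commute. -/
def extGraph {V : Type} (Γ : SimpleGraph V) : SimpleGraph (ExtVert Γ) :=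
  SimpleGraph.fromRel (fun a b => (a : RAAG Γ) * b = b * a)


namespace ExtTree

variable {V : Type} {Γ : SimpleGraph V}

/-- The canonical generator of the right-angled Artin group attached to a vertex. -/
abbrev gen (Γ : SimpleGraph V) (v : V) : RAAG Γ := PresentedGroup.of v

/-! ### Homomorphisms out of a right-angled Artin group -/

theorem gen_induction {P : RAAG Γ → Prop} (h1 : P 1) (hg : ∀ v, P (gen Γ v))
    (hm : ∀ g h, P g → P h → P (g * h)) (hi : ∀ g, P g → P g⁻¹) (g : RAAG Γ) : P g := by
  have hmem : g ∈ Subgroup.closure (Set.range (gen Γ)) := by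
    rw [PresentedGroup.closure_range_of]; trivial
  induction hmem using Subgroup.closure_induction with
  | mem x hx => obtain ⟨v, rfl⟩ := hx; exact hg v
  | one => exact h1
  | mul x y _ _ hx hy => exact hm x y hx hy
  | inv x _ hx => exact hi x hx

/-- The universal property: commutation along edges suffices to define a homomorphism. -/
theorem exists_hom {K : Type*} [Group K] (f : V → K)
    (hf : ∀ u v, Γ.Adj u v → f u * f v = f v * f u) :
    ∃ φ : RAAG Γ →* K, ∀ v, φ (gen Γ v) = f v := by
  have h : ∀ r ∈ raagRels Γ, FreeGroup.lift f r = 1 := by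
    rintro r ⟨u, v, huv, rfl⟩
    simp [hf u v huv]
  exact ⟨PresentedGroup.toGroup h, fun v => PresentedGroup.toGroup.of h⟩

theorem gen_comm {u v : V} (h : Γ.Adj u v) : gen Γ u * gen Γ v = gen Γ v * gen Γ u := by
  have h1 : PresentedGroup.mk (raagRels Γ) (FreeGroup.of u * FreeGroup.of v *
      (FreeGroup.of u)⁻¹ * (FreeGroup.of v)⁻¹) = 1 :=
    PresentedGroup.one_of_mem ⟨u, v, h, rfl⟩
  simp only [map_mul, map_inv] at h1
  change gen Γ u * gen Γ v * (gen Γ u)⁻¹ * (gen Γ v)⁻¹ = 1 at h1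
  rw [mul_inv_eq_one, mul_inv_eq_iff_eq_mul] at h1
  exact h1

open Classical in
/-- The exponent sum of a single generator. -/
theorem exists_expo (Γ : SimpleGraph V) (s : V) : ∃ χ : RAAG Γ →* Multiplicative ℤ,
    χ (gen Γ s) = Multiplicative.ofAdd 1 ∧ ∀ t, t ≠ s → χ (gen Γ t) = 1 := by
  obtain ⟨χ, hχ⟩ := exists_hom (Γ := Γ)
    (fun t => if t = s then Multiplicative.ofAdd (1 : ℤ) else 1) (fun _ _ _ => mul_comm _ _)
  exact ⟨χ, by simp [hχ], fun t ht => by simp [hχ, ht]⟩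

theorem gen_ne_one (s : V) : gen Γ s ≠ 1 := by
  obtain ⟨χ, h1, -⟩ := exists_expo Γ s
  intro h
  rw [h, map_one] at h1
  exact absurd (congrArg Multiplicative.toAdd h1) (by simp)

/-- Conjugate generators are equal, as seen in the abelianization. -/
theorem eq_of_conj {s t : V} {x y : RAAG Γ} (h : x⁻¹ * gen Γ s * x = y⁻¹ * gen Γ t * y) :
    s = t := by
  by_contra hne
  obtain ⟨χ, h1, h2⟩ := exists_expo Γ s
  have := congrArg χ h
  simp only [map_mul, map_inv, h1, h2 t (Ne.symm hne), mul_comm _ (χ x), mul_comm _ (χ y),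
    mul_inv_cancel_left, mul_inv_cancel, mul_one] at this
  exact absurd (congrArg Multiplicative.toAdd this) (by simp)

/-- Cocycles for the left translation action, with values in `ℤ`, may be prescribed on
generators as long as the prescription is compatible with every commutation relation. The cocycle
is read off from the action on `G × ℤ` by `v • (x, m) = (v x, m + c₀ v x)`. -/
theorem exists_cocycle (c₀ : V → RAAG Γ → ℤ)
    (h : ∀ u v, Γ.Adj u v → ∀ x,
      c₀ u (gen Γ v * x) + c₀ v x = c₀ v (gen Γ u * x) + c₀ u x) :
    ∃ c : RAAG Γ → RAAG Γ → ℤ, (∀ v x, c (gen Γ v) x = c₀ v x) ∧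
      ∀ g k x, c (g * k) x = c g (k * x) + c k x := by
  let f : V → Equiv.Perm (RAAG Γ × ℤ) := fun v =>
    { toFun := fun p => (gen Γ v * p.1, p.2 + c₀ v p.1)
      invFun := fun p => ((gen Γ v)⁻¹ * p.1, p.2 - c₀ v ((gen Γ v)⁻¹ * p.1))
      left_inv := fun p => by simp
      right_inv := fun p => by simp }
  obtain ⟨ρ, hρ⟩ := exists_hom (Γ := Γ) f (by
    intro u v huv
    ext p
    · change gen Γ u * (gen Γ v * p.1) = gen Γ v * (gen Γ u * p.1)
      rw [← mul_assoc, gen_comm huv, mul_assoc]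
    · change p.2 + c₀ v p.1 + c₀ u (gen Γ v * p.1) = p.2 + c₀ u p.1 + c₀ v (gen Γ u * p.1)
      linarith [h u v huv p.1])
  have key : ∀ g : RAAG Γ, ∀ x m, ρ g (x, m) = (g * x, m + (ρ g (x, 0)).2) := by
    intro g
    induction g using gen_induction with
    | h1 => simp
    | hg v => intro x m; rw [hρ]; simp [f]
    | hm g k hg hk =>
      intro x m
      rw [map_mul, Equiv.Perm.mul_apply, Equiv.Perm.mul_apply, hk x m, hg, hk x 0, hg _ (0 + _)]
      simp [mul_assoc, add_assoc]
    | hi g hg =>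
      intro x m
      have e : ∀ m, ρ g⁻¹ (x, m) = (g⁻¹ * x, m - (ρ g (g⁻¹ * x, 0)).2) := by
        intro m
        rw [map_inv, Equiv.Perm.inv_eq_iff_eq, hg]
        simp
      rw [e m, e 0]
      simp [sub_eq_add_neg]
  refine ⟨fun g x => (ρ g (x, 0)).2, fun v x => by simp [hρ, f], fun g k x => ?_⟩
  change (ρ (g * k) (x, 0)).2 = _
  rw [map_mul, Equiv.Perm.mul_apply, key k x 0, key g]
  simp [add_comm]

/-! ### Centralizers of generators -/

/-- The subgroup generated by the star of `s`. -/
def starSub (Γ : SimpleGraph V) (s : V) : Subgroup (RAAG Γ) :=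
  Subgroup.closure {g | ∃ t, (t = s ∨ Γ.Adj s t) ∧ gen Γ t = g}

/-- The subgroup generated by the link of `s`. -/
def linkSub (Γ : SimpleGraph V) (s : V) : Subgroup (RAAG Γ) :=
  Subgroup.closure {g | ∃ t, Γ.Adj s t ∧ gen Γ t = g}

theorem linkSub_le (s : V) : linkSub Γ s ≤ starSub Γ s :=
  Subgroup.closure_mono fun _ ⟨t, ht, h⟩ => ⟨t, Or.inr ht, h⟩

theorem zpow_mem_linkSub {s : V} {n : ℤ} (h : gen Γ s ^ n ∈ linkSub Γ s) : n = 0 := by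
  obtain ⟨χ, h1, h2⟩ := exists_expo Γ s
  have hle : linkSub Γ s ≤ χ.ker := by
    refine (Subgroup.closure_le _).2 ?_
    rintro _ ⟨t, ht, rfl⟩
    exact h2 t ht.ne'
  have := MonoidHom.mem_ker.1 (hle h)
  rw [map_zpow, h1, ← ofAdd_zsmul] at this
  simpa using congrArg Multiplicative.toAdd this

theorem commute_of_mem_star {s : V} {g : RAAG Γ} (h : g ∈ starSub Γ s) :
    g * gen Γ s = gen Γ s * g := by
  have hle : starSub Γ s ≤ Subgroup.centralizer {gen Γ s} := by
    refine (Subgroup.closure_le _).2 ?_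
    rintro _ ⟨t, ht, rfl⟩
    rw [SetLike.mem_coe, Subgroup.mem_centralizer_singleton_iff]
    rcases ht with rfl | ht
    · rfl
    · exact (gen_comm ht).symm
  exact Subgroup.mem_centralizer_singleton_iff.1 (hle h)

/-- A function on `ℤ` whose only jump is one by `-1`, between `0` and `1`, cannot have finite
support. -/
theorem no_single_jump (φ : ℤ → ℤ) (hfin : ∀ᶠ n in Filter.cofinite, φ n = 0)
    (hstep : ∀ n, φ (n + 1) - φ n = if n = 0 then -1 else 0) : False := by
  have hpos : ∀ k : ℕ, φ (1 + k) = φ 1 := by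
    intro k
    induction k with
    | zero => simp
    | succ k ih =>
      have := hstep (1 + k)
      rw [if_neg (by omega)] at this
      push_cast
      rw [← add_assoc]
      omega
  have hneg : ∀ k : ℕ, φ (-k) = φ 0 := by
    intro k
    induction k with
    | zero => simp
    | succ k ih =>
      have := hstep (-(k + 1 : ℕ))
      rw [if_neg (by omega)] at this
      have e : (-((k + 1 : ℕ) : ℤ) + 1) = -k := by push_cast; ring
      rw [e] at this
      omega
  rw [Int.cofinite_eq, Filter.eventually_sup] at hfin
  obtain ⟨⟨a, ha⟩, ⟨b, hb⟩⟩ := hfin.imp Filter.eventually_atBot.1 Filter.eventually_atTop.1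
  have h0 := hneg a.natAbs
  rw [ha _ (by omega)] at h0
  have h1 := hpos b.natAbs
  rw [hb _ (by omega)] at h1
  have := hstep 0
  simp [← h0, ← h1] at this

open Classical in
theorem mem_star_of_commute {s : V} {g : RAAG Γ} (hg : g * gen Γ s = gen Γ s * g) :
    g ∈ starSub Γ s := by
  let e : RAAG Γ → ℤ := fun x => if x ∈ linkSub Γ s then 1 else 0
  have he : ∀ t, Γ.Adj s t → ∀ x, e (gen Γ t * x) = e x := by
    intro t ht x
    have : gen Γ t ∈ linkSub Γ s := Subgroup.subset_closure ⟨t, ht, rfl⟩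
    simp only [e, Subgroup.mul_mem_cancel_left _ this]
  obtain ⟨c, hc, hmul⟩ := exists_cocycle (Γ := Γ) (fun t x => if t = s then e x else 0) (by
    intro u v huv x
    rcases eq_or_ne u s with rfl | hu
    · simp [huv.ne', he v huv]
    · rcases eq_or_ne v s with rfl | hv
      · simp [hu, he u huv.symm]
      · simp [hu, hv])
  have hs : ∀ x, c (gen Γ s) x = e x := by simp [hc]
  have hone : ∀ x, c 1 x = 0 := fun x => by simpa using hmul 1 1 x
  -- Each `s`-letter of `k` contributes at most one value of `n`, as no nonzero power of `s`
  -- lies in the link subgroup.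
  have hfin : ∀ k y : RAAG Γ, ∀ᶠ n : ℤ in Filter.cofinite, c k (y * gen Γ s ^ n) = 0 := by
    intro k
    induction k using gen_induction with
    | h1 => intro y; simp [hone]
    | hg v =>
      intro y
      rcases eq_or_ne v s with rfl | hv
      · rw [Filter.eventually_cofinite]
        refine Set.Subsingleton.finite ?_
        intro m hm n hn
        simp only [hs, Set.mem_ofPred_eq, e, ite_eq_right_iff, one_ne_zero, imp_false,
          not_not] at hm hn
        have := Subgroup.mul_mem _ (Subgroup.inv_mem _ hn) hm
        have e1 : (y * gen Γ v ^ n)⁻¹ * (y * gen Γ v ^ m) = gen Γ v ^ (m - n) := by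
          rw [mul_inv_rev, sub_eq_neg_add, zpow_add, zpow_neg]
          group
        rw [e1] at this
        have := zpow_mem_linkSub this
        omega
      · simp [hc, hv]
    | hm a b ha hb =>
      intro y
      filter_upwards [ha (b * y), hb y] with n h1 h2
      rw [hmul, ← mul_assoc, h1, h2, add_zero]
    | hi a ha =>
      intro y
      filter_upwards [ha (a⁻¹ * y)] with n h1
      have := hmul a a⁻¹ (y * gen Γ s ^ n)
      rw [mul_inv_cancel, hone, ← mul_assoc, h1] at this
      omega
  by_contra hns
  have hnot : ∀ n : ℤ, g * gen Γ s ^ n ∉ linkSub Γ s := by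
    intro n hn
    have hsm : gen Γ s ∈ starSub Γ s := Subgroup.subset_closure ⟨s, Or.inl rfl, rfl⟩
    have := linkSub_le s hn
    rw [Subgroup.mul_mem_cancel_right _ (Subgroup.zpow_mem _ hsm n)] at this
    exact hns this
  refine no_single_jump (fun n => c g (gen Γ s ^ n)) (by simpa using hfin g 1) fun n => ?_
  have h1 := hmul g (gen Γ s) (gen Γ s ^ n)
  have h2 := hmul (gen Γ s) g (gen Γ s ^ n)
  rw [hg, h2, hs, hs, ← zpow_one_add, add_comm 1 n] at h1
  have e1 : e (g * gen Γ s ^ n) = 0 := if_neg (hnot n)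
  have e2 : e (gen Γ s ^ n) = if n = 0 then 1 else 0 := by
    rcases eq_or_ne n 0 with rfl | hn
    · simp [e]
    · simp only [e, if_neg hn]
      exact if_neg fun h => hn (zpow_mem_linkSub h)
  rw [e1, e2] at h1
  split_ifs at h1 ⊢ <;> omega

open Classical in
/-- The retraction onto the star subgroup, killing all generators outside the star. -/
theorem exists_retract (Γ : SimpleGraph V) (s : V) : ∃ r : RAAG Γ →* RAAG Γ,
    (∀ g, r g ∈ starSub Γ s) ∧ (∀ g ∈ starSub Γ s, r g = g) ∧
    ∀ t, ¬ (t = s ∨ Γ.Adj s t) → r (gen Γ t) = 1 := by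
  obtain ⟨r, hr⟩ := exists_hom (Γ := Γ)
    (fun t => if t = s ∨ Γ.Adj s t then gen Γ t else 1) (by
      intro u v huv
      split_ifs <;> simp [gen_comm huv])
  refine ⟨r, fun g => ?_, fun g hg => ?_, fun t ht => by rw [hr, if_neg ht]⟩
  · induction g using gen_induction with
    | h1 => simp
    | hg v =>
      rw [hr]
      split_ifs with h
      · exact Subgroup.subset_closure ⟨v, h, rfl⟩
      · exact Subgroup.one_mem _
    | hm a b ha hb => rw [map_mul]; exact Subgroup.mul_mem _ ha hb
    | hi a ha => rw [map_inv]; exact Subgroup.inv_mem _ ha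
  · refine MonoidHom.eqOn_closure (f := r) (g := MonoidHom.id _) ?_ hg
    rintro _ ⟨t, ht, rfl⟩
    simp [hr, ht]

/-- Distinct commuting conjugates of generators are simultaneously conjugate to adjacent
generators. -/
theorem exists_common_conj {s t : V} {g h : RAAG Γ}
    (hne : g⁻¹ * gen Γ s * g ≠ h⁻¹ * gen Γ t * h)
    (hcomm : (g⁻¹ * gen Γ s * g) * (h⁻¹ * gen Γ t * h) =
      (h⁻¹ * gen Γ t * h) * (g⁻¹ * gen Γ s * g)) :
    Γ.Adj s t ∧ ∃ x, x⁻¹ * gen Γ s * x = g⁻¹ * gen Γ s * g ∧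
      x⁻¹ * gen Γ t * x = h⁻¹ * gen Γ t * h := by
  obtain ⟨k, rfl⟩ : ∃ k, h = k⁻¹ * g := ⟨g * h⁻¹, by group⟩
  obtain ⟨r, hr1, hr2, hr3⟩ := exists_retract Γ s
  have hkt : (k⁻¹ * g)⁻¹ * gen Γ t * (k⁻¹ * g) = g⁻¹ * (k * gen Γ t * k⁻¹) * g := by group
  rw [hkt] at hne hcomm ⊢
  have hcs : (k * gen Γ t * k⁻¹) * gen Γ s = gen Γ s * (k * gen Γ t * k⁻¹) := by
    have e1 : ∀ a b : RAAG Γ, (g⁻¹ * a * g) * (g⁻¹ * b * g) = g⁻¹ * (a * b) * g := by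
      intro a b; group
    rw [e1, e1] at hcomm
    exact (mul_left_cancel (mul_right_cancel hcomm)).symm
  have hm := commute_of_mem_star (hr1 k)
  have hk : k * gen Γ t * k⁻¹ = r k * r (gen Γ t) * (r k)⁻¹ := by
    rw [← hr2 _ (mem_star_of_commute hcs), map_mul, map_mul, map_inv]
  by_cases hst : t = s ∨ Γ.Adj s t
  · have hrt : r (gen Γ t) = gen Γ t := hr2 _ (Subgroup.subset_closure ⟨t, hst, rfl⟩)
    rw [hrt] at hk
    rcases hst with rfl | hst
    · rw [hk, hm, mul_inv_cancel_right] at hne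
      exact absurd rfl hne
    · refine ⟨hst, (r k)⁻¹ * g, ?_, ?_⟩
      · have : r k * gen Γ s * (r k)⁻¹ = gen Γ s := by rw [hm, mul_inv_cancel_right]
        calc _ = g⁻¹ * (r k * gen Γ s * (r k)⁻¹) * g := by group
          _ = _ := by rw [this]
      · rw [hk]; group
  · rw [hr3 t hst] at hk
    refine absurd ?_ (gen_ne_one (Γ := Γ) t)
    have : k * gen Γ t * k⁻¹ = 1 := by rw [hk]; group
    rwa [conj_eq_one_iff] at this

/-! ### Vertices and edges of the extension graph -/

/-- The vertex `x⁻¹ s x` of the extension graph. -/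
def vert (x : RAAG Γ) (s : V) : ExtVert Γ :=
  ⟨x⁻¹ * gen Γ s * x, s, isConj_iff.2 ⟨x⁻¹, by simp⟩⟩

theorem exists_vert (a : ExtVert Γ) : ∃ x s, a = vert x s := by
  obtain ⟨a, s, h⟩ := a
  obtain ⟨c, hc⟩ := isConj_iff.1 h
  exact ⟨c⁻¹, s, Subtype.ext (by simp [vert, ← hc])⟩

theorem adj_iff {a b : ExtVert Γ} :
    (extGraph Γ).Adj a b ↔ ∃ x s t, Γ.Adj s t ∧ a = vert x s ∧ b = vert x t := by
  constructor
  · intro h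
    obtain ⟨g, s, rfl⟩ := exists_vert a
    obtain ⟨h', t, rfl⟩ := exists_vert b
    rw [extGraph, SimpleGraph.fromRel_adj] at h
    obtain ⟨hne, hc⟩ := h
    have hc' : (vert g s : RAAG Γ) * vert h' t = vert h' t * vert g s := hc.elim id Eq.symm
    obtain ⟨hst, x, h1, h2⟩ := exists_common_conj (fun h => hne (Subtype.ext h)) hc'
    exact ⟨x, s, t, hst, Subtype.ext h1.symm, Subtype.ext h2.symm⟩
  · rintro ⟨x, s, t, hst, rfl, rfl⟩
    rw [extGraph, SimpleGraph.fromRel_adj]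
    refine ⟨fun h => hst.ne (eq_of_conj (congrArg Subtype.val h)), Or.inl ?_⟩
    change (x⁻¹ * gen Γ s * x) * (x⁻¹ * gen Γ t * x) = (x⁻¹ * gen Γ t * x) * (x⁻¹ * gen Γ s * x)
    calc _ = x⁻¹ * (gen Γ s * gen Γ t) * x := by group
      _ = _ := by rw [gen_comm hst]; group

/-! ### Connectedness -/

theorem reachable_vert (hΓ : Γ.Preconnected) (x : RAAG Γ) (s t : V) :
    (extGraph Γ).Reachable (vert x s) (vert x t) := by
  obtain ⟨p⟩ := hΓ s t
  induction p with
  | nil => exact SimpleGraph.Reachable.refl _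
  | cons h _ ih => exact (adj_iff.2 ⟨x, _, _, h, rfl, rfl⟩ : (extGraph Γ).Adj _ _).reachable.trans ih

theorem extGraph_preconnected (hΓ : Γ.Preconnected) : (extGraph Γ).Preconnected := by
  have key : ∀ g x : RAAG Γ, ∀ s t, (extGraph Γ).Reachable (vert x s) (vert (g * x) t) := by
    intro g
    induction g using gen_induction with
    | h1 => intro x s t; simpa using reachable_vert hΓ x s t
    | hg w =>
      intro x s t
      -- The copies of `Γ` for `x` and `w x` share this vertex.
      have : vert x w = vert (gen Γ w * x) w := Subtype.ext (by simp [vert, mul_assoc])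
      exact (reachable_vert hΓ x s w).trans (this ▸ reachable_vert hΓ _ w t)
    | hm a b ha hb =>
      intro x s t
      rw [mul_assoc]
      exact (hb x s s).trans (ha (b * x) s t)
    | hi a ha =>
      intro x s t
      simpa using (ha (a⁻¹ * x) t s).symm
  intro a b
  obtain ⟨x, s, rfl⟩ := exists_vert a
  obtain ⟨y, t, rfl⟩ := exists_vert b
  simpa using key (y * x⁻¹) x s t

/-! ### Acyclicity -/

/-- A function on the generators and the group which is invariant under the star of each generator
descends to the vertices of the extension graph, because star subgroups are the centralizers. -/
theorem exists_descend (φ : V → RAAG Γ → ℤ)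
    (hφ : ∀ s t, (t = s ∨ Γ.Adj s t) → ∀ x, φ s (gen Γ t * x) = φ s x) :
    ∃ f : ExtVert Γ → ℤ, ∀ x s, f (vert x s) = φ s x := by
  choose X S hXS using exists_vert (Γ := Γ)
  refine ⟨fun a => φ (S a) (X a), fun x s => ?_⟩
  have h : x⁻¹ * gen Γ s * x = (X (vert x s))⁻¹ * gen Γ (S (vert x s)) * X (vert x s) :=
    congrArg Subtype.val (hXS (vert x s))
  have hs := eq_of_conj h
  dsimp only
  generalize X (vert x s) = y at *
  rw [← hs] at h ⊢
  obtain ⟨k, rfl⟩ : ∃ k, y = k * x := ⟨y * x⁻¹, by group⟩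
  have hk : k ∈ starSub Γ s := by
    apply mem_star_of_commute
    have e1 : (k * x)⁻¹ * gen Γ s * (k * x) = x⁻¹ * (k⁻¹ * gen Γ s * k) * x := by group
    rw [e1] at h
    have := mul_left_cancel (mul_right_cancel h)
    nth_rewrite 1 [this]
    group
  clear h hs
  unfold starSub at hk
  revert x
  induction hk using Subgroup.closure_induction with
  | mem k hk => obtain ⟨t, ht, rfl⟩ := hk; intro x; exact hφ s t ht x
  | one => simp
  | mul a b _ _ ha hb => intro x; rw [mul_assoc, ha, hb]
  | inv a _ ha => intro x; simpa using (ha (a⁻¹ * x)).symm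

open Classical in
theorem extGraph_isAcyclic (hΓ : Γ.IsAcyclic) : (extGraph Γ).IsAcyclic := by
  rw [SimpleGraph.isAcyclic_iff_forall_adj_isBridge]
  intro a b hab
  obtain ⟨g, u, v, huv, ha, hb⟩ := adj_iff.1 hab
  have hbr := SimpleGraph.isAcyclic_iff_forall_adj_isBridge.1 hΓ huv
  rw [SimpleGraph.isBridge_iff] at hbr ⊢
  let α : V → ℤ := fun t => if (Γ.deleteEdges {s(u, v)}).Reachable u t then 1 else 0
  have hαu : α u = 1 := if_pos (SimpleGraph.Reachable.refl _)
  have hαv : α v = 0 := if_neg hbr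
  have hα : ∀ s t, Γ.Adj s t → α s = α t ∨ (s = u ∧ t = v) ∨ (s = v ∧ t = u) := by
    intro s t hst
    by_cases h : s(s, t) = s(u, v)
    · right; simpa using h
    · left
      have hd : (Γ.deleteEdges {s(u, v)}).Adj s t := by
        rw [SimpleGraph.deleteEdges_adj]; exact ⟨hst, h⟩
      have : (Γ.deleteEdges {s(u, v)}).Reachable u s ↔ (Γ.deleteEdges {s(u, v)}).Reachable u t :=
        ⟨fun h => h.trans hd.reachable, fun h => h.trans hd.symm.reachable⟩
      simp only [α, this]
  let e : RAAG Γ → ℤ := fun x => if vert x u = a ∧ vert x v = b then 1 else 0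
  have hvert : ∀ s t, (t = s ∨ Γ.Adj s t) → ∀ x, vert (gen Γ t * x) s = vert x s := by
    intro s t hst x
    apply Subtype.ext
    have hc : gen Γ t * gen Γ s = gen Γ s * gen Γ t := by
      rcases hst with rfl | h
      · rfl
      · exact (gen_comm h).symm
    change (gen Γ t * x)⁻¹ * gen Γ s * (gen Γ t * x) = x⁻¹ * gen Γ s * x
    calc _ = x⁻¹ * (gen Γ t)⁻¹ * (gen Γ s * gen Γ t) * x := by group
      _ = _ := by rw [← hc]; group
  have heu : ∀ x, e (gen Γ u * x) = e x := fun x => by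
    simp only [e, hvert u u (Or.inl rfl), hvert v u (Or.inr huv.symm)]
  have hev : ∀ x, e (gen Γ v * x) = e x := fun x => by
    simp only [e, hvert u v (Or.inr huv), hvert v v (Or.inl rfl)]
  obtain ⟨c, hc, hmul⟩ := exists_cocycle (Γ := Γ) (fun t x => α t * (e x - e (gen Γ t * x))) (by
    intro s t hst x
    rcases hα s t hst with h | ⟨rfl, rfl⟩ | ⟨rfl, rfl⟩
    · rw [h, ← mul_assoc, gen_comm hst, mul_assoc]; ring
    · simp only [heu, hev]; ring
    · simp only [heu, hev]; ring)
  obtain ⟨f, hf⟩ := exists_descend (Γ := Γ) (fun s x => c x 1 + α s * e x) (by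
    intro s t hst x
    rw [hmul, hc, mul_one]
    rcases hst with rfl | hst
    · ring
    · rcases hα s t hst with h | ⟨rfl, rfl⟩ | ⟨rfl, rfl⟩
      · rw [h]; ring
      · rw [hev]; ring
      · rw [heu]; ring)
  have hconst : ∀ p q, ((extGraph Γ).deleteEdges {s(a, b)}).Adj p q → f p = f q := by
    intro p q hpq
    rw [SimpleGraph.deleteEdges_adj] at hpq
    obtain ⟨hpq, hne⟩ := hpq
    obtain ⟨x, s, t, hst, rfl, rfl⟩ := adj_iff.1 hpq
    rw [hf, hf]
    have he0 : ((s = u ∧ t = v) ∨ (s = v ∧ t = u)) → e x = 0 := by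
      rintro h
      refine if_neg fun hx => hne ?_
      rcases h with ⟨rfl, rfl⟩ | ⟨rfl, rfl⟩
      · simp [hx.1, hx.2]
      · simp [hx.1, hx.2, Sym2.eq_swap]
    rcases hα s t hst with h | h
    · rw [h]
    · rw [he0 h]; ring
  have hfab : f a ≠ f b := by
    have : e g = 1 := if_pos ⟨ha.symm, hb.symm⟩
    rw [ha, hb, hf, hf, this, hαu, hαv]
    omega
  have hnr : ¬ ((extGraph Γ).deleteEdges {s(a, b)}).Reachable a b := by
    rintro ⟨p⟩
    apply hfab
    clear hfab hab ha hb
    have : ∀ {y z} (p : ((extGraph Γ).deleteEdges {s(a, b)}).Walk y z), f y = f z := by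
      intro y z p
      induction p with
      | nil => rfl
      | cons h _ ih => exact (hconst _ _ h).trans ih
    exact this p
  exact hnr

end ExtTree

theorem stmt14 {V : Type} [Fintype V] (Δ : SimpleGraph V) (hΔ : Δ.IsTree)
    (hV : Nontrivial V) : (extGraph Δ).IsTree := by
  obtain ⟨v⟩ := hV.to_nonempty
  have : Nonempty (ExtVert Δ) := ⟨ExtTree.vert 1 v⟩
  exact ⟨⟨ExtTree.extGraph_preconnected hΔ.connected.preconnected⟩,
    ExtTree.extGraph_isAcyclic hΔ.isAcyclic⟩
end

section
/- Let G be a group, K ≤ G a subgroup of finite index, and w_1, w_2 ∈ G commuting elements. Let L(w_i) be the minimal positive integer k with w_i^k ∈ K (i = 1, 2), let l_1 be the minimal positive integer k such that w_1^k w_2^l ∈ K for some integer l, and let l_2 be the minimal positive integer k such that w_2^k w_1^l ∈ K for some integer l. Then l_1 divides L(w_1), l_2 divides L(w_2), and L(w_1)/l_1 = L(w_2)/l_2; in particular this common ratio is a positive integer. -/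
/-!
The exponent pairs `(a, b)` with `w₁ ^ a * w₂ ^ b ∈ K` form a subgroup `Λ` of `ℤ × ℤ`, because `w₁`
and `w₂` commute. The numbers `L₁`, `L₂` generate the intersections of `Λ` with the two axes, and
`l₁`, `l₂` generate its two coordinate projections; an axis intersection lies in the corresponding
projection, so `L₁ = r * l₁` and `L₂ = s * l₂`. Pick `(l₁, l₂ * b)` and `(l₁ * a, l₂)` in `Λ`.
Eliminating one coordinate shows that `r` and `s` both divide `1 - a * b`, while `r` times the first
point and `s` times the second give `s ∣ r * b` and `r ∣ s * a`. As `a` and `b` are units modulo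
`r` and `s`, it follows that `r` and `s` divide each other.
-/

/-- The least positive element of a subgroup of `ℤ` divides every element. -/
lemma dvd_of_isLeast_pos (S : AddSubgroup ℤ) {n : ℕ}
    (hn : IsLeast {j : ℕ | 0 < j ∧ (j : ℤ) ∈ S} n) {a : ℤ} (ha : a ∈ S) : (n : ℤ) ∣ a := by
  obtain ⟨⟨hpos, hmem⟩, hmin⟩ := hn
  have hn0 : (0 : ℤ) < n := by exact_mod_cast hpos
  have hmod : a % n ∈ S := by
    have h := S.sub_mem ha (S.zsmul_mem hmem (a / n))
    have e : a - (a / n) • (n : ℤ) = a % n := by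
      rw [Int.emod_def, smul_eq_mul, mul_comm]
    rwa [e] at h
  by_contra hdvd
  have h0 : 0 ≤ a % n := Int.emod_nonneg _ hn0.ne'
  have h1 : a % n < n := Int.emod_lt_of_pos _ hn0
  have h2 : a % n ≠ 0 := fun h => hdvd (Int.dvd_of_emod_eq_zero h)
  have h3 : n ≤ (a % n).toNat :=
    hmin ⟨by omega, by rwa [Int.toNat_of_nonneg h0]⟩
  omega

/-- The exponent lattice of two commuting elements `x`, `y` relative to a subgroup `K`: the pairs
`(a, b)` with `x ^ a * y ^ b ∈ K`. -/
def exponentLattice {G : Type*} [Group G] (K : Subgroup G) (x y : G) (h : Commute x y) :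
    AddSubgroup (ℤ × ℤ) where
  carrier := {p | x ^ p.1 * y ^ p.2 ∈ K}
  zero_mem' := by simp
  add_mem' := by
    intro p q hp hq
    have e : x ^ (p + q).1 * y ^ (p + q).2 = (x ^ p.1 * y ^ p.2) * (x ^ q.1 * y ^ q.2) := by
      rw [Prod.fst_add, Prod.snd_add, zpow_add, zpow_add, mul_assoc, mul_assoc,
        ← mul_assoc (x ^ q.1), (h.zpow_zpow q.1 p.2).eq, mul_assoc]
    simpa only [Set.mem_setOf_eq, e] using K.mul_mem hp hq
  neg_mem' := by
    intro p hp
    have e : x ^ (-p).1 * y ^ (-p).2 = (x ^ p.1 * y ^ p.2)⁻¹ := by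
      rw [Prod.fst_neg, Prod.snd_neg, mul_inv_rev, zpow_neg, zpow_neg,
        ((h.zpow_zpow p.1 p.2).inv_inv).eq]
    simpa only [Set.mem_setOf_eq, e] using K.inv_mem hp

lemma mem_exponentLattice {G : Type*} [Group G] {K : Subgroup G} {x y : G} {h : Commute x y}
    {a b : ℤ} : (a, b) ∈ exponentLattice K x y h ↔ x ^ a * y ^ b ∈ K := Iff.rfl

theorem stmt16 {G : Type*} [Group G] (K : Subgroup G) (hK : K.FiniteIndex)
    (w₁ w₂ : G) (hcomm : w₁ * w₂ = w₂ * w₁)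
    (L₁ L₂ l₁ l₂ : ℕ)
    (hL₁ : IsLeast {j : ℕ | 0 < j ∧ w₁ ^ j ∈ K} L₁)
    (hL₂ : IsLeast {j : ℕ | 0 < j ∧ w₂ ^ j ∈ K} L₂)
    (hl₁ : IsLeast {j : ℕ | 0 < j ∧ ∃ l : ℤ, w₁ ^ j * w₂ ^ l ∈ K} l₁)
    (hl₂ : IsLeast {j : ℕ | 0 < j ∧ ∃ l : ℤ, w₂ ^ j * w₁ ^ l ∈ K} l₂) :
    l₁ ∣ L₁ ∧ l₂ ∣ L₂ ∧ L₁ * l₂ = L₂ * l₁ ∧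
      ∃ r : ℕ, 0 < r ∧ L₁ = r * l₁ ∧ L₂ = r * l₂ := by
  have hc : Commute w₁ w₂ := hcomm
  set Λ := exponentLattice K w₁ w₂ hc with hΛ
  have axis₁ : ∀ a : ℤ, (a, 0) ∈ Λ → (L₁ : ℤ) ∣ a := fun a ha =>
    dvd_of_isLeast_pos (Λ.comap (AddMonoidHom.inl ℤ ℤ))
      (by simpa [hΛ, mem_exponentLattice] using hL₁) (by simpa using ha)
  have axis₂ : ∀ b : ℤ, (0, b) ∈ Λ → (L₂ : ℤ) ∣ b := fun b hb =>
    dvd_of_isLeast_pos (Λ.comap (AddMonoidHom.inr ℤ ℤ))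
      (by simpa [hΛ, mem_exponentLattice] using hL₂) (by simpa using hb)
  have proj₁ : ∀ a b : ℤ, (a, b) ∈ Λ → (l₁ : ℤ) ∣ a := fun a b h =>
    dvd_of_isLeast_pos (Λ.map (AddMonoidHom.fst ℤ ℤ))
      (by simpa [hΛ, mem_exponentLattice] using hl₁) ⟨(a, b), h, rfl⟩
  have proj₂ : ∀ a b : ℤ, (a, b) ∈ Λ → (l₂ : ℤ) ∣ b := fun a b h =>
    dvd_of_isLeast_pos (Λ.map (AddMonoidHom.snd ℤ ℤ))
      (by
        have e : ∀ (j : ℕ) (l : ℤ), w₂ ^ j * w₁ ^ l = w₁ ^ l * w₂ ^ j := fun j l =>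
          ((hc.symm.pow_left j).zpow_right l).eq
        simpa [hΛ, mem_exponentLattice, e] using hl₂) ⟨(a, b), h, rfl⟩
  have hL₁mem : ((L₁ : ℤ), (0 : ℤ)) ∈ Λ := by simpa [hΛ, mem_exponentLattice] using hL₁.1.2
  have hL₂mem : ((0 : ℤ), (L₂ : ℤ)) ∈ Λ := by simpa [hΛ, mem_exponentLattice] using hL₂.1.2
  obtain ⟨b₀, hb₀⟩ := hl₁.1.2
  obtain ⟨a₀, ha₀⟩ := hl₂.1.2
  have hP : ((l₁ : ℤ), b₀) ∈ Λ := by simpa [hΛ, mem_exponentLattice] using hb₀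
  have hQ : (a₀, (l₂ : ℤ)) ∈ Λ := by
    rw [((hc.symm.pow_left l₂).zpow_right a₀).eq] at ha₀
    simpa [hΛ, mem_exponentLattice] using ha₀
  obtain ⟨b, rfl⟩ := proj₂ _ _ hP
  obtain ⟨a, rfl⟩ := proj₁ _ _ hQ
  have hd₁ : l₁ ∣ L₁ := Int.natCast_dvd_natCast.mp (proj₁ _ _ hL₁mem)
  have hd₂ : l₂ ∣ L₂ := Int.natCast_dvd_natCast.mp (proj₂ _ _ hL₂mem)
  obtain ⟨r, hr⟩ := hd₁
  obtain ⟨s, hs⟩ := hd₂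
  have hl₁0 : (l₁ : ℤ) ≠ 0 := by exact_mod_cast hl₁.1.1.ne'
  have hl₂0 : (l₂ : ℤ) ≠ 0 := by exact_mod_cast hl₂.1.1.ne'
  have red₁ : ∀ c : ℤ, ((l₁ : ℤ) * c, (0 : ℤ)) ∈ Λ → (r : ℤ) ∣ c := fun c h => by
    have := axis₁ _ h
    rw [hr, Nat.cast_mul] at this
    exact (mul_dvd_mul_iff_left hl₁0).mp this
  have red₂ : ∀ c : ℤ, ((0 : ℤ), (l₂ : ℤ) * c) ∈ Λ → (s : ℤ) ∣ c := fun c h => by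
    have := axis₂ _ h
    rw [hs, Nat.cast_mul] at this
    exact (mul_dvd_mul_iff_left hl₂0).mp this
  have s_unit : (s : ℤ) ∣ 1 - a * b := red₂ _ (by
    convert Λ.sub_mem hQ (Λ.zsmul_mem hP a) using 1
    ext <;> simp <;> ring)
  have r_unit : (r : ℤ) ∣ 1 - a * b := red₁ _ (by
    convert Λ.sub_mem hP (Λ.zsmul_mem hQ b) using 1
    ext <;> simp <;> ring)
  have s_dvd : (s : ℤ) ∣ r * b := red₂ _ (by
    convert Λ.sub_mem (Λ.zsmul_mem hP r) hL₁mem using 1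
    ext <;> simp [hr] <;> ring)
  have r_dvd : (r : ℤ) ∣ s * a := red₁ _ (by
    convert Λ.sub_mem (Λ.zsmul_mem hQ s) hL₂mem using 1
    ext <;> simp [hs] <;> ring)
  have hsr : (s : ℤ) ∣ r := by
    have e : (r : ℤ) = (1 - a * b) * r + r * b * a := by ring
    rw [e]
    exact dvd_add (s_unit.mul_right _) (s_dvd.mul_right _)
  have hrs : (r : ℤ) ∣ s := by
    have e : (s : ℤ) = (1 - a * b) * s + s * a * b := by ring
    rw [e]
    exact dvd_add (r_unit.mul_right _) (r_dvd.mul_right _)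
  have hrseq : r = s :=
    Nat.dvd_antisymm (Int.natCast_dvd_natCast.mp hrs) (Int.natCast_dvd_natCast.mp hsr)
  subst hrseq
  refine ⟨⟨r, hr⟩, ⟨r, hs⟩, by rw [hr, hs]; ring, r, ?_, by rw [hr, mul_comm],
    by rw [hs, mul_comm]⟩
  have hL₁pos : 0 < L₁ := hL₁.1.1
  exact Nat.pos_of_ne_zero fun h => by simp [hr, h] at hL₁pos
end
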